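/- arXiv:1210.5546 — 7 statements merged into one kernel-verified Lean document; each statement's English description precedes it below -/
import Mathlib

section
/- Let q ≥ 1 and let λ_q be the symmetric Gamma measure on ℝ with density (1/(2Γ(q)))·q·|x|^{q−1}·exp(−|x|). Then the product measure λ_q^n on ℝ^n supports the S-inequality for all ideals: for every ideal K ⊆ ℝ^n, every strip P = {x : |x_1| ≤ w} with λ_q^n(K) = λ_q^n(P), and every t ≥ 1, one has λ_q^n(tK) ≥ λ_q^n(tP). -/
/-!
The map `x ↦ |x|` preserves ideals and strips and sends the two-sided measure to a multiple of the
one-sided Gamma law `gam q`, so everything reduces to products of `gam q` (`pi_symGam_apply`). Let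
`F` be its distribution function. A strip of half-width `w` has measure `F w`, so the claim is
`F (t w) ≤ μ (t K)` whenever `μ K = F w`.

On the line a bounded ideal is a symmetric interval and there is equality (`one_dim`). For a bounded
ideal `K` of `ℝ × ℝⁿ`, let `ζ x` be the quantile of its section over `x`, so that this section has
measure `F (ζ x)`. The sections of `t K` over `x` are dilates of the sections of `K` over `x / t`,
so by induction `μ (t K) ≥ ∫ F (t ζ (x / t)) dx =: F (t m)`. It remains to see that
`μ K ≤ F m` (`prod_real_le`), and here the sections in the other direction enter: they are
intervals `[-b, b]`, for which the one-dimensional problem is an equality.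

This bound follows by averaging a pointwise inequality (`key_pointwise`) over `x` and the other
coordinates. Write `T` for the map `F x ↦ F (t x)`, whose derivative at `F x` is
`tau x = t ^ q * exp (-(t - 1) x)`. The inequality combines two facts. First, `T` is concave, so
its tangents lie above it at `0` and `1` (`D_nonneg`, `D_one_nonneg`). Second, the density is
log-concave because `q ≥ 1`, so a certain function of one variable has its minimum at `m`
(`Q_nonneg`); the exponential form of `tau`, which turns shifts into factors, is what makes its
derivative have the sign of an integrated form of log-concavity (`slope_nonneg`,
`slope_nonpos`). Unbounded ideals are limits of bounded ones (`ideal_case`).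
-/

open MeasureTheory Real Set Pointwise

noncomputable section

/-- A set `K ⊆ ℝⁿ` is an *ideal* if together with any point `x ∈ K` it contains the
box `[-|x 1|, |x 1|] × ⋯ × [-|x n|, |x n|]`. -/
def IsIdeal {n : ℕ} (K : Set (Fin n → ℝ)) : Prop :=
  ∀ x ∈ K, ∀ y : Fin n → ℝ, (∀ i, |y i| ≤ |x i|) → y ∈ K

/-- A measure `μ` on `ℝⁿ` *supports the S-inequality for all ideals* if for every ideal `K`,
every strip `P = {x : |x 0| ≤ w}` with `μ K = μ P`, and every `t ≥ 1`,
one has `μ (t • K) ≥ μ (t • P)`. -/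
def SupportsSIneq {n : ℕ} [NeZero n] (μ : Measure (Fin n → ℝ)) : Prop :=
  ∀ K : Set (Fin n → ℝ), MeasurableSet K → IsIdeal K →
    ∀ w : ℝ, 0 ≤ w → μ K = μ {x | |x 0| ≤ w} →
      ∀ t : ℝ, 1 ≤ t → μ (t • {x : Fin n → ℝ | |x 0| ≤ w}) ≤ μ (t • K)


namespace SGamma

open ProbabilityTheory Filter Topology

/-- The density of the one-sided Gamma law with shape `q` and rate `1`. -/
abbrev pdf (q : ℝ) : ℝ → ℝ := gammaPDFReal q 1

/-- The one-sided Gamma law with shape `q` and rate `1`. -/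
abbrev gam (q : ℝ) : Measure ℝ := gammaMeasure q 1

/-- The distribution function of the one-sided Gamma law; it vanishes on `(-∞, 0]`. -/
def F (q : ℝ) (x : ℝ) : ℝ := cdf (gam q) x

/-- The density ratio `t · pdf (t x) / pdf x`, i.e. the derivative at `F x` of the map
`F x ↦ F (t x)`, continued to all real `x`. -/
def tau (q t x : ℝ) : ℝ := t ^ q * exp (-((t - 1) * x))

/-! ### The one-dimensional law -/

lemma prob {q : ℝ} (hq : 1 ≤ q) : IsProbabilityMeasure (gam q) :=
  isProbabilityMeasure_gammaMeasure (by linarith) one_pos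

lemma pdf_of_neg {q x : ℝ} (hx : x < 0) : pdf q x = 0 := by
  simp [pdf, gammaPDFReal, not_le.mpr hx]

lemma pdf_of_nonneg {q x : ℝ} (hx : 0 ≤ x) :
    pdf q x = (Gamma q)⁻¹ * (x ^ (q - 1) * exp (-x)) := by
  simp [pdf, gammaPDFReal, hx, mul_assoc]

lemma pdf_nonneg {q : ℝ} (hq : 1 ≤ q) (x : ℝ) : 0 ≤ pdf q x :=
  gammaPDFReal_nonneg (by linarith) one_pos x

lemma pdf_pos {q x : ℝ} (hq : 1 ≤ q) (hx : 0 < x) : 0 < pdf q x :=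
  gammaPDFReal_pos (by linarith) one_pos hx

lemma integrable_pdf {q : ℝ} (hq : 1 ≤ q) : Integrable (pdf q) := by
  refine ⟨(measurable_gammaPDFReal q 1).aestronglyMeasurable, ?_⟩
  rw [hasFiniteIntegral_iff_ofReal (Eventually.of_forall (pdf_nonneg hq))]
  have := lintegral_gammaPDF_eq_one (a := q) (r := 1) (by linarith) one_pos
  simp only [gammaPDF] at this
  rw [this]; simp

lemma F_sub {q : ℝ} (hq : 1 ≤ q) (x y : ℝ) : F q y - F q x = ∫ u in x..y, pdf q u := by
  rw [F, F, cdf_gammaMeasure_eq_integral (by linarith) one_pos,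
    cdf_gammaMeasure_eq_integral (by linarith) one_pos]
  exact intervalIntegral.integral_Iic_sub_Iic (integrable_pdf hq).integrableOn
    (integrable_pdf hq).integrableOn

lemma F_of_nonpos {q x : ℝ} (hq : 1 ≤ q) (hx : x ≤ 0) : F q x = 0 := by
  rw [F, cdf_gammaMeasure_eq_integral (by linarith) one_pos, integral_Iic_eq_integral_Iio]
  exact setIntegral_eq_zero_of_forall_eq_zero fun y hy => pdf_of_neg (lt_of_lt_of_le hy hx)

lemma F_zero {q : ℝ} (hq : 1 ≤ q) : F q 0 = 0 := F_of_nonpos hq le_rfl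

lemma F_mono (q : ℝ) : Monotone (F q) := monotone_cdf _

lemma F_nonneg (q x : ℝ) : 0 ≤ F q x := cdf_nonneg _ _

lemma F_le_one (q x : ℝ) : F q x ≤ 1 := cdf_le_one _ _

lemma F_eq_integral {q : ℝ} (hq : 1 ≤ q) : F q = fun y => ∫ u in (0 : ℝ)..y, pdf q u := by
  ext y
  rw [← F_sub hq, F_zero hq, sub_zero]

lemma F_continuous {q : ℝ} (hq : 1 ≤ q) : Continuous (F q) := by
  rw [F_eq_integral hq]
  exact intervalIntegral.continuous_primitive
    (fun a b => (integrable_pdf hq).intervalIntegrable) 0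

lemma F_strictMonoOn {q : ℝ} (hq : 1 ≤ q) : StrictMonoOn (F q) (Ici 0) := by
  intro x hx y hy hxy
  rw [← sub_pos, F_sub hq]
  refine intervalIntegral.intervalIntegral_pos_of_pos_on
    (integrable_pdf hq).intervalIntegrable (fun u hu => pdf_pos hq ?_) hxy
  exact lt_of_le_of_lt hx hu.1

lemma F_lt_one {q : ℝ} (hq : 1 ≤ q) {x : ℝ} (hx : 0 ≤ x) : F q x < 1 :=
  lt_of_lt_of_le (F_strictMonoOn hq hx (by simp; linarith : (x + 1) ∈ Ici (0:ℝ)) (by linarith))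
    (F_le_one q (x + 1))

lemma F_tendsto (q : ℝ) : Tendsto (F q) atTop (𝓝 1) := tendsto_cdf_atTop _

lemma pdf_continuousAt {q x : ℝ} (hx : x ≠ 0) : ContinuousAt (pdf q) x := by
  rcases lt_or_gt_of_ne hx with h | h
  · have : pdf q =ᶠ[𝓝 x] fun _ => 0 := by
      filter_upwards [Iio_mem_nhds h] with y hy using pdf_of_neg hy
    exact continuousAt_const.congr this.symm
  · have : pdf q =ᶠ[𝓝 x] fun y => (Gamma q)⁻¹ * (y ^ (q - 1) * exp (-y)) := by
      filter_upwards [Ioi_mem_nhds h] with y hy using pdf_of_nonneg (le_of_lt hy)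
    refine ContinuousAt.congr ?_ this.symm
    have := Real.continuousAt_rpow_const x (q - 1) (Or.inl hx)
    fun_prop

lemma F_hasDerivAt {q x : ℝ} (hq : 1 ≤ q) (hx : x ≠ 0) : HasDerivAt (F q) (pdf q x) x := by
  rw [F_eq_integral hq]
  exact intervalIntegral.integral_hasDerivAt_right (integrable_pdf hq).intervalIntegrable
    ((measurable_gammaPDFReal q 1).stronglyMeasurable.stronglyMeasurableAtFilter)
    (pdf_continuousAt hx)

/-- Log-concavity of the density: moving two arguments apart with their sum fixed decreases the
product. -/
lemma pdf_mul_le {q m z v : ℝ} (hq : 1 ≤ q) (hm : 0 ≤ m) (hz : 0 ≤ z) (hv : 0 ≤ v)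
    (h : 0 ≤ (z - m) * (v - m)) : pdf q m * pdf q (z + v - m) ≤ pdf q z * pdf q v := by
  rcases lt_or_ge (z + v - m) 0 with h0 | h0
  · rw [pdf_of_neg h0, mul_zero]
    exact mul_nonneg (pdf_nonneg hq _) (pdf_nonneg hq _)
  · rw [pdf_of_nonneg hm, pdf_of_nonneg hz, pdf_of_nonneg hv, pdf_of_nonneg h0]
    have e : exp (-m) * exp (-(z + v - m)) = exp (-z) * exp (-v) := by
      rw [← exp_add, ← exp_add]; congr 1; ring
    have r : (m * (z + v - m)) ^ (q - 1) ≤ (z * v) ^ (q - 1) :=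
      rpow_le_rpow (mul_nonneg hm h0) (by nlinarith) (by linarith)
    rw [mul_rpow hm h0, mul_rpow hz hv] at r
    calc _ = (Gamma q)⁻¹ ^ 2 * ((m ^ (q - 1) * (z + v - m) ^ (q - 1)) *
          (exp (-m) * exp (-(z + v - m)))) := by ring
      _ ≤ (Gamma q)⁻¹ ^ 2 * ((z ^ (q - 1) * v ^ (q - 1)) * (exp (-z) * exp (-v))) := by
        rw [e]; gcongr
      _ = _ := by ring

lemma le_pdf_mul {q m z v : ℝ} (hq : 1 ≤ q) (hm : 0 ≤ m) (hz : 0 ≤ z) (hv : 0 ≤ v)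
    (h : (z - m) * (v - m) ≤ 0) : pdf q z * pdf q v ≤ pdf q m * pdf q (z + v - m) := by
  have h0 : 0 ≤ z + v - m := by
    rcases le_total z m with h1 | h1
    · rcases h1.eq_or_lt with h2 | h2
      · linarith
      · nlinarith
    · linarith
  have := pdf_mul_le hq hz hm h0 (z := m) (v := z + v - m) (m := z) (by nlinarith)
  rwa [show m + (z + v - m) - z = v by ring] at this

lemma F_shift_sub {q : ℝ} (hq : 1 ≤ q) (m b z : ℝ) :
    F q (z + b - m) - F q z = ∫ u in m..b, pdf q (z + u - m) := by
  have h := intervalIntegral.integral_comp_add_right (a := m) (b := b) (pdf q) (z - m)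
  have e : (fun u => pdf q (z + u - m)) = fun u => pdf q (u + (z - m)) := by
    ext u; congr 1; ring
  rw [e, h, F_sub hq]
  congr 1 <;> ring

lemma integrable_pdf_shift {q : ℝ} (hq : 1 ≤ q) (m z : ℝ) :
    Integrable (fun u => pdf q (z + u - m)) := by
  have e : (fun u => pdf q (z + u - m)) = fun u => pdf q (u + (z - m)) := by
    ext u; congr 1; ring
  rw [e]
  exact (integrable_pdf hq).comp_add_right (z - m)

/-- The integrated form of log-concavity: whatever `b`, the quantity
`(F b - F m) pdf z - pdf m (F (z + b - m) - F z)` is nonnegative for `z ≥ m`; the next lemma says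
that it is nonpositive for `z ≤ m`. -/
lemma slope_nonneg {q m b z : ℝ} (hq : 1 ≤ q) (hm : 0 ≤ m) (hb : 0 ≤ b) (hz : m ≤ z) :
    0 ≤ (F q b - F q m) * pdf q z - pdf q m * (F q (z + b - m) - F q z) := by
  have e := F_shift_sub hq m b z
  have i1 : ∀ a c, IntervalIntegrable (pdf q) volume a c :=
    fun a c => (integrable_pdf hq).intervalIntegrable
  have i2 : ∀ a c, IntervalIntegrable (fun u => pdf q m * pdf q (z + u - m)) volume a c :=
    fun a c => ((integrable_pdf_shift hq m z).const_mul _).intervalIntegrable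
  rw [e, F_sub hq, mul_comm _ (pdf q z), ← intervalIntegral.integral_const_mul,
    ← intervalIntegral.integral_const_mul, sub_nonneg]
  rcases le_total m b with h | h
  · refine intervalIntegral.integral_mono_on h (i2 _ _) ((i1 _ _).const_mul _) fun u hu => ?_
    exact pdf_mul_le hq hm (by linarith) (by linarith [hu.1]) (by nlinarith [hu.1])
  · rw [intervalIntegral.integral_symm b m, intervalIntegral.integral_symm b m]
    refine neg_le_neg ?_
    refine intervalIntegral.integral_mono_on h ((i1 _ _).const_mul _) (i2 _ _) fun u hu => ?_
    exact le_pdf_mul hq hm (by linarith) (by linarith [hu.1]) (by nlinarith [hu.2])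

lemma slope_nonpos {q m b z : ℝ} (hq : 1 ≤ q) (hm : 0 ≤ m) (hb : 0 ≤ b) (h0 : 0 ≤ z)
    (hz : z ≤ m) :
    (F q b - F q m) * pdf q z - pdf q m * (F q (z + b - m) - F q z) ≤ 0 := by
  have e := F_shift_sub hq m b z
  have i1 : ∀ a c, IntervalIntegrable (pdf q) volume a c :=
    fun a c => (integrable_pdf hq).intervalIntegrable
  have i2 : ∀ a c, IntervalIntegrable (fun u => pdf q m * pdf q (z + u - m)) volume a c :=
    fun a c => ((integrable_pdf_shift hq m z).const_mul _).intervalIntegrable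
  rw [e, F_sub hq, mul_comm _ (pdf q z), ← intervalIntegral.integral_const_mul,
    ← intervalIntegral.integral_const_mul, sub_nonpos]
  rcases le_total m b with h | h
  · refine intervalIntegral.integral_mono_on h ((i1 _ _).const_mul _) (i2 _ _) fun u hu => ?_
    exact le_pdf_mul hq hm (by linarith) (by linarith [hu.1]) (by nlinarith [hu.1])
  · rw [intervalIntegral.integral_symm b m, intervalIntegral.integral_symm b m]
    refine neg_le_neg ?_
    refine intervalIntegral.integral_mono_on h (i2 _ _) ((i1 _ _).const_mul _) fun u hu => ?_
    exact pdf_mul_le hq hm (by linarith) (by linarith [hu.1]) (by nlinarith [hu.2])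

/-! ### The pointwise inequality -/

lemma tau_pos {q t : ℝ} (ht : 1 ≤ t) (x : ℝ) : 0 < tau q t x := by
  have : 0 < t := by linarith
  unfold tau; positivity

lemma tau_mul_pdf {q t : ℝ} (ht : 1 ≤ t) (x : ℝ) :
    tau q t x * pdf q x = t * pdf q (t * x) := by
  have t0 : 0 < t := by linarith
  rcases lt_or_ge x 0 with h | h
  · rw [pdf_of_neg h, pdf_of_neg (mul_neg_of_pos_of_neg t0 h)]; simp
  · rw [pdf_of_nonneg h, pdf_of_nonneg (by positivity), mul_rpow t0.le h, tau,
      show -(t * x) = -((t - 1) * x) + -x by ring, exp_add,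
      show t ^ q = t * t ^ (q - 1) by rw [rpow_sub_one t0.ne']; field_simp]
    ring

lemma tau_mul_tau (q t a b c : ℝ) :
    tau q t a * tau q t (b + c - a) = tau q t b * tau q t c := by
  unfold tau
  rw [mul_mul_mul_comm, mul_mul_mul_comm (t ^ q) (exp (-((t - 1) * b))), ← exp_add, ← exp_add]
  congr 2; ring

lemma tau_hasDerivAt (q t x : ℝ) : HasDerivAt (tau q t) (-(t - 1) * tau q t x) x := by
  have : HasDerivAt (fun y : ℝ => -((t - 1) * y)) (-((t - 1) * 1)) x :=
    ((hasDerivAt_id x).const_mul (t - 1)).neg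
  exact (this.exp.const_mul (t ^ q)).congr_deriv (by unfold tau; ring)

lemma tau_continuous (q t : ℝ) : Continuous (tau q t) := by
  unfold tau; fun_prop

lemma Ft_hasDerivAt {q t x : ℝ} (hq : 1 ≤ q) (ht : 1 ≤ t) (hx : x ≠ 0) :
    HasDerivAt (fun y => F q (t * y)) (tau q t x * pdf q x) x := by
  have h := F_hasDerivAt (x := t * x) hq (mul_ne_zero (by linarith) hx)
  have h2 : HasDerivAt (fun y : ℝ => t * y) (t * 1) x := (hasDerivAt_id x).const_mul t
  rw [tau_mul_pdf ht]
  exact (h.comp x h2).congr_deriv (by ring)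

/-- The height at `0` of the tangent at `F z` to the concave map `T : F z ↦ F (t z)`, that is
`T (F z) - T' (F z) F z`. Since `T 0 = 0`, it is the gap at `0` between the tangent and `T`. -/
def D (q t z : ℝ) : ℝ := F q (t * z) - tau q t z * F q z

lemma D_hasDerivAt {q t x : ℝ} (hq : 1 ≤ q) (ht : 1 ≤ t) (hx : x ≠ 0) :
    HasDerivAt (D q t) ((t - 1) * tau q t x * F q x) x := by
  exact ((Ft_hasDerivAt hq ht hx).sub
    ((tau_hasDerivAt q t x).mul (F_hasDerivAt hq hx))).congr_deriv (by ring)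

lemma D_continuous {q t : ℝ} (hq : 1 ≤ q) : Continuous (D q t) := by
  have h1 := F_continuous hq
  have h2 := tau_continuous q t
  unfold D; fun_prop

lemma D_of_nonpos {q t x : ℝ} (hq : 1 ≤ q) (ht : 1 ≤ t) (hx : x ≤ 0) : D q t x = 0 := by
  simp [D, F_of_nonpos hq hx,
    F_of_nonpos hq (mul_nonpos_of_nonneg_of_nonpos (by linarith : (0:ℝ) ≤ t) hx)]

lemma D_nonneg {q t : ℝ} (hq : 1 ≤ q) (ht : 1 ≤ t) (x : ℝ) : 0 ≤ D q t x := by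
  rcases le_total x 0 with h | h
  · rw [D_of_nonpos hq ht h]
  · rw [← D_of_nonpos hq ht (le_refl (0:ℝ))]
    refine (monotoneOn_of_deriv_nonneg (convex_Ici 0) (D_continuous hq).continuousOn ?_ ?_)
      self_mem_Ici h h
    · intro y hy
      rw [interior_Ici] at hy
      exact (D_hasDerivAt hq ht (ne_of_gt hy)).differentiableAt.differentiableWithinAt
    · intro y hy
      rw [interior_Ici] at hy
      rw [(D_hasDerivAt hq ht (ne_of_gt hy)).deriv]
      exact mul_nonneg (mul_nonneg (by linarith) (tau_pos ht y).le) (F_nonneg q y)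

/-- The gap at `1`, where `T 1 = 1`, between the tangent at `F x` and `T`. -/
lemma D_one_nonneg {q t : ℝ} (hq : 1 ≤ q) (ht : 1 ≤ t) (x : ℝ) :
    0 ≤ D q t x + tau q t x - 1 := by
  rcases le_total x 0 with h | h
  · rw [D_of_nonpos hq ht h, tau]
    have h1 : 1 ≤ t ^ q := one_le_rpow ht (by linarith)
    have h2 : 1 ≤ exp (-((t - 1) * x)) := one_le_exp (by nlinarith)
    nlinarith
  rcases ht.eq_or_lt with rfl | ht1
  · simp [D, tau]
  have anti : AntitoneOn (fun x => D q t x + tau q t x - 1) (Ici 0) := by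
    have der : ∀ y, 0 < y → HasDerivAt (fun x => D q t x + tau q t x - 1)
        ((t - 1) * tau q t y * F q y + -(t - 1) * tau q t y) y := fun y hy =>
      ((D_hasDerivAt hq ht hy.ne').add (tau_hasDerivAt q t y)).sub_const 1
    refine antitoneOn_of_deriv_nonpos (convex_Ici 0) ?_ ?_ ?_
    · have := D_continuous (t := t) hq
      have := tau_continuous q t
      fun_prop
    · intro y hy
      rw [interior_Ici] at hy
      exact (der y hy).differentiableAt.differentiableWithinAt
    · intro y hy
      rw [interior_Ici] at hy
      rw [(der y hy).deriv]
      have := tau_pos (q := q) ht y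
      have := F_le_one q y
      have : 0 ≤ (t - 1) * tau q t y * (1 - F q y) :=
        mul_nonneg (mul_nonneg (by linarith) (tau_pos ht y).le) (by linarith)
      linarith
  have tau0 : Tendsto (tau q t) atTop (𝓝 0) := by
    have : Tendsto (fun x : ℝ => (t - 1) * x) atTop atTop :=
      tendsto_id.const_mul_atTop (by linarith)
    have := (tendsto_exp_neg_atTop_nhds_zero.comp this).const_mul (t ^ q)
    rw [mul_zero] at this
    exact this
  have Ft : Tendsto (fun x => F q (t * x)) atTop (𝓝 1) :=
    (F_tendsto q).comp (tendsto_id.const_mul_atTop (by linarith))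
  have lim : Tendsto (fun x => D q t x + tau q t x - 1) atTop (𝓝 0) := by
    have := ((Ft.sub (tau0.mul (F_tendsto q))).add tau0).sub_const 1
    simpa [D] using this
  refine le_of_tendsto lim ?_
  filter_upwards [eventually_ge_atTop x] with y hy
  exact anti h (h.trans hy) hy

/-- As a function of `z` the right-hand side vanishes at `z = m`, and away from `z = m - b` its
derivative is a nonnegative multiple of the expression in `slope_nonneg` and `slope_nonpos`, so `m`
is a minimum. -/
lemma Q_nonneg {q t m b z : ℝ} (hq : 1 ≤ q) (ht : 1 ≤ t) (hm : 0 < m) (hb : 0 ≤ b)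
    (hz : 0 ≤ z) :
    0 ≤ D q t z - D q t m + tau q t m / tau q t b * (D q t b - D q t (z + b - m))
      + (t - 1) * (F q b - F q m) / pdf q m * (F q (t * z) - F q (t * m)) := by
  set G : ℝ → ℝ := fun z =>
    D q t z - D q t m + tau q t m / tau q t b * (D q t b - D q t (z + b - m))
      + (t - 1) * (F q b - F q m) / pdf q m * (F q (t * z) - F q (t * m)) with hG
  have Gm : G m = 0 := by simp [hG]
  have pm := pdf_pos hq hm
  have Gc : Continuous G := by
    have h1 := F_continuous hq
    have h2 := D_continuous (t := t) hq
    simp only [hG]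
    fun_prop
  have der : ∀ x, 0 < x → x + b - m ≠ 0 → HasDerivAt G ((t - 1) * tau q t x / pdf q m *
      ((F q b - F q m) * pdf q x - pdf q m * (F q (x + b - m) - F q x))) x := by
    intro x hx hx2
    have sh : HasDerivAt (fun y : ℝ => y + b - m) 1 x :=
      ((hasDerivAt_id x).add_const b).sub_const m
    have h1 := (D_hasDerivAt hq ht hx.ne').sub_const (D q t m)
    have h2 := (((D_hasDerivAt hq ht hx2).comp x sh).const_sub (D q t b)).const_mul
      (tau q t m / tau q t b)
    have h3 := ((Ft_hasDerivAt hq ht hx.ne').sub_const (F q (t * m))).const_mul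
      ((t - 1) * (F q b - F q m) / pdf q m)
    refine ((h1.add h2).add h3).congr_deriv ?_
    have e := tau_mul_tau q t m x b
    have tb := tau_pos (q := q) ht b
    have e' : tau q t m / tau q t b * tau q t (x + b - m) = tau q t x := by
      rw [div_mul_eq_mul_div, e]; field_simp
    have : tau q t m / tau q t b * -((t - 1) * tau q t (x + b - m) * F q (x + b - m) * 1)
        = -((t - 1) * tau q t x * F q (x + b - m)) := by rw [← e']; ring
    rw [this]
    field_simp
    ring
  change 0 ≤ G z
  have dec : ∀ a c, 0 ≤ a → a ≤ c → c ≤ m → (∀ x ∈ Ioo a c, x + b - m ≠ 0) → G c ≤ G a := by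
    intro a c ha hac hc hne
    refine (antitoneOn_of_deriv_nonpos (convex_Icc a c) Gc.continuousOn ?_ ?_)
      (left_mem_Icc.2 hac) (right_mem_Icc.2 hac) hac
    · intro x hx
      rw [interior_Icc] at hx
      exact (der x (lt_of_le_of_lt ha hx.1) (hne x hx)).differentiableAt.differentiableWithinAt
    · intro x hx
      rw [interior_Icc] at hx
      rw [(der x (lt_of_le_of_lt ha hx.1) (hne x hx)).deriv]
      exact mul_nonpos_of_nonneg_of_nonpos
        (div_nonneg (mul_nonneg (by linarith) (tau_pos ht x).le) pm.le)
        (slope_nonpos hq hm.le hb (by linarith [hx.1]) (by linarith [hx.2]))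
  rcases le_total m z with h | h
  · rw [← Gm]
    refine (monotoneOn_of_deriv_nonneg (convex_Icc m z) Gc.continuousOn ?_ ?_)
      (left_mem_Icc.2 h) (right_mem_Icc.2 h) h
    · intro x hx
      rw [interior_Icc] at hx
      exact (der x (by linarith [hx.1])
        (by linarith [hx.1] : 0 < x + b - m).ne').differentiableAt.differentiableWithinAt
    · intro x hx
      rw [interior_Icc] at hx
      rw [(der x (by linarith [hx.1]) (by linarith [hx.1] : 0 < x + b - m).ne').deriv]
      exact mul_nonneg
        (div_nonneg (mul_nonneg (by linarith) (tau_pos ht x).le) pm.le)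
        (slope_nonneg hq hm.le hb hx.1.le)
  · -- `G` need not be differentiable at the point `m - b`, where `z + b - m` vanishes.
    rcases le_total (m - b) z with h1 | h1
    · rw [← Gm]
      exact dec z m hz h le_rfl fun x hx => by
        have : 0 < x + b - m := by linarith [hx.1]
        exact this.ne'
    · have a1 := dec z (m - b) hz h1 (by linarith) fun x hx => by
        have : x + b - m < 0 := by linarith [hx.2]
        exact this.ne
      have a2 := dec (m - b) m (by linarith) (by linarith) le_rfl fun x hx => by
        have : 0 < x + b - m := by linarith [hx.1]
        exact this.ne'
      linarith

/-- The pointwise inequality behind the step in the dimension. In the application `z` is a quantile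
of an `x`-section, `b` a quantile of a `y`-section and `y` the indicator of the dilated set, so
that after integration the first, third and fourth terms vanish and only the second one survives.
It follows from `Q_nonneg` by adding the tangent gap at `z + b - m`, evaluated at `y`. -/
lemma key_pointwise {q t m b z y : ℝ} (hq : 1 ≤ q) (ht : 1 ≤ t) (hm : 0 < m) (hb : 0 ≤ b)
    (hz : 0 ≤ z) (hy : y = 0 ∨ y = 1) :
    0 ≤ tau q t z * (y - F q z) + tau q t m * (F q m - F q b)
      + tau q t m / tau q t b * (F q (t * b) - y)
      + ((t - 1) * (F q b - F q m) / pdf q m + 1) * (F q (t * z) - F q (t * m)) := by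
  have h := Q_nonneg hq ht hm hb hz
  have tb := tau_pos (q := q) ht b
  have tm := tau_pos (q := q) ht m
  have r : 0 < tau q t m / tau q t b := by positivity
  have e' : tau q t m / tau q t b * tau q t (z + b - m) = tau q t z := by
    rw [div_mul_eq_mul_div, tau_mul_tau]; field_simp
  have d1 := mul_nonneg r.le (D_nonneg hq ht (z + b - m))
  have d2 := mul_nonneg r.le (D_one_nonneg hq ht (z + b - m))
  have e2 : tau q t m / tau q t b * D q t b =
      tau q t m / tau q t b * F q (t * b) - tau q t m * F q b := by
    simp only [D]; field_simp
  have e3 : D q t z = F q (t * z) - tau q t z * F q z := rfl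
  have e4 : D q t m = F q (t * m) - tau q t m * F q m := rfl
  rcases hy with rfl | rfl
  · linarith
  · linarith

/-! ### The averaging step -/

/-- Strict monotonicity of `F` on `[0, ∞)` makes the quantile of the `x`-section measurable. -/
lemma measurable_quantile {Ω : Type*} [MeasurableSpace Ω] (ρ : Measure Ω) [IsProbabilityMeasure ρ]
    {q : ℝ} (hq : 1 ≤ q) {A : Set (ℝ × Ω)} (hA : MeasurableSet A)
    (ζ : ℝ → ℝ) (hζ0 : ∀ x, 0 ≤ ζ x) (hζ : ∀ x, ρ.real {y | (x, y) ∈ A} = F q (ζ x)) :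
    Measurable ζ := by
  refine measurable_of_Iic fun a => ?_
  rcases lt_or_ge a 0 with ha | ha
  · convert MeasurableSet.empty
    ext x
    simp only [mem_preimage, mem_Iic, mem_empty_iff_false, iff_false, not_le]
    exact ha.trans_le (hζ0 x)
  · have : ζ ⁻¹' Iic a = (fun x => ρ (Prod.mk x ⁻¹' A)) ⁻¹' Iic (ENNReal.ofReal (F q a)) := by
      ext x
      simp only [mem_preimage, mem_Iic]
      rw [← (F_strictMonoOn hq).le_iff_le (hζ0 x) ha, ← hζ x, measureReal_def,
        ← ENNReal.le_ofReal_iff_toReal_le (measure_ne_top _ _) (F_nonneg _ _)]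
      rfl
    rw [this]
    exact (measurable_measure_prodMk_left hA) measurableSet_Iic

/-- Averaging the pointwise inequality over a set `A` in a product: if the quantiles `ζ x` of the
`x`-sections of `A` satisfy `∫ F (t ζ (x / t)) = F (t m)`, then `A` has measure at most `F m`. The
`y`-sections enter only through the equality case of the one-dimensional problem. -/
lemma prod_real_le {Ω : Type*} [MeasurableSpace Ω] (ρ : Measure Ω) [IsProbabilityMeasure ρ]
    {q t m : ℝ} (hq : 1 ≤ q) (ht : 1 ≤ t) (hm : 0 < m) {A : Set (ℝ × Ω)} (hA : MeasurableSet A)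
    (ζ : ℝ → ℝ) (hζ0 : ∀ x, 0 ≤ ζ x) (hζ : ∀ x, ρ.real {y | (x, y) ∈ A} = F q (ζ x))
    (hsec : ∀ y, ∃ b, 0 ≤ b ∧ (gam q).real {x | (x, y) ∈ A} = F q b ∧
      (gam q).real {x | (x / t, y) ∈ A} = F q (t * b))
    (hmz : ∫ x, F q (t * ζ (x / t)) ∂gam q = F q (t * m)) :
    ((gam q).prod ρ).real A ≤ F q m := by
  have := prob hq
  have t0 : 0 < t := by linarith
  have mζ : Measurable ζ := measurable_quantile ρ hq hA ζ hζ0 hζ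
  have mF : Measurable (F q) := (F_mono q).measurable
  have mτ : Measurable (tau q t) := (tau_continuous q t).measurable
  have mzt : Measurable fun x => ζ (x / t) := mζ.comp (measurable_id.div_const t)
  set B : Set (ℝ × Ω) := {p | (p.1 / t, p.2) ∈ A} with hB
  have mB : MeasurableSet B :=
    ((measurable_fst.div_const t).prodMk measurable_snd) hA
  set Y : ℝ → Ω → ℝ := fun x y => B.indicator 1 (x, y) with hY
  have Y01 : ∀ x y, Y x y = 0 ∨ Y x y = 1 := by
    intro x y
    by_cases h : (x, y) ∈ B
    · right; simp [hY, h]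
    · left; simp [hY, h]
  have mY : Measurable (Function.uncurry Y) := measurable_one.indicator mB
  have bτ : ∀ x, |tau q t (ζ x)| ≤ t ^ q := by
    intro x
    rw [abs_of_pos (tau_pos ht _), tau]
    have : exp (-((t - 1) * ζ x)) ≤ 1 := by
      rw [exp_le_one_iff]; nlinarith [hζ0 x]
    have h2 : 0 < t ^ q := by positivity
    nlinarith
  have intY : ∀ y, Integrable (fun x => Y x y) (gam q) := fun y =>
    Integrable.of_bound (mY.comp measurable_prodMk_right).aestronglyMeasurable 1
      (Eventually.of_forall fun x => by rcases Y01 x y with h | h <;> simp [h])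
  have intF : Integrable (fun x => F q (t * ζ (x / t))) (gam q) :=
    Integrable.of_bound (mF.comp (mzt.const_mul t)).aestronglyMeasurable 1
      (Eventually.of_forall fun x => by
      rw [Real.norm_eq_abs, abs_of_nonneg (F_nonneg _ _)]; exact F_le_one _ _)
  set W : ℝ → Ω → ℝ := fun x y => tau q t (ζ (x / t)) * (Y x y - F q (ζ (x / t))) with hW
  have mW : Measurable (Function.uncurry W) := by
    have h1 : Measurable fun p : ℝ × Ω => ζ (p.1 / t) := mzt.comp measurable_fst
    exact (mτ.comp h1).mul (mY.sub (mF.comp h1))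
  have bW : ∀ x y, ‖W x y‖ ≤ t ^ q := by
    intro x y
    rw [Real.norm_eq_abs, hW, abs_mul]
    have h1 : |Y x y - F q (ζ (x / t))| ≤ 1 := by
      have := F_nonneg q (ζ (x / t))
      have := F_le_one q (ζ (x / t))
      rw [abs_le]
      rcases Y01 x y with h | h <;> rw [h] <;> constructor <;> linarith
    have := bτ (x / t)
    have := abs_nonneg (tau q t (ζ (x / t)))
    have := abs_nonneg (Y x y - F q (ζ (x / t)))
    nlinarith
  have intW : Integrable (Function.uncurry W) ((gam q).prod ρ) :=
    Integrable.of_bound mW.aestronglyMeasurable (t ^ q) (Eventually.of_forall fun p => bW p.1 p.2)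
  have intW1 : ∀ y, Integrable (fun x => W x y) (gam q) := fun y =>
    Integrable.of_bound (mW.comp measurable_prodMk_right).aestronglyMeasurable (t ^ q)
      (Eventually.of_forall fun x => bW x y)
  have J : ∀ y, 0 ≤ (∫ x, W x y ∂gam q) + tau q t m * (F q m - (gam q).real {x | (x, y) ∈ A}) := by
    intro y
    obtain ⟨b, hb, hb1, hb2⟩ := hsec y
    have eY : ∫ x, Y x y ∂gam q = F q (t * b) := by
      rw [← hb2]
      have : (fun x => Y x y) = {x | (x / t, y) ∈ A}.indicator 1 := by
        ext x; rfl
      rw [this, integral_indicator_one]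
      exact (measurable_prodMk_right mB : _)
    have pos := integral_nonneg (μ := gam q) (f := fun x =>
      W x y + tau q t m * (F q m - F q b) + tau q t m / tau q t b * (F q (t * b) - Y x y)
      + ((t - 1) * (F q b - F q m) / pdf q m + 1) * (F q (t * ζ (x / t)) - F q (t * m)))
      (fun x => key_pointwise hq ht hm hb (hζ0 (x / t)) (Y01 x y))
    have i1 : Integrable (fun x => tau q t m / tau q t b * (F q (t * b) - Y x y)) (gam q) :=
      ((integrable_const _).sub (intY y)).const_mul _
    have i2 : Integrable (fun x => ((t - 1) * (F q b - F q m) / pdf q m + 1) *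
        (F q (t * ζ (x / t)) - F q (t * m))) (gam q) :=
      (intF.sub (integrable_const _)).const_mul _
    have i0 : Integrable (fun x => W x y + tau q t m * (F q m - F q b)) (gam q) :=
      (intW1 y).add (integrable_const _)
    have i01 : Integrable (fun x => W x y + tau q t m * (F q m - F q b) +
        tau q t m / tau q t b * (F q (t * b) - Y x y)) (gam q) := i0.add i1
    rw [integral_add i01 i2, integral_add i0 i1, integral_add (intW1 y)
      (integrable_const _), integral_const_mul, integral_const_mul, integral_const_mul,
      integral_sub (integrable_const _) (intY y), integral_sub intF (integrable_const _), eY,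
      hmz] at pos
    simp only [integral_const, probReal_univ, smul_eq_mul, one_mul, sub_self, mul_zero,
      add_zero] at pos
    rwa [hb1]
  have iA : Integrable (fun y => (gam q).real {x | (x, y) ∈ A}) ρ := by
    refine Integrable.of_bound ?_ 1 (Eventually.of_forall fun y => ?_)
    · exact (measurable_measure_prodMk_right hA).ennreal_toReal.aestronglyMeasurable
    · rw [Real.norm_eq_abs, abs_of_nonneg measureReal_nonneg]
      exact measureReal_le_one
  have eA : ∫ y, (gam q).real {x | (x, y) ∈ A} ∂ρ = ((gam q).prod ρ).real A := by
    rw [measureReal_def, Measure.prod_apply_symm hA, ← integral_toReal]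
    · rfl
    · exact (measurable_measure_prodMk_right hA).aemeasurable
    · exact Eventually.of_forall fun y => measure_lt_top _ _
  have eW : ∫ y, ∫ x, W x y ∂gam q ∂ρ = 0 := by
    rw [← integral_integral_swap intW]
    refine integral_eq_zero_of_ae (Eventually.of_forall fun x => ?_)
    have : ∫ y, Y x y ∂ρ = F q (ζ (x / t)) := by
      rw [← hζ]
      have : (fun y => Y x y) = {y | (x / t, y) ∈ A}.indicator 1 := by
        ext y; rfl
      rw [this, integral_indicator_one]
      exact (measurable_prodMk_left hA : _)
    have iY : Integrable (fun y => Y x y) ρ :=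
      Integrable.of_bound (mY.comp measurable_prodMk_left).aestronglyMeasurable 1
        (Eventually.of_forall fun y => by rcases Y01 x y with h | h <;> simp [h])
    simp only [hW, Pi.zero_apply]
    rw [integral_const_mul, integral_sub iY (integrable_const _), this]
    simp
  have fin := integral_nonneg (μ := ρ) (f := fun y =>
    (∫ x, W x y ∂gam q) + tau q t m * (F q m - (gam q).real {x | (x, y) ∈ A})) J
  have j1 : Integrable (fun y => ∫ x, W x y ∂gam q) ρ := intW.integral_prod_right
  have j2 : Integrable (fun y => tau q t m * (F q m - (gam q).real {x | (x, y) ∈ A})) ρ :=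
    ((integrable_const _).sub iA).const_mul _
  rw [integral_add j1 j2,
    integral_const_mul, integral_sub (integrable_const _) iA, eW, eA] at fin
  simp only [integral_const, probReal_univ, smul_eq_mul, one_mul, zero_add] at fin
  have := (mul_nonneg_iff_of_pos_left (tau_pos (q := q) ht m)).1 fin
  linarith

/-! ### Induction on the dimension -/

lemma gam_real_eq {q c : ℝ} (hq : 1 ≤ q) {S : Set ℝ} (h1 : Ioo 0 c ⊆ S)
    (h2 : ∀ x ∈ S, 0 < x → x ≤ c) : (gam q).real S = F q c := by
  have := prob hq
  rw [F, cdf_eq_real, measureReal_def, measureReal_def]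
  congr 1
  have z0 : gam q (Iic 0) = 0 := by
    have := F_zero hq
    rw [F, cdf_eq_real, measureReal_eq_zero_iff] at this
    exact this
  have zc : gam q {c} = 0 := withDensity_absolutelyContinuous _ _ (by simp)
  refine measure_congr ?_
  have a1 : ∀ᵐ x ∂gam q, x ∉ Iic (0:ℝ) := measure_eq_zero_iff_ae_notMem.1 z0
  have a2 : ∀ᵐ x ∂gam q, x ∉ ({c} : Set ℝ) := measure_eq_zero_iff_ae_notMem.1 zc
  filter_upwards [a1, a2] with x hx hc
  have hx' : 0 < x := by simpa using hx
  refine propext ⟨fun h => h2 x h hx', fun h => h1 ⟨hx', lt_of_le_of_ne h (by simpa using hc)⟩⟩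

/-- On the line the inequality is an equality: a bounded ideal is a symmetric interval. -/
lemma one_dim {q t R : ℝ} (hq : 1 ≤ q) (ht : 1 ≤ t) {S : Set ℝ}
    (hS : ∀ x ∈ S, ∀ y : ℝ, |y| ≤ |x| → y ∈ S) (hR : ∀ x ∈ S, |x| ≤ R) :
    ∃ b, 0 ≤ b ∧ (gam q).real S = F q b ∧ (gam q).real {x | x / t ∈ S} = F q (t * b) := by
  have t0 : 0 < t := by linarith
  have bdd : BddAbove S := ⟨R, fun x hx => (le_abs_self x).trans (hR x hx)⟩
  have low : ∀ x, 0 < x → x < sSup S → x ∈ S := by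
    intro x hx hxs
    have ne : S.Nonempty := by
      by_contra h
      rw [not_nonempty_iff_eq_empty] at h
      rw [h, Real.sSup_empty] at hxs
      linarith
    obtain ⟨s, hs, hxs'⟩ := exists_lt_of_lt_csSup ne hxs
    exact hS s hs x (by rw [abs_of_pos hx]; exact hxs'.le.trans (le_abs_self s))
  refine ⟨sSup S, ?_, ?_, ?_⟩
  · rcases S.eq_empty_or_nonempty with h | ⟨x, hx⟩
    · simp [h]
    · exact le_csSup bdd (hS x hx 0 (by simp))
  · exact gam_real_eq hq (fun x hx => low x hx.1 hx.2) fun x hx _ => le_csSup bdd hx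
  · refine gam_real_eq hq (fun x hx => ?_) fun x hx _ => ?_
    · exact low _ (div_pos hx.1 t0) (by rw [div_lt_iff₀ t0]; linarith [hx.2])
    · have := le_csSup bdd hx
      rw [div_le_iff₀ t0] at this
      linarith

/-- The `n`-fold product of the one-sided Gamma law. -/
abbrev gamPi (q : ℝ) (n : ℕ) : Measure (Fin n → ℝ) := Measure.pi fun _ => gam q

/-- A set inside the strip `|x 0| ≤ R` has at most the measure of that strip. -/
lemma gamPi_le {q R : ℝ} (hq : 1 ≤ q) {n : ℕ} {K : Set (Fin (n + 1) → ℝ)}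
    (hR : ∀ x ∈ K, ∀ i, |x i| ≤ R) : (gamPi q (n + 1)).real K ≤ F q R := by
  have := prob hq
  have mp := measurePreserving_eval (fun _ : Fin (n + 1) => gam q) 0
  have : K ⊆ Function.eval 0 ⁻¹' Iic R := fun x hx => (le_abs_self _).trans (hR x hx 0)
  refine (measureReal_mono this).trans ?_
  rw [measureReal_def, mp.measure_preimage measurableSet_Iic.nullMeasurableSet, F, cdf_eq_real,
    measureReal_def]

lemma exists_F_eq {q R s : ℝ} (hq : 1 ≤ q) (hR : 0 ≤ R) (h0 : 0 ≤ s) (h1 : s ≤ F q R) :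
    ∃ z, 0 ≤ z ∧ z ≤ R ∧ s = F q z := by
  obtain ⟨z, hz, e⟩ := intermediate_value_Icc hR (F_continuous hq).continuousOn
    (show s ∈ Icc (F q 0) (F q R) from ⟨by rwa [F_zero hq], h1⟩)
  exact ⟨z, hz.1, hz.2, e.symm⟩

/-- The inequality for bounded ideals, by induction on the dimension. -/
lemma bounded_case {q t : ℝ} (hq : 1 ≤ q) (ht : 1 ≤ t) (n : ℕ) :
    ∀ K : Set (Fin (n + 1) → ℝ), MeasurableSet K → IsIdeal K →
      ∀ R, 0 ≤ R → (∀ x ∈ K, ∀ i, |x i| ≤ R) → ∀ w, 0 ≤ w → (gamPi q (n + 1)).real K = F q w →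
        F q (t * w) ≤ (gamPi q (n + 1)).real {x | (fun i => x i / t) ∈ K} := by
  have := prob hq
  have t0 : 0 < t := by linarith
  have divle : ∀ x : ℝ, |x / t| ≤ |x| := fun x => by
    rw [abs_div, abs_of_pos t0]; exact div_le_self (abs_nonneg x) ht
  induction n with
  | zero =>
    intro K mK hK R hR0 hR w hw hKw
    have mp := measurePreserving_funUnique (gam q) (Fin 1)
    set e := MeasurableEquiv.funUnique (Fin 1) ℝ with he
    have tr : ∀ L : Set (Fin 1 → ℝ),
        (gamPi q (0 + 1)).real L = (gam q).real {x | (fun _ => x) ∈ L} := by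
      intro L
      rw [measureReal_def, measureReal_def, ← mp.measure_preimage_equiv]
      congr 2
      ext x
      have : (fun _ => x 0) = x := by ext i; rw [Subsingleton.elim i 0]
      change x ∈ L ↔ (fun _ => x 0) ∈ L
      rw [this]
    obtain ⟨b, hb, h1, h2⟩ := one_dim (R := R) hq ht (S := {x | (fun _ => x) ∈ K})
      (fun x hx y hy => hK _ hx _ fun _ => hy) (fun x hx => hR _ hx 0)
    rw [tr] at hKw ⊢
    rw [h1] at hKw
    rw [← (F_strictMonoOn hq).injOn hb hw hKw, ← h2]
    rfl
  | succ n ih =>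
    intro K mK hK R hR0 hR w hw hKw
    set ρ := gamPi q (n + 1) with hρ
    have mp : MeasurePreserving (MeasurableEquiv.piFinSuccAbove (fun _ : Fin (n + 1 + 1) => ℝ) 0)
        (gamPi q (n + 1 + 1)) ((gam q).prod ρ) :=
      measurePreserving_piFinSuccAbove (fun _ => gam q) 0
    set e := MeasurableEquiv.piFinSuccAbove (fun _ : Fin (n + 1 + 1) => ℝ) 0 with he
    have esymm : ∀ p, e.symm p = Fin.cons p.1 p.2 := by
      intro p
      simp [he, MeasurableEquiv.piFinSuccAbove_symm_apply, Fin.insertNthEquiv]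
    have tr : ∀ L : Set (Fin (n + 1 + 1) → ℝ),
        (gamPi q (n + 1 + 1)).real L = ((gam q).prod ρ).real (e.symm ⁻¹' L) := by
      intro L
      rw [measureReal_def, measureReal_def, ← mp.measure_preimage_equiv]
      congr 2
      ext x
      simp
    set A : Set (ℝ × (Fin (n + 1) → ℝ)) := e.symm ⁻¹' K with hAdef
    have mA : MeasurableSet A := e.symm.measurable mK
    have memA : ∀ x y, (x, y) ∈ A ↔ Fin.cons x y ∈ K := fun x y => by
      rw [hAdef, mem_preimage, esymm]
    have msec : ∀ x, MeasurableSet {y | (x, y) ∈ A} := fun x => measurable_prodMk_left mA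
    have isec : ∀ x, IsIdeal {y | (x, y) ∈ A} := by
      intro x y hy y' hyy
      rw [mem_ofPred_eq, memA] at hy ⊢
      refine hK _ hy _ fun i => ?_
      refine Fin.cases ?_ (fun j => ?_) i
      · simp
      · simpa using hyy j
    have bsec : ∀ x, ∀ y ∈ {y | (x, y) ∈ A}, ∀ i, |y i| ≤ R := by
      intro x y hy i
      rw [mem_ofPred_eq, memA] at hy
      simpa using hR _ hy i.succ
    choose ζ hζ0 hζR hζ using fun x =>
      exists_F_eq hq hR0 measureReal_nonneg (gamPi_le hq (bsec x))
    have hsec : ∀ y, ∃ b, 0 ≤ b ∧ (gam q).real {x | (x, y) ∈ A} = F q b ∧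
        (gam q).real {x | (x / t, y) ∈ A} = F q (t * b) := by
      intro y
      refine one_dim (R := R) hq ht (S := {x | (x, y) ∈ A}) (fun x hx x' hx' => ?_)
        (fun x hx => ?_)
      · rw [mem_ofPred_eq, memA] at hx ⊢
        refine hK _ hx _ fun i => ?_
        refine Fin.cases ?_ (fun j => ?_) i
        · simpa using hx'
        · simp
      · rw [mem_ofPred_eq, memA] at hx
        simpa using hR _ hx 0
    have eA : ((gam q).prod ρ).real A = ∫ x, F q (ζ x) ∂gam q := by
      rw [measureReal_def, Measure.prod_apply mA, ← integral_toReal]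
      · exact integral_congr_ae (Eventually.of_forall fun x => hζ x)
      · exact (measurable_measure_prodMk_left mA).aemeasurable
      · exact Eventually.of_forall fun y => measure_lt_top _ _
    have mζ : Measurable ζ := measurable_quantile ρ hq mA ζ hζ0 hζ
    have mF : Measurable (F q) := (F_mono q).measurable
    have intF : ∀ g : ℝ → ℝ, Measurable g → Integrable (fun x => F q (g x)) (gam q) :=
      fun g hg => Integrable.of_bound (mF.comp hg).aestronglyMeasurable 1
        (Eventually.of_forall fun x => by
        rw [Real.norm_eq_abs, abs_of_nonneg (F_nonneg _ _)]; exact F_le_one _ _)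
    have i1 : Integrable (fun x => F q (t * ζ (x / t))) (gam q) := intF _ (by fun_prop)
    -- `m` is the quantile that the sections of the dilated set guarantee.
    obtain ⟨m, hm0, hm⟩ : ∃ m, 0 ≤ m ∧ ∫ x, F q (t * ζ (x / t)) ∂gam q = F q (t * m) := by
      obtain ⟨z, hz, -, e⟩ := exists_F_eq (R := t * R) hq (by positivity)
        (integral_nonneg (μ := gam q) (f := fun x => F q (t * ζ (x / t))) fun x => F_nonneg q _)
        (by
          have := integral_mono i1 (integrable_const (F q (t * R)))
            (fun x => F_mono q (mul_le_mul_of_nonneg_left (hζR (x / t)) t0.le))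
          simpa using this)
      exact ⟨z / t, by positivity, by rw [e]; congr 1; field_simp⟩
    have le1 : F q w ≤ F q m := by
      rw [← hKw, tr]
      rcases hm0.eq_or_lt with h | h
      · -- Here a section has measure at most `F (t * ζ (x / t))`, whose integral is `0`.
        rw [← h, mul_zero] at hm
        change ((gam q).prod ρ).real A ≤ _
        rw [eA, ← h, ← hm]
        refine integral_mono (intF _ mζ) i1 fun x => ?_
        have s1 : F q (ζ x) ≤ F q (ζ (x / t)) := by
          rw [← hζ, ← hζ]
          refine measureReal_mono fun y hy => ?_
          rw [mem_ofPred_eq, memA] at hy ⊢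
          refine hK _ hy _ fun i => ?_
          refine Fin.cases ?_ (fun j => ?_) i
          · simpa using divle x
          · simp
        exact s1.trans (F_mono q (le_mul_of_one_le_left (hζ0 _) ht))
      · exact prod_real_le ρ hq ht h mA ζ hζ0 hζ hsec hm
    have le2 : F q (t * m) ≤ (gamPi q (n + 1 + 1)).real {x | (fun i => x i / t) ∈ K} := by
      have mS : Measurable fun x : Fin (n + 1 + 1) → ℝ => fun i => x i / t := by fun_prop
      set B := e.symm ⁻¹' {x | (fun i => x i / t) ∈ K} with hB
      have mB : MeasurableSet B := e.symm.measurable (mS mK)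
      have memB : ∀ x y, (x, y) ∈ B ↔ (x / t, fun i => y i / t) ∈ A := by
        intro x y
        rw [memA, hB, mem_preimage, esymm, mem_ofPred_eq]
        have : (fun i => (Fin.cons x y : Fin (n + 1 + 1) → ℝ) i / t) =
            Fin.cons (x / t) (fun i => y i / t) := by
          ext i
          refine Fin.cases ?_ (fun j => ?_) i <;> simp
        rw [this]
      rw [← hm, tr, measureReal_def, Measure.prod_apply mB, ← integral_toReal]
      rotate_left
      · exact (measurable_measure_prodMk_left mB).aemeasurable
      · exact Eventually.of_forall fun y => measure_lt_top _ _
      refine integral_mono i1 ?_ fun x => ?_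
      · refine Integrable.of_bound
          (measurable_measure_prodMk_left mB).ennreal_toReal.aestronglyMeasurable 1
          (Eventually.of_forall fun x => ?_)
        rw [Real.norm_eq_abs, abs_of_nonneg ENNReal.toReal_nonneg]
        exact measureReal_le_one
      · refine (ih _ (msec (x / t)) (isec (x / t)) R hR0 (bsec (x / t)) _ (hζ0 _)
          (hζ _)).trans (le_of_eq ?_)
        rw [measureReal_def]
        congr 2
        ext y
        exact (memB x y).symm
    have wm : w ≤ m := (F_strictMonoOn hq).le_iff_le hw hm0 |>.1 le1
    exact (F_mono q (mul_le_mul_of_nonneg_left wm t0.le)).trans le2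

/-- The inequality for arbitrary ideals of the positive Gamma product: truncate to bounded ideals
and pass to the limit. -/
lemma ideal_case {q t : ℝ} (hq : 1 ≤ q) (ht : 1 ≤ t) (n : ℕ) {K : Set (Fin (n + 1) → ℝ)}
    (mK : MeasurableSet K) (hK : IsIdeal K) {w : ℝ} (hw : 0 ≤ w)
    (hKw : (gamPi q (n + 1)).real K = F q w) :
    F q (t * w) ≤ (gamPi q (n + 1)).real {x | (fun i => x i / t) ∈ K} := by
  have := prob hq
  have t0 : 0 < t := by linarith
  rcases hw.eq_or_lt with rfl | hw0
  · rw [mul_zero, F_zero hq]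
    exact measureReal_nonneg
  set L : ℕ → Set (Fin (n + 1) → ℝ) := fun R => K ∩ {x | ∀ i, |x i| ≤ R} with hL
  have mL : ∀ R, MeasurableSet (L R) := by
    intro R
    refine mK.inter ?_
    rw [show {x : Fin (n + 1) → ℝ | ∀ i, |x i| ≤ R} =
        ⋂ i, {x : Fin (n + 1) → ℝ | |x i| ≤ R} by ext x; simp]
    exact MeasurableSet.iInter fun i => measurableSet_le (by fun_prop) measurable_const
  have monL : Monotone L := by
    intro R S hRS x hx
    exact ⟨hx.1, fun i => (hx.2 i).trans (by exact_mod_cast hRS)⟩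
  have unL : ⋃ R, L R = K := by
    ext x
    simp only [hL, mem_iUnion, mem_inter_iff]
    refine ⟨fun ⟨_, h, _⟩ => h, fun h => ?_⟩
    obtain ⟨R, hR⟩ := exists_nat_ge ‖x‖
    exact ⟨R, h, fun i => (norm_le_pi_norm x i).trans hR⟩
  have lim : Tendsto (fun R => (gamPi q (n + 1)).real (L R)) atTop (𝓝 (F q w)) := by
    rw [← hKw, ← unL]
    exact (ENNReal.tendsto_toReal (measure_ne_top _ _)).comp (tendsto_measure_iUnion_atTop monL)
  have key : ∀ v, 0 < v → v < w →
      F q (t * v) ≤ (gamPi q (n + 1)).real {x | (fun i => x i / t) ∈ K} := by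
    intro v hv hvw
    obtain ⟨R, hR⟩ :=
      (lim.eventually (lt_mem_nhds (F_strictMonoOn hq hv.le hw hvw))).exists
    have bR : ∀ x ∈ L R, ∀ i, |x i| ≤ R := fun x hx => hx.2
    obtain ⟨z, hz, -, e⟩ := exists_F_eq hq (Nat.cast_nonneg R) measureReal_nonneg (gamPi_le hq bR)
    have vz : v ≤ z := by
      rw [e] at hR
      exact (F_strictMonoOn hq).le_iff_le hv.le hz |>.1 hR.le
    have iL : IsIdeal (L R) := fun x hx y hy =>
      ⟨hK x hx.1 y hy, fun i => (hy i).trans (hx.2 i)⟩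
    refine (F_mono q (mul_le_mul_of_nonneg_left vz t0.le)).trans
      ((bounded_case hq ht n (L R) (mL R) iL R (Nat.cast_nonneg R) bR z hz e).trans ?_)
    exact measureReal_mono fun x hx => hx.1
  refine le_of_tendsto (f := fun v => F q (t * v)) (x := 𝓝[<] w)
    ((((F_continuous hq).comp (continuous_const_mul t)).tendsto w).mono_left nhdsWithin_le_nhds) ?_
  filter_upwards [Ioo_mem_nhdsLT hw0] with v hv using key v hv.1 hv.2

/-! ### From one-sided to two-sided measures -/

/-- The two-sided measure on the line, with the normalization of the statement: total mass `q`. -/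
abbrev symGam (q : ℝ) : Measure ℝ :=
  (volume : Measure ℝ).withDensity fun x =>
    ENNReal.ofReal ((1 / (2 * Real.Gamma q)) * q * |x| ^ (q - 1) * Real.exp (-|x|))

lemma lintegral_abs (f : ℝ → ENNReal) :
    ∫⁻ x, f |x| = 2 * ∫⁻ x in Ioi 0, f x := by
  rw [← lintegral_add_compl _ (measurableSet_Ioi (a := (0 : ℝ))), compl_Ioi,
    ← setLIntegral_congr (Iio_ae_eq_Iic (a := (0 : ℝ)) (μ := volume)), two_mul]
  have h1 : ∫⁻ x in Ioi (0 : ℝ), f |x| = ∫⁻ x in Ioi 0, f x :=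
    setLIntegral_congr_fun measurableSet_Ioi fun x hx => by rw [abs_of_pos hx]
  congr 1
  rw [← h1]
  have := (Measure.measurePreserving_neg (volume : Measure ℝ)).setLIntegral_comp_preimage_emb
    (MeasurableEquiv.neg ℝ).measurableEmbedding (fun x => f |x|) (Iio 0)
  rw [← this]
  simp

lemma map_abs_symGam {q : ℝ} (hq : 1 ≤ q) :
    (symGam q).map (fun x => |x|) = ENNReal.ofReal q • gam q := by
  have q0 : 0 < q := by linarith
  have G0 : 0 < Real.Gamma q := Real.Gamma_pos_of_pos q0
  have mabs : Measurable fun x : ℝ => |x| := by fun_prop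
  ext S hS
  rw [Measure.map_apply mabs hS, withDensity_apply _ (mabs hS), ← lintegral_indicator (mabs hS),
    Measure.smul_apply, gam, gammaMeasure, withDensity_apply _ hS, ← lintegral_indicator hS]
  set g : ℝ → ENNReal := fun x =>
    ENNReal.ofReal ((1 / (2 * Real.Gamma q)) * q * x ^ (q - 1) * Real.exp (-x)) with hg
  have e1 : ∀ x : ℝ, ((fun x : ℝ => |x|) ⁻¹' S).indicator (fun x => g |x|) x
      = S.indicator g |x| := fun x => rfl
  have e2 : ∫⁻ x, S.indicator (gammaPDF q 1) x = ∫⁻ x in Ioi 0, S.indicator (gammaPDF q 1) x := by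
    rw [← lintegral_add_compl _ (measurableSet_Ioi (a := (0 : ℝ))), compl_Ioi,
      ← setLIntegral_congr (Iio_ae_eq_Iic (a := (0 : ℝ)) (μ := volume))]
    have : ∫⁻ x in Iio (0 : ℝ), S.indicator (gammaPDF q 1) x = ∫⁻ x in Iio (0 : ℝ), 0 :=
      setLIntegral_congr_fun measurableSet_Iio fun x hx => by
        by_cases h : x ∈ S
        · simp [h, gammaPDF_of_neg hx]
        · simp [h]
    rw [this]
    simp
  rw [lintegral_congr e1, lintegral_abs, e2, smul_eq_mul,
    ← lintegral_const_mul' _ _ (by simp), ← lintegral_const_mul' _ _ (by simp)]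
  refine setLIntegral_congr_fun measurableSet_Ioi fun x hx => ?_
  have hx : 0 < x := hx
  by_cases h : x ∈ S
  · simp only [h, indicator_of_mem, hg]
    rw [gammaPDF_of_nonneg hx.le, show (2 : ENNReal) = ENNReal.ofReal 2 by simp,
      ← ENNReal.ofReal_mul (by norm_num), ← ENNReal.ofReal_mul q0.le]
    congr 1
    rw [Real.one_rpow]
    field_simp
  · simp [h]

/-- An ideal is its own preimage under coordinatewise `|·|`, which maps the two-sided product
measure to a multiple of the one-sided one. -/
lemma pi_symGam_apply {q : ℝ} (hq : 1 ≤ q) (n : ℕ) {K : Set (Fin n → ℝ)} (mK : MeasurableSet K)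
    (hK : IsIdeal K) :
    (Measure.pi fun _ : Fin n => symGam q) K = ENNReal.ofReal q ^ n * gamPi q n K := by
  have := prob hq
  have mabs : Measurable fun x : ℝ => |x| := by fun_prop
  have mp1 : MeasurePreserving (fun x : ℝ => |x|) (symGam q) (ENNReal.ofReal q • gam q) :=
    ⟨mabs, map_abs_symGam hq⟩
  have fin : IsFiniteMeasure (ENNReal.ofReal q • gam q) :=
    Measure.smul_finite _ ENNReal.ofReal_ne_top
  have mp := measurePreserving_pi (fun _ : Fin n => symGam q)
    (fun _ : Fin n => ENNReal.ofReal q • gam q) fun _ => mp1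
  have eK : (fun (x : Fin n → ℝ) i => |x i|) ⁻¹' K = K := by
    ext x
    exact ⟨fun h => hK _ h _ fun i => by simp, fun h => hK _ h _ fun i => by simp⟩
  have epi : (Measure.pi fun _ : Fin n => ENNReal.ofReal q • gam q) =
      ENNReal.ofReal q ^ n • gamPi q n := by
    refine Measure.pi_eq fun s hs => ?_
    simp [Measure.pi_pi, Finset.prod_mul_distrib]
  rw [← eK, mp.measure_preimage mK.nullMeasurableSet, epi, eK]
  rfl

lemma gamPi_strip {q : ℝ} (hq : 1 ≤ q) (n : ℕ) (w : ℝ) :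
    (gamPi q (n + 1)).real {x | |x 0| ≤ w} = F q w := by
  have := prob hq
  have mp := measurePreserving_eval (fun _ : Fin (n + 1) => gam q) 0
  have mS : MeasurableSet {x : ℝ | |x| ≤ w} := measurableSet_le (by fun_prop) measurable_const
  rw [← gam_real_eq (S := {x : ℝ | |x| ≤ w}) hq, measureReal_def, measureReal_def,
    ← mp.measure_preimage mS.nullMeasurableSet]
  · rfl
  · intro x hx
    change |x| ≤ w
    rw [abs_of_pos hx.1]
    exact hx.2.le
  · intro x hx _
    exact (le_abs_self x).trans hx

lemma smul_set_eq {n : ℕ} {t : ℝ} (ht : 1 ≤ t) (K : Set (Fin n → ℝ)) :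
    t • K = {x | (fun i => x i / t) ∈ K} := by
  ext x
  rw [mem_smul_set_iff_inv_smul_mem₀ (by linarith : t ≠ 0)]
  have : t⁻¹ • x = fun i => x i / t := by
    ext i
    simp [div_eq_inv_mul]
  rw [this]
  rfl

lemma isIdeal_smul {n : ℕ} (t : ℝ) {K : Set (Fin n → ℝ)} (hK : IsIdeal K) :
    IsIdeal {x : Fin n → ℝ | (fun i => x i / t) ∈ K} := by
  intro x hx y hy
  refine hK _ hx _ fun i => ?_
  rw [abs_div, abs_div]
  exact div_le_div_of_nonneg_right (hy i) (abs_nonneg t)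

end SGamma

/-- **S-inequality for symmetric Gamma products.** For `q ≥ 1`, the product of the symmetric
Gamma measure on `ℝ` with density `(1/(2Γ(q)))·q·|x|^(q-1)·exp(-|x|)` supports the
S-inequality for all ideals in `ℝⁿ`. -/
theorem sInequality_gamma (q : ℝ) (hq : 1 ≤ q) (n : ℕ) [NeZero n] :
    SupportsSIneq (Measure.pi fun _ : Fin n =>
      (volume : Measure ℝ).withDensity fun x =>
        ENNReal.ofReal ((1 / (2 * Real.Gamma q)) * q * |x| ^ (q - 1) *
          Real.exp (-|x|))) := by
  obtain ⟨k, rfl⟩ := Nat.exists_eq_succ_of_ne_zero (NeZero.ne n)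
  intro K mK hK w hw hKw t ht
  have := SGamma.prob hq
  have t0 : 0 < t := by linarith
  have iP : ∀ v : ℝ, IsIdeal {x : Fin (k + 1) → ℝ | |x 0| ≤ v} :=
    fun v x hx y hy => (hy 0).trans hx
  have mP : ∀ v : ℝ, MeasurableSet {x : Fin (k + 1) → ℝ | |x 0| ≤ v} :=
    fun v => measurableSet_le (by fun_prop) measurable_const
  have mt : Measurable fun (x : Fin (k + 1) → ℝ) i => x i / t := by fun_prop
  have mtK : MeasurableSet {x : Fin (k + 1) → ℝ | (fun i => x i / t) ∈ K} := mt mK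
  have eP : t • {x : Fin (k + 1) → ℝ | |x 0| ≤ w} = {x | |x 0| ≤ t * w} := by
    rw [SGamma.smul_set_eq ht]
    ext x
    change |x 0 / t| ≤ w ↔ |x 0| ≤ t * w
    rw [abs_div, abs_of_pos t0, div_le_iff₀ t0, mul_comm]
  have c0 : ENNReal.ofReal q ^ (k + 1) ≠ 0 := pow_ne_zero _ (by simp; linarith)
  have ctop : ENNReal.ofReal q ^ (k + 1) ≠ ⊤ := ENNReal.pow_ne_top ENNReal.ofReal_ne_top
  change (Measure.pi fun _ : Fin (k + 1) => SGamma.symGam q) K =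
    (Measure.pi fun _ : Fin (k + 1) => SGamma.symGam q) _ at hKw
  change (Measure.pi fun _ : Fin (k + 1) => SGamma.symGam q) _ ≤
    (Measure.pi fun _ : Fin (k + 1) => SGamma.symGam q) _
  rw [SGamma.pi_symGam_apply hq _ mK hK, SGamma.pi_symGam_apply hq _ (mP w) (iP w),
    ENNReal.mul_right_inj c0 ctop] at hKw
  rw [eP, SGamma.smul_set_eq ht, SGamma.pi_symGam_apply hq _ (mP _) (iP _),
    SGamma.pi_symGam_apply hq _ mtK (SGamma.isIdeal_smul t hK)]
  refine mul_le_mul' le_rfl ?_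
  rw [← ENNReal.toReal_le_toReal (measure_ne_top _ _) (measure_ne_top _ _)]
  refine (SGamma.gamPi_strip hq k (t * w)).le.trans (SGamma.ideal_case hq ht k mK hK hw ?_)
  rw [← SGamma.gamPi_strip hq k w, measureReal_def, hKw, measureReal_def]
end
end

section
/- Let α > 0, let ω_α be the symmetric Weibull measure on ℝ with density (1/2)·α·|x|^{α−1}·exp(−|x|^α), and let ‖·‖ be an unconditional norm on ℝ^n. Then for all real p ≥ q > 0: (∫_{ℝ^n} ‖x‖^p dω_α^n(x))^{1/p} ≤ C_{p,q} · (∫_{ℝ^n} ‖x‖^q dω_α^n(x))^{1/q}, where C_{p,q} = Γ(1+p/α)^{1/p} / Γ(1+q/α)^{1/q} is the ratio of the corresponding one-dimensional moments of ω_α. -/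
/-!
Let `μ = ω_α^n` and `S(t) = μ{N > t}`. The argument compares the tail `S` with the one-dimensional
Weibull tails `exp(-(t/c)^α)`, in two steps.

*Tails.* For `r ≥ 1` one has `S(r^(1/α) t) ≤ S(t)^r` (`N_tail`), i.e. `-log S(t) / t^α` is
nondecreasing. This is an instance of a functional inequality that tensorizes: if `F : ℝⁿ → [0,1]`
is nondecreasing in every `|x_i|`, then `∫ F^r dμ ≤ (∫ F(r^(1/α) x) dμ)^r` (`weib_pi`); it is applied
to the indicator of `{N > r^(1/α) t}`, which is monotone because `N` is unconditional and convex.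
In dimension one the substitution `y = |x|^α` turns `ω_α` into the exponential measure, and with
`k(t) = h(t) e^{-t}`, `h` nondecreasing, the claim becomes `∫ r k^r ≤ (∫ k)^r`. This holds since
`H(y) = ∫_y^∞ k ≥ k(y)`, so that `r k^r ≤ r H^(r-1) k = -(H^r)'` (`key_real`).

*Moments.* By the tail property, `S - exp(-(·/c)^α)` changes sign at most once, from nonnegative to
nonpositive. If the `q`-th moment of `N` is smaller than that of the Weibull tail with scale `c`,
then multiplying the difference by `t^(p-q) - t₀^(p-q)`, with `t₀` the crossing point, shows that
the `p`-th moment is at most that of the Weibull tail (`crossing`). Letting `c` decrease to the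
scale at which the `q`-th moments agree gives the theorem.
-/

open MeasureTheory Real Set Pointwise
noncomputable section

open scoped ENNReal

/-! ### The one-dimensional inequality for the exponential measure -/

/-- With `k t = h t * exp (-t)`, the tail integral `H y` of `k` dominates `k y`, so `r * k ^ r` is at
most the derivative of `-H ^ r` wherever `h` is continuous, that is, off a countable set. -/
lemma key_real {h : ℝ → ℝ} (hm : Monotone h) (h0 : ∀ t, 0 ≤ h t) (h1 : ∀ t, h t ≤ 1)
    {r : ℝ} (hr : 1 ≤ r) :
    IntegrableOn (fun t => r * (h t * exp (-t)) ^ r) (Ioi 0) ∧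
    IntegrableOn (fun t => h t * exp (-t)) (Ioi 0) ∧
    ∫ t in Ioi 0, r * (h t * exp (-t)) ^ r ≤ (∫ t in Ioi 0, h t * exp (-t)) ^ r := by
  have hr0 : 0 < r := by linarith
  set k : ℝ → ℝ := fun t => h t * exp (-t) with hk
  have hkm : Measurable k := hm.measurable.mul (by fun_prop)
  have hk0 : ∀ t, 0 ≤ k t := fun t => mul_nonneg (h0 t) (exp_pos _).le
  have hke : ∀ t, k t ≤ exp (-t) := fun t => by
    simpa using mul_le_mul_of_nonneg_right (h1 t) (exp_pos (-t)).le
  have hexp : ∀ y : ℝ, IntegrableOn (fun t => exp (-t)) (Ioi y) := fun y => integrableOn_exp_neg_Ioi y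
  have hki : ∀ y : ℝ, IntegrableOn k (Ioi y) := fun y =>
    (hexp y).mono' hkm.aestronglyMeasurable (.of_forall fun t => by
      rw [norm_of_nonneg (hk0 t)]; exact hke t)
  have hkri : IntegrableOn (fun t => r * k t ^ r) (Ioi 0) := by
    refine ((hexp 0).const_mul r).mono' ((hkm.pow_const r).const_mul r).aestronglyMeasurable ?_
    filter_upwards [ae_restrict_mem measurableSet_Ioi] with t ht
    have ht0 : (0 : ℝ) < t := ht
    rw [norm_of_nonneg (mul_nonneg hr0.le (rpow_nonneg (hk0 t) _))]
    have h3 : k t ≤ 1 := (hke t).trans (by simpa using ht0.le)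
    have h2 : k t ^ r ≤ k t := by
      simpa using rpow_le_rpow_of_exponent_ge' (hk0 t) h3 zero_le_one hr
    exact mul_le_mul_of_nonneg_left (h2.trans (hke t)) hr0.le
  refine ⟨hkri, hki 0, ?_⟩
  have hkii : ∀ a b : ℝ, IntervalIntegrable k volume a b := fun a b => by
    rw [intervalIntegrable_iff]
    exact (hki (min a b)).mono_set (fun x hx => hx.1)
  set M := ∫ t in Ioi 0, k t with hM
  set H : ℝ → ℝ := fun y => M - ∫ t in (0 : ℝ)..y, k t with hH
  have hHI : ∀ y, 0 ≤ y → H y = ∫ t in Ioi y, k t := fun y hy => by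
    simp only [hH, hM]
    rw [intervalIntegral.integral_of_le hy, ← Ioc_union_Ioi_eq_Ioi hy,
      setIntegral_union (Ioc_disjoint_Ioi le_rfl) measurableSet_Ioi
      ((hki 0).mono_set (fun x hx => hx.1)) (hki y)]
    ring
  -- monotonicity of `h` bounds the tail integral of `k` from below
  have hHk : ∀ y, 0 ≤ y → k y ≤ H y := fun y hy => by
    rw [hHI y hy]
    have h2 : ∫ t in Ioi y, h y * exp (-t) = k y := by
      rw [integral_const_mul, integral_exp_neg_Ioi]
    rw [← h2]
    refine setIntegral_mono_on ((hexp y).const_mul _) (hki y) measurableSet_Ioi fun t ht => ?_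
    exact mul_le_mul_of_nonneg_right (hm (le_of_lt ht)) (exp_pos _).le
  have hHc : Continuous H :=
    continuous_const.sub (intervalIntegral.continuous_primitive (fun a b => hkii a b) 0)
  have hHd : ∀ y, ContinuousAt h y → HasDerivAt H (-k y) y := fun y hy => by
    have := intervalIntegral.integral_hasDerivAt_right (hkii 0 y)
      (hkm.stronglyMeasurable.stronglyMeasurableAtFilter)
      (hy.mul (by fun_prop : ContinuousAt (fun t : ℝ => exp (-t)) y))
    simpa [hH, hk] using this.const_sub M
  have hfin : ∀ R : ℝ, 0 ≤ R → ∫ t in (0 : ℝ)..R, r * k t ^ r ≤ M ^ r := fun R hR => by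
    have hii : IntervalIntegrable (fun t => r * (H t ^ (r - 1) * k t)) volume 0 R := by
      refine IntervalIntegrable.const_mul ?_ r
      refine (hkii 0 R).continuousOn_mul ?_
      exact (hHc.rpow_const fun _ => Or.inr (by linarith)).continuousOn
    have hftc := integral_eq_of_hasDerivAt_off_countable_of_le (fun y => -(H y ^ r))
      (fun t => r * (H t ^ (r - 1) * k t)) hR hm.countable_not_continuousAt
      ((hHc.rpow_const fun _ => Or.inr hr0.le).neg.continuousOn)
      (fun x hx => by
        have hc : ContinuousAt h x := by simpa using hx.2
        exact ((hHd x hc).rpow_const (p := r) (Or.inr hr)).fun_neg.congr_deriv (by ring)) hii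
    have hle : ∫ t in (0 : ℝ)..R, r * k t ^ r ≤ ∫ t in (0 : ℝ)..R, r * (H t ^ (r - 1) * k t) := by
      refine intervalIntegral.integral_mono_on hR ?_ hii fun t ht => ?_
      · rw [intervalIntegrable_iff, uIoc_of_le hR]
        exact hkri.mono_set (fun x hx => hx.1)
      · refine mul_le_mul_of_nonneg_left ?_ hr0.le
        have h3 : k t ^ r = k t ^ (r - 1) * k t := by
          rw [← rpow_add_one' (hk0 t) (by linarith)]; congr 1; ring
        rw [h3]
        exact mul_le_mul_of_nonneg_right
          (rpow_le_rpow (hk0 t) (hHk t ht.1) (by linarith)) (hk0 t)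
    refine hle.trans ?_
    rw [hftc]
    have h4 : H 0 = M := by simp [hH]
    have h5 : 0 ≤ H R ^ r := rpow_nonneg ((hk0 R).trans (hHk R hR)) _
    simp only [h4]; linarith
  refine le_of_tendsto (intervalIntegral_tendsto_integral_Ioi 0 hkri Filter.tendsto_id) ?_
  filter_upwards [Filter.eventually_ge_atTop 0] with R hR using hfin R hR

/-- The one-dimensional case of the tensorizing inequality, for the exponential measure on the
half-line; the substitution `y = r * t` on the left reduces it to `key_real`. -/
lemma key_lint {G : ℝ → ℝ≥0∞} (hG : Monotone G) (h1 : ∀ t, G t ≤ 1) {r : ℝ} (hr : 1 ≤ r) :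
    ∫⁻ y in Ioi 0, G y ^ r * ENNReal.ofReal (exp (-y)) ≤
      (∫⁻ y in Ioi 0, G (r * y) * ENNReal.ofReal (exp (-y))) ^ r := by
  have hr0 : 0 < r := by linarith
  have hfin : ∀ t, G t ≠ ∞ := fun t => ((h1 t).trans_lt ENNReal.one_lt_top).ne
  have himg : (fun t : ℝ => r * t) '' Ioi 0 = Ioi 0 := by
    simpa using image_mul_left_Ioi hr0 0
  have hcv := lintegral_image_eq_lintegral_abs_deriv_mul (s := Ioi (0 : ℝ)) (f := fun t => r * t)
    (f' := fun _ => r) measurableSet_Ioi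
    (fun x _ => by simpa using ((hasDerivAt_id x).const_mul r).hasDerivWithinAt)
    (fun x _ y _ hxy => mul_left_cancel₀ hr0.ne' hxy)
    (fun y => G y ^ r * ENNReal.ofReal (exp (-y)))
  rw [himg] at hcv
  obtain ⟨hi1, hi2, hle⟩ := key_real (h := fun t => (G (r * t)).toReal) (r := r)
    (fun a b hab => ENNReal.toReal_mono (hfin _) (hG (by gcongr)))
    (fun t => ENNReal.toReal_nonneg)
    (fun t => by simpa using ENNReal.toReal_mono ENNReal.one_ne_top (h1 (r * t))) hr
  have hn2 : ∀ t : ℝ, 0 ≤ (G (r * t)).toReal * exp (-t) := fun t => by positivity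
  rw [hcv]
  calc _ = ∫⁻ t in Ioi 0, ENNReal.ofReal (r * ((G (r * t)).toReal * exp (-t)) ^ r) := by
        refine lintegral_congr fun t => ?_
        rw [abs_of_pos hr0, ENNReal.ofReal_mul hr0.le, ← ENNReal.ofReal_rpow_of_nonneg (hn2 t) hr0.le,
          ENNReal.ofReal_mul ENNReal.toReal_nonneg, ENNReal.ofReal_toReal (hfin _),
          ENNReal.mul_rpow_of_nonneg _ _ hr0.le,
          ENNReal.ofReal_rpow_of_nonneg (exp_pos _).le hr0.le, ← Real.exp_mul]
        congr 4; ring_nf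
    _ = ENNReal.ofReal (∫ t in Ioi 0, r * ((G (r * t)).toReal * exp (-t)) ^ r) :=
        (ofReal_integral_eq_lintegral_ofReal hi1 (.of_forall fun t =>
          mul_nonneg hr0.le (rpow_nonneg (hn2 t) _))).symm
    _ ≤ ENNReal.ofReal ((∫ t in Ioi 0, (G (r * t)).toReal * exp (-t)) ^ r) :=
        ENNReal.ofReal_le_ofReal hle
    _ = (ENNReal.ofReal (∫ t in Ioi 0, (G (r * t)).toReal * exp (-t))) ^ r :=
        (ENNReal.ofReal_rpow_of_nonneg (integral_nonneg hn2) hr0.le).symm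
    _ = _ := by
        rw [ofReal_integral_eq_lintegral_ofReal hi2 (.of_forall hn2)]
        congr 1
        refine lintegral_congr fun t => ?_
        rw [ENNReal.ofReal_mul ENNReal.toReal_nonneg, ENNReal.ofReal_toReal (hfin _)]

/-! ### The Weibull measure and tensorization -/

/-- The symmetric Weibull measure with parameter `α`, as a density with respect to Lebesgue
measure. -/
def weib (α : ℝ) : Measure ℝ := (volume : Measure ℝ).withDensity fun x =>
  ENNReal.ofReal ((1 / 2) * α * |x| ^ (α - 1) * Real.exp (-(|x| ^ α)))

lemma lintegral_even {f : ℝ → ℝ≥0∞} (hf : ∀ x, f (-x) = f x) :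
    ∫⁻ x, f x = 2 * ∫⁻ x in Ioi 0, f x := by
  rw [← lintegral_add_compl f (measurableSet_Ioi (a := (0 : ℝ))), two_mul, compl_Ioi]
  congr 1
  rw [setLIntegral_congr Iio_ae_eq_Iic.symm]
  have := (Measure.measurePreserving_neg (volume : Measure ℝ)).setLIntegral_comp_preimage_emb
    (MeasurableEquiv.neg ℝ).measurableEmbedding f (Ioi 0)
  simp only [Set.neg_preimage, Set.neg_Ioi, neg_zero, hf] at this
  exact this

/-- Under `weib α` the variable `|x| ^ α` is exponentially distributed. -/
lemma lintegral_weib {α : ℝ} (hα : 0 < α) {F : ℝ → ℝ≥0∞} (hF : Measurable F)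
    (he : ∀ x, F |x| = F x) :
    ∫⁻ x, F x ∂(weib α) = ∫⁻ y in Ioi 0, F (y ^ (1 / α)) * ENNReal.ofReal (exp (-y)) := by
  have hd : Measurable fun x : ℝ =>
      ENNReal.ofReal ((1 / 2) * α * |x| ^ (α - 1) * Real.exp (-(|x| ^ α))) := by fun_prop
  have he' : ∀ x, F (-x) = F x := fun x => by rw [← he, abs_neg, he]
  rw [weib, lintegral_withDensity_eq_lintegral_mul _ hd hF,
    lintegral_even (fun x => by simp [he']), ← lintegral_const_mul _ (hd.mul hF)]
  have himg : (fun t : ℝ => t ^ α) '' Ioi 0 = Ioi 0 := by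
    ext y
    constructor
    · rintro ⟨x, hx, rfl⟩
      exact rpow_pos_of_pos hx _
    · intro hy
      exact ⟨y ^ (α⁻¹), rpow_pos_of_pos hy _, rpow_inv_rpow (le_of_lt hy) hα.ne'⟩
  have hcv := lintegral_image_eq_lintegral_abs_deriv_mul (s := Ioi (0 : ℝ)) (f := fun t => t ^ α)
    (f' := fun t => α * t ^ (α - 1)) measurableSet_Ioi
    (fun x hx => (hasDerivAt_rpow_const (Or.inl (ne_of_gt hx))).hasDerivWithinAt)
    (fun x hx y hy hxy => (rpow_left_inj (le_of_lt hx) (le_of_lt hy) hα.ne').1 hxy)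
    (fun y => F (y ^ (1 / α)) * ENNReal.ofReal (exp (-y)))
  rw [himg] at hcv
  rw [hcv]
  refine setLIntegral_congr_fun measurableSet_Ioi fun x hx => ?_
  have hx0 : (0 : ℝ) < x := hx
  have hp : (0 : ℝ) < x ^ (α - 1) := rpow_pos_of_pos hx0 _
  simp only [Pi.mul_apply, abs_of_pos hx0]
  rw [one_div α, rpow_rpow_inv hx0.le hα.ne', abs_of_pos (by positivity), ← mul_assoc, mul_comm (F x),
    ← mul_assoc, ← ENNReal.ofReal_mul (by positivity)]
  congr 1
  rw [show (2 : ℝ≥0∞) = ENNReal.ofReal 2 by simp, ← ENNReal.ofReal_mul (by norm_num)]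
  congr 1
  ring

lemma weib_isProb {α : ℝ} (hα : 0 < α) : IsProbabilityMeasure (weib α) := by
  constructor
  rw [← lintegral_one, lintegral_weib hα measurable_const (fun _ => rfl)]
  simp only [one_mul]
  rw [← ofReal_integral_eq_lintegral_ofReal (integrableOn_exp_neg_Ioi 0)
    (.of_forall fun x => (exp_pos _).le), integral_exp_neg_Ioi]
  simp

lemma weib_one_dim {α : ℝ} (hα : 0 < α) {F : ℝ → ℝ≥0∞} (hF : Measurable F)
    (hm : ∀ x y, |x| ≤ |y| → F x ≤ F y) (h1 : ∀ x, F x ≤ 1) {r : ℝ} (hr : 1 ≤ r) :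
    ∫⁻ x, F x ^ r ∂(weib α) ≤ (∫⁻ x, F (r ^ (1 / α) * x) ∂(weib α)) ^ r := by
  have hr0 : 0 < r := by linarith
  have hα' : 0 < 1 / α := by positivity
  have he : ∀ x y, |x| = |y| → F x = F y := fun x y h => (hm _ _ h.le).antisymm (hm _ _ h.ge)
  rw [lintegral_weib hα (hF.pow_const r) (fun x => by rw [he _ _ (abs_abs x)]),
    lintegral_weib hα (F := fun x => F (r ^ (1 / α) * x)) (hF.comp (measurable_const_mul _))
      (fun x => he _ _ (by simp [abs_mul]))]
  -- truncating at `0` makes the transported function monotone on the whole line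
  have key := key_lint (G := fun y => F (max y 0 ^ (1 / α))) (r := r)
    (fun a b hab => hm _ _ (by
      rw [abs_of_nonneg (by positivity), abs_of_nonneg (by positivity)]
      exact rpow_le_rpow (le_max_right _ _) (max_le_max_right _ hab) hα'.le))
    (fun _ => h1 _) hr
  convert key using 1
  · refine setLIntegral_congr_fun measurableSet_Ioi fun x hx => ?_
    have hx0 : (0 : ℝ) < x := hx
    simp only [max_eq_left hx0.le]
  · congr 1
    refine setLIntegral_congr_fun measurableSet_Ioi fun x hx => ?_
    have hx0 : (0 : ℝ) < x := hx
    simp only [max_eq_left (mul_pos hr0 hx0).le]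
    rw [mul_rpow hr0.le hx0.le]

/-- The inequality of `weib_one_dim` tensorizes: it is applied in the last `n` variables for a fixed
first one, and then to the partial integral, which is again monotone in the absolute value of the
first variable. -/
lemma weib_pi {α : ℝ} (hα : 0 < α) {r : ℝ} (hr : 1 ≤ r) (n : ℕ) :
    ∀ {F : (Fin n → ℝ) → ℝ≥0∞}, Measurable F →
    (∀ x y, (∀ i, |x i| ≤ |y i|) → F x ≤ F y) → (∀ x, F x ≤ 1) →
    ∫⁻ x, F x ^ r ∂(Measure.pi fun _ : Fin n => weib α) ≤
      (∫⁻ x, F (r ^ (1 / α) • x) ∂(Measure.pi fun _ : Fin n => weib α)) ^ r := by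
  have := weib_isProb hα
  induction n with
  | zero =>
    intro F _ _ _
    have h0 : ∀ x : Fin 0 → ℝ, x = 0 := fun x => Subsingleton.elim _ _
    have hL : ∀ K : (Fin 0 → ℝ) → ℝ≥0∞,
        ∫⁻ x, K x ∂(Measure.pi fun _ : Fin 0 => weib α) = K 0 := fun K => by
      rw [lintegral_congr (g := fun _ => K 0) (fun x => by rw [h0 x])]
      simp
    rw [hL, hL, smul_zero]
  | succ n ih =>
    intro F hF hm h1
    set c := r ^ (1 / α) with hc
    set μ := Measure.pi fun _ : Fin n => weib α with hμ
    have hcons : Measurable fun z : ℝ × (Fin n → ℝ) => (Fin.cons z.1 z.2 : Fin (n + 1) → ℝ) := by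
      refine measurable_pi_iff.2 fun i => ?_
      refine Fin.cases ?_ (fun j => ?_) i
      · simpa using measurable_fst
      · simpa [Function.comp_def] using (measurable_pi_apply j).comp (measurable_snd (α := ℝ) (β := Fin n → ℝ))
    have hsplit : ∀ K : (Fin (n + 1) → ℝ) → ℝ≥0∞, Measurable K →
        ∫⁻ x, K x ∂(Measure.pi fun _ : Fin (n + 1) => weib α) =
          ∫⁻ x, ∫⁻ y, K (Fin.cons x y) ∂μ ∂(weib α) := fun K hK => by
      have h := ((measurePreserving_piFinSuccAbove (fun _ : Fin (n + 1) => weib α) 0).symm)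
      rw [← h.lintegral_comp_emb (MeasurableEquiv.measurableEmbedding _)]
      have : ∀ z : ℝ × (Fin n → ℝ), (MeasurableEquiv.piFinSuccAbove (fun _ => ℝ) 0).symm z
          = (Fin.cons z.1 z.2 : Fin (n + 1) → ℝ) := fun z => by
        simp [MeasurableEquiv.piFinSuccAbove_symm_apply, Fin.insertNthEquiv]
      simp only [this]
      exact lintegral_prod _ (hK.comp hcons).aemeasurable
    have hsm : ∀ x (y : Fin n → ℝ), c • (Fin.cons x y : Fin (n + 1) → ℝ) = Fin.cons (c * x) (c • y) :=
      fun x y => by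
        ext i
        refine Fin.cases ?_ (fun j => ?_) i <;> simp
    have hFm : ∀ x, Measurable fun y : Fin n → ℝ => F (Fin.cons x y) := fun x =>
      (hF.comp hcons).comp measurable_prodMk_left
    have hGm : Measurable fun x : ℝ => ∫⁻ y, F (Fin.cons x (c • y)) ∂μ := by
      refine Measurable.lintegral_prod_right' (f := fun z : ℝ × (Fin n → ℝ) =>
        F (Fin.cons z.1 (c • z.2))) ?_
      exact (hF.comp hcons).comp (measurable_fst.prodMk (measurable_snd.const_smul c))
    rw [hsplit _ (hF.pow_const r), hsplit (fun x => F (c • x)) (hF.comp (measurable_const_smul c))]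
    simp only [hsm]
    calc _ ≤ ∫⁻ x, (∫⁻ y, F (Fin.cons x (c • y)) ∂μ) ^ r ∂(weib α) := by
          refine lintegral_mono fun x => ih (hFm x) (fun y z h => hm _ _ fun i => ?_) fun _ => h1 _
          refine Fin.cases ?_ (fun j => ?_) i
          · simp
          · simpa using h j
      _ ≤ _ := by
          refine weib_one_dim hα hGm (fun x x' h => lintegral_mono fun y => hm _ _ fun i => ?_)
            (fun x => ?_) hr
          · refine Fin.cases ?_ (fun j => ?_) i
            · simpa using h
            · simp
          · calc _ ≤ ∫⁻ y, 1 ∂μ := lintegral_mono fun y => h1 _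
              _ = 1 := by simp

/-! ### Unconditional norms -/

/-- An unconditional norm is monotone in the absolute values of the coordinates. Shrinking one
coordinate of `z` yields a convex combination of `z` and its reflection in that coordinate;
the coordinates are replaced one after the other. -/
lemma N_mono {n : ℕ} {N : (Fin n → ℝ) → ℝ}
    (hNadd : ∀ x y, N (x + y) ≤ N x + N y)
    (hNsmul : ∀ (c : ℝ) (x), N (c • x) = |c| * N x)
    (hNuncond : ∀ ε : Fin n → ℝ, (∀ i, ε i = 1 ∨ ε i = -1) →
      ∀ x, N (fun i => ε i * x i) = N x) (x y : Fin n → ℝ) (h : ∀ i, |x i| ≤ |y i|) :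
    N x ≤ N y := by
  have hstep : ∀ (z : Fin n → ℝ) (i : Fin n) (s : ℝ), |s| ≤ |z i| →
      N (Function.update z i s) ≤ N z := fun z i s hs => by
    obtain ⟨θ, hθ, rfl⟩ : ∃ θ : ℝ, |θ| ≤ 1 ∧ s = θ * z i := by
      rcases eq_or_ne (z i) 0 with h0 | h0
      · refine ⟨0, by simp, ?_⟩
        simpa [h0] using hs
      · exact ⟨s / z i, by rw [abs_div]; exact div_le_one_of_le₀ hs (abs_nonneg _), by field_simp⟩
    rw [abs_le] at hθ
    have hrefl := hNuncond (Function.update 1 i (-1)) (fun j => by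
      rcases eq_or_ne j i with rfl | hj <;> simp [*]) z
    set w : Fin n → ℝ := fun j => Function.update (1 : Fin n → ℝ) i (-1) j * z j with hw
    have hcomb : Function.update z i (θ * z i) = ((1 + θ) / 2) • z + ((1 - θ) / 2) • w := by
      ext j
      rcases eq_or_ne j i with rfl | hj
      · simp [hw]; ring
      · simp [hw, hj]; ring
    rw [hcomb]
    refine (hNadd _ _).trans ?_
    rw [hNsmul, hNsmul, hrefl, abs_of_nonneg (by linarith), abs_of_nonneg (by linarith)]
    linarith
  have hall : ∀ s : Finset (Fin n), N (s.piecewise x y) ≤ N y := fun s => by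
    induction s using Finset.induction_on with
    | empty => simp
    | insert i s hi ih =>
      rw [Finset.piecewise_insert]
      refine (hstep _ _ _ ?_).trans ih
      simpa [hi] using h i
  simpa using hall Finset.univ

lemma N_cont {n : ℕ} {N : (Fin n → ℝ) → ℝ}
    (hNadd : ∀ x y, N (x + y) ≤ N x + N y)
    (hNsmul : ∀ (c : ℝ) (x), N (c • x) = |c| * N x) : Continuous N := by
  have hc : ConvexOn ℝ univ N := ⟨convex_univ, fun x _ y _ a b ha hb _ => by
    refine (hNadd _ _).trans ?_
    rw [hNsmul, hNsmul, abs_of_nonneg ha, abs_of_nonneg hb, smul_eq_mul, smul_eq_mul]⟩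
  exact hc.locallyLipschitz.continuous

/-- The tail of `N` decays at least as fast, under scaling, as a Weibull tail; for a Weibull tail
`exp (-(t / c) ^ α)` this is an equality. -/
lemma N_tail {α : ℝ} (hα : 0 < α) {n : ℕ} {N : (Fin n → ℝ) → ℝ}
    (hNadd : ∀ x y, N (x + y) ≤ N x + N y)
    (hNsmul : ∀ (c : ℝ) (x), N (c • x) = |c| * N x)
    (hNuncond : ∀ ε : Fin n → ℝ, (∀ i, ε i = 1 ∨ ε i = -1) →
      ∀ x, N (fun i => ε i * x i) = N x) {r : ℝ} (hr : 1 ≤ r) (t : ℝ) :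
    (Measure.pi fun _ : Fin n => weib α) {x | r ^ (1 / α) * t < N x} ≤
      ((Measure.pi fun _ : Fin n => weib α) {x | t < N x}) ^ r := by
  have hr0 : 0 < r := by linarith
  have hc : 0 < r ^ (1 / α) := by positivity
  have hmeas : ∀ t, MeasurableSet {x | t < N x} := fun t =>
    (isOpen_lt continuous_const (N_cont hNadd hNsmul)).measurableSet
  set A : Set (Fin n → ℝ) := {x | r ^ (1 / α) * t < N x} with hA
  have hAm : MeasurableSet A := hmeas _
  have key := weib_pi hα hr n (F := A.indicator 1)
    (measurable_one.indicator hAm)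
    (fun x y h => by
      by_cases hx : x ∈ A
      · have hy : y ∈ A := lt_of_lt_of_le hx (N_mono hNadd hNsmul hNuncond x y h)
        simp [hx, hy]
      · simp [hx])
    (fun x => by
      by_cases hx : x ∈ A <;> simp [hx])
  have e1 : ∀ x, A.indicator (1 : (Fin n → ℝ) → ℝ≥0∞) x ^ r = A.indicator 1 x := fun x => by
    by_cases hx : x ∈ A <;> simp [hx, hr0]
  have e2 : ∀ x, A.indicator (1 : (Fin n → ℝ) → ℝ≥0∞) (r ^ (1 / α) • x) =
      {x | t < N x}.indicator 1 x := fun x => by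
    have : r ^ (1 / α) • x ∈ A ↔ x ∈ {x | t < N x} := by
      simp only [hA, mem_ofPred_eq, hNsmul, abs_of_pos hc]
      exact mul_lt_mul_iff_right₀ hc
    by_cases hx : x ∈ {x | t < N x}
    · rw [indicator_of_mem hx, indicator_of_mem (this.2 hx)]; rfl
    · rw [indicator_of_notMem hx, indicator_of_notMem (fun h => hx (this.1 h))]
  simp only [e1, e2] at key
  rwa [lintegral_indicator_one hAm, lintegral_indicator_one (hmeas t)] at key

/-! ### Comparison of moments -/

/-- The `s`-th moment of a nonnegative variable with tail `exp (-(t / c) ^ α)`, in layer-cake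
form. -/
lemma weib_moment {α : ℝ} (hα : 0 < α) {c : ℝ} (hc : 0 < c) {s : ℝ} (hs : 0 < s) :
    ENNReal.ofReal s * ∫⁻ t in Ioi 0, ENNReal.ofReal (exp (-(t / c) ^ α)) *
      ENNReal.ofReal (t ^ (s - 1)) = ENNReal.ofReal (c ^ s * Gamma (1 + s / α)) := by
  have hb : 0 < c ^ (-α) := by positivity
  have hint := integral_rpow_mul_exp_neg_mul_rpow (p := α) (q := s - 1) (b := c ^ (-α)) hα
    (by linarith) hb
  have hpos : 0 < Gamma (s / α) := Gamma_pos_of_pos (by positivity)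
  have hval : s * ∫ t in Ioi (0 : ℝ), t ^ (s - 1) * exp (-(c ^ (-α)) * t ^ α) =
      c ^ s * Gamma (1 + s / α) := by
    rw [hint, add_comm 1, Gamma_add_one (by positivity), ← rpow_mul hc.le]
    have : -α * (-(s - 1 + 1) / α) = s := by field_simp; ring
    rw [this, sub_add_cancel]
    field_simp
  -- a Bochner integral with a nonzero value comes from an integrable function
  have hi : IntegrableOn (fun t : ℝ => t ^ (s - 1) * exp (-(c ^ (-α)) * t ^ α)) (Ioi 0) := by
    refine not_imp_comm.1 integral_undef ?_
    rw [hint]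
    have : 0 < Gamma ((s - 1 + 1) / α) := by rwa [sub_add_cancel]
    positivity
  rw [← hval, ENNReal.ofReal_mul hs.le, ofReal_integral_eq_lintegral_ofReal hi]
  · congr 1
    refine setLIntegral_congr_fun measurableSet_Ioi fun t ht => ?_
    have ht0 : (0 : ℝ) < t := ht
    rw [← ENNReal.ofReal_mul (exp_pos _).le, mul_comm, div_rpow ht0.le hc.le, rpow_neg hc.le]
    congr 3
    field_simp
  · filter_upwards [ae_restrict_mem measurableSet_Ioi] with t ht
    exact mul_nonneg (rpow_nonneg (le_of_lt ht) _) (exp_pos _).le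

lemma ennreal_rearrangement {a b c d : ℝ≥0∞} (hab : a ≤ b) (hcd : c ≤ d) :
    a * d + b * c ≤ a * c + b * d := by
  obtain ⟨e, rfl⟩ := exists_add_of_le hab
  obtain ⟨f, rfl⟩ := exists_add_of_le hcd
  calc _ ≤ a * (c + f) + (a + e) * c + e * f := le_self_add
    _ = _ := by ring

/-- A tail `S` satisfying the scaling inequality `hSr` crosses the Weibull tail of scale `c` at most
once, from above. If its `q`-th moment is below that of the Weibull tail, its `p`-th moment is at
most that of the Weibull tail. -/
lemma crossing {α : ℝ} (hα : 0 < α) {S : ℝ → ℝ≥0∞} (hS : Antitone S)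
    (hSr : ∀ r : ℝ, 1 ≤ r → ∀ t, S (r ^ (1 / α) * t) ≤ S t ^ r)
    {p q : ℝ} (hq : 0 < q) (hpq : q ≤ p) {c : ℝ} (hc : 0 < c)
    (hlt : ENNReal.ofReal q * ∫⁻ t in Ioi 0, S t * ENNReal.ofReal (t ^ (q - 1)) <
      ENNReal.ofReal (c ^ q * Gamma (1 + q / α))) :
    ENNReal.ofReal p * ∫⁻ t in Ioi 0, S t * ENNReal.ofReal (t ^ (p - 1)) ≤
      ENNReal.ofReal (c ^ p * Gamma (1 + p / α)) := by
  have hp : 0 < p := by linarith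
  have hSm : Measurable S := hS.measurable
  set g : ℝ → ℝ≥0∞ := fun t => ENNReal.ofReal (exp (-(t / c) ^ α)) with hg
  have hgm : Measurable g := by fun_prop
  rw [← weib_moment hα hc hq] at hlt
  rw [← weib_moment hα hc hp]
  set A : Set ℝ := {t | 0 < t ∧ g t ≤ S t} with hA
  have hdown : ∀ t ∈ A, ∀ u, 0 < u → u ≤ t → u ∈ A := by
    rintro t ⟨ht, hgt⟩ u hu hut
    refine ⟨hu, ?_⟩
    set r := (t / u) ^ α with hr
    have hr1 : 1 ≤ r := one_le_rpow ((one_le_div hu).2 hut) hα.le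
    have hr0 : 0 < r := by linarith
    have ht' : r ^ (1 / α) * u = t := by
      rw [hr, one_div, rpow_rpow_inv (by positivity) hα.ne']; field_simp
    have hgr : g t = g u ^ r := by
      simp only [hg]
      rw [ENNReal.ofReal_rpow_of_nonneg (exp_pos _).le hr0.le, ← Real.exp_mul, neg_mul, hr,
        ← mul_rpow (by positivity) (by positivity)]
      congr 4
      field_simp
    have := hSr r hr1 u
    rw [ht'] at this
    rw [← ENNReal.rpow_le_rpow_iff hr0, ← hgr]
    exact hgt.trans this
  -- otherwise `S` lies above the Weibull tail everywhere, against the assumption on `q`-th moments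
  have hbdd : BddAbove A := by
    by_contra hb
    rw [not_bddAbove_iff] at hb
    refine hlt.not_ge (mul_le_mul_right (setLIntegral_mono' measurableSet_Ioi fun t ht => ?_) _)
    obtain ⟨a, ha, hta⟩ := hb t
    exact mul_le_mul_left (hdown a ha t ht hta.le).2 _
  -- the crossing point; it is `0` when `A` is empty, since `sSup ∅ = 0`
  set t₀ := sSup A with ht₀
  have ht₀0 : 0 ≤ t₀ := Real.sSup_nonneg fun t ht => ht.1.le
  have hbelow : ∀ t, 0 < t → t < t₀ → g t ≤ S t := fun t ht htt => by
    have hne : A.Nonempty := by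
      by_contra h
      rw [not_nonempty_iff_eq_empty] at h
      rw [ht₀, h, Real.sSup_empty] at htt
      linarith
    obtain ⟨a, ha, hta⟩ := exists_lt_of_lt_csSup hne htt
    exact (hdown a ha t ht hta.le).2
  have habove : ∀ t, 0 < t → t₀ < t → S t ≤ g t := fun t ht htt => by
    by_contra h
    exact (le_csSup hbdd ⟨ht, (not_le.1 h).le⟩).not_gt htt
  set K := ENNReal.ofReal (t₀ ^ (p - q)) with hK
  -- the inequality `(t ^ (p - q) - t₀ ^ (p - q)) * (S t - g t) ≤ 0` without subtraction
  have hpt : ∀ t ∈ Ioi (0 : ℝ),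
      S t * ENNReal.ofReal (t ^ (p - 1)) + K * (g t * ENNReal.ofReal (t ^ (q - 1))) ≤
      g t * ENNReal.ofReal (t ^ (p - 1)) + K * (S t * ENNReal.ofReal (t ^ (q - 1))) := fun t ht => by
    have ht0 : (0 : ℝ) < t := ht
    have hw : ENNReal.ofReal (t ^ (p - 1)) =
        ENNReal.ofReal (t ^ (p - q)) * ENNReal.ofReal (t ^ (q - 1)) := by
      rw [← ENNReal.ofReal_mul (by positivity), ← rpow_add ht0]
      congr 2; ring
    have hmain : S t * ENNReal.ofReal (t ^ (p - q)) + g t * K ≤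
        g t * ENNReal.ofReal (t ^ (p - q)) + S t * K := by
      rcases lt_trichotomy t t₀ with h | h | h
      · rw [add_comm]
        exact ennreal_rearrangement (hbelow t ht0 h)
          (ENNReal.ofReal_le_ofReal (rpow_le_rpow ht0.le h.le (by linarith)))
      · rw [hK, ← h, add_comm]
      · rw [add_comm (g t * _)]
        exact ennreal_rearrangement (habove t ht0 h)
          (ENNReal.ofReal_le_ofReal (rpow_le_rpow ht₀0 h.le (by linarith)))
    calc _ = (S t * ENNReal.ofReal (t ^ (p - q)) + g t * K) * ENNReal.ofReal (t ^ (q - 1)) := by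
          rw [hw]; ring
      _ ≤ _ := mul_le_mul_left hmain _
      _ = _ := by rw [hw]; ring
  have hint := setLIntegral_mono' (μ := volume) measurableSet_Ioi hpt
  rw [lintegral_add_left (by fun_prop), lintegral_add_left (by fun_prop),
    lintegral_const_mul _ (by fun_prop), lintegral_const_mul _ (by fun_prop)] at hint
  have hq0 : ENNReal.ofReal q ≠ 0 := by simpa using hq
  have hle : ∫⁻ t in Ioi 0, S t * ENNReal.ofReal (t ^ (q - 1)) ≤
      ∫⁻ t in Ioi 0, g t * ENNReal.ofReal (t ^ (q - 1)) := by
    by_contra h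
    exact hlt.not_ge (mul_le_mul_right (not_le.1 h).le _)
  have hfin : ∫⁻ t in Ioi 0, g t * ENNReal.ofReal (t ^ (q - 1)) ≠ ∞ := fun h => by
    have := weib_moment hα hc hq
    rw [h, ENNReal.mul_top hq0] at this
    exact ENNReal.ofReal_ne_top this.symm
  refine mul_le_mul_right ?_ _
  have hKfin : K * ∫⁻ t in Ioi 0, g t * ENNReal.ofReal (t ^ (q - 1)) ≠ ∞ :=
    ENNReal.mul_ne_top ENNReal.ofReal_ne_top hfin
  exact (ENNReal.add_le_add_iff_right hKfin).1
    (hint.trans (add_le_add_right (mul_le_mul_right hle _) _))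

/-- **Comparison of moments for Weibull products.** For the symmetric Weibull measure
`ω_α` with density `(1/2)·α·|x|^(α-1)·exp(-|x|^α)` and any unconditional norm `N` on `ℝⁿ`,
the `p`-th and `q`-th moments (for `p ≥ q > 0`) compare with the optimal constant
`C_{p,q} = Γ(1+p/α)^(1/p) / Γ(1+q/α)^(1/q)`. -/
theorem moment_comparison_weibull (α : ℝ) (hα : 0 < α) (n : ℕ) [NeZero n]
    (N : (Fin n → ℝ) → ℝ)
    (hN0 : ∀ x, N x = 0 ↔ x = 0)
    (hNadd : ∀ x y, N (x + y) ≤ N x + N y)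
    (hNsmul : ∀ (c : ℝ) (x), N (c • x) = |c| * N x)
    (hNuncond : ∀ ε : Fin n → ℝ, (∀ i, ε i = 1 ∨ ε i = -1) →
      ∀ x, N (fun i => ε i * x i) = N x)
    (ω : Measure ℝ)
    (hω : ω = (volume : Measure ℝ).withDensity fun x =>
      ENNReal.ofReal ((1 / 2) * α * |x| ^ (α - 1) * Real.exp (-(|x| ^ α))))
    (p q : ℝ) (hq : 0 < q) (hpq : q ≤ p) :
    (∫⁻ x, ENNReal.ofReal (N x) ^ p ∂(Measure.pi fun _ : Fin n => ω)) ^ (1 / p) ≤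
      ENNReal.ofReal
          (Real.Gamma (1 + p / α) ^ (1 / p) / Real.Gamma (1 + q / α) ^ (1 / q)) *
        (∫⁻ x, ENNReal.ofReal (N x) ^ q ∂(Measure.pi fun _ : Fin n => ω)) ^ (1 / q) := by
  obtain rfl : ω = weib α := hω
  have hp : 0 < p := by linarith
  set μ := Measure.pi fun _ : Fin n => weib α with hμ
  have hNnn : ∀ x, 0 ≤ N x := fun x => by
    have h := N_mono hNadd hNsmul hNuncond 0 x (fun i => by simp)
    rwa [(hN0 0).2 rfl] at h
  have hNm : Measurable N := (N_cont hNadd hNsmul).measurable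
  set S : ℝ → ℝ≥0∞ := fun t => μ {x | t < N x} with hS
  have hlayer : ∀ s : ℝ, 0 < s → ∫⁻ x, ENNReal.ofReal (N x) ^ s ∂μ =
      ENNReal.ofReal s * ∫⁻ t in Ioi 0, S t * ENNReal.ofReal (t ^ (s - 1)) := fun s hs => by
    rw [← lintegral_rpow_eq_lintegral_meas_lt_mul μ (.of_forall hNnn) hNm.aemeasurable hs]
    exact lintegral_congr fun x => ENNReal.ofReal_rpow_of_nonneg (hNnn x) hs.le
  have hcross : ∀ c : ℝ, 0 < c →
      ∫⁻ x, ENNReal.ofReal (N x) ^ q ∂μ < ENNReal.ofReal (c ^ q * Gamma (1 + q / α)) →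
      ∫⁻ x, ENNReal.ofReal (N x) ^ p ∂μ ≤ ENNReal.ofReal (c ^ p * Gamma (1 + p / α)) := by
    rw [hlayer p hp, hlayer q hq]
    have hSa : Antitone S := fun a b hab => measure_mono fun x (hx : b < N x) => hab.trans_lt hx
    exact fun c hc h => crossing hα hSa (fun r hr t => N_tail hα hNadd hNsmul hNuncond hr t) hq hpq hc h
  set Γp := Gamma (1 + p / α) with hΓp
  set Γq := Gamma (1 + q / α) with hΓq
  have hΓp0 : 0 < Γp := Gamma_pos_of_pos (by positivity)
  have hΓq0 : 0 < Γq := Gamma_pos_of_pos (by positivity)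
  set Ip := ∫⁻ x, ENNReal.ofReal (N x) ^ p ∂μ with hIp
  set Iq := ∫⁻ x, ENNReal.ofReal (N x) ^ q ∂μ with hIq
  rcases eq_or_ne Iq ∞ with htop | hfin
  · rw [htop, ENNReal.top_rpow_of_pos (by positivity), ENNReal.mul_top]
    · exact le_top
    · simp only [ne_eq, ENNReal.ofReal_eq_zero, not_le]
      positivity
  obtain ⟨m, hm0, hm⟩ : ∃ m : ℝ, 0 ≤ m ∧ Iq = ENNReal.ofReal m :=
    ⟨Iq.toReal, ENNReal.toReal_nonneg, (ENNReal.ofReal_toReal hfin).symm⟩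
  -- the scale of the Weibull tail whose `q`-th moment equals that of `N`
  set c₀ : ℝ := (m / Γq) ^ (1 / q) with hc₀
  have hc₀0 : 0 ≤ c₀ := by positivity
  have hbound : ∀ c, c₀ < c → Ip ^ (1 / p) ≤ ENNReal.ofReal (c * Γp ^ (1 / p)) := fun c hc => by
    have hc0 : 0 < c := by linarith
    have h1 : m < c ^ q * Γq := by
      rw [← div_lt_iff₀ hΓq0]
      have := rpow_lt_rpow hc₀0 hc hq
      rwa [hc₀, one_div, rpow_inv_rpow (by positivity) hq.ne'] at this
    have h2 := hcross c hc0 (by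
      rw [hm]; exact (ENNReal.ofReal_lt_ofReal_iff (by positivity)).2 h1)
    refine (ENNReal.rpow_le_rpow h2 (by positivity : 0 ≤ 1 / p)).trans_eq ?_
    rw [ENNReal.ofReal_rpow_of_nonneg (by positivity) (by positivity),
      mul_rpow (by positivity) hΓp0.le, one_div, rpow_rpow_inv hc0.le hp.ne']
  have hlim : Ip ^ (1 / p) ≤ ENNReal.ofReal (c₀ * Γp ^ (1 / p)) := by
    have hcont : Continuous fun c : ℝ => ENNReal.ofReal (c * Γp ^ (1 / p)) :=
      ENNReal.continuous_ofReal.comp (by fun_prop)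
    refine ge_of_tendsto ((hcont.tendsto c₀).mono_left nhdsWithin_le_nhds :
      Filter.Tendsto _ (nhdsWithin c₀ (Ioi c₀)) _) ?_
    filter_upwards [self_mem_nhdsWithin] with c hc using hbound c hc
  refine hlim.trans_eq ?_
  rw [hm, ENNReal.ofReal_rpow_of_nonneg hm0 (by positivity), ← ENNReal.ofReal_mul (by positivity), hc₀,
    div_rpow hm0 hΓq0.le]
  congr 1
  ring
end
end

section
/- Let μ be a Borel probability measure on ℝ and let μ^n denote its n-fold product on ℝ^n. If μ^2 = μ ⊗ μ supports the S-inequality for all ideals in ℝ^2, then for every n ≥ 2 the measure μ^n supports the S-inequality for all ideals in ℝ^n. -/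
/-!
Write `F r = μ {x | |x| ≤ r}`; every strip of half-width `w`, in any dimension, has measure `F w`.

If `F` is continuous and `F 0 = 0`, the dimension can be raised by one: replace each slice `K_x` of
an ideal `K ⊆ ℝⁿ⁺¹` by the interval `{y | F |y| < μⁿ K_x}`, which has the same measure because `F`
pushes `μ` forward (through `|·|`) to the uniform law.  These intervals form an ideal `L ⊆ ℝ²` with
`μ² L = μⁿ⁺¹ K`, and the `n`-dimensional inequality applied to the slices gives
`μ² (tL) ≤ μⁿ⁺¹ (tK)`, so the planar inequality for `L` yields the one for `K`
(`SIneqF.succ`).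

The planar hypothesis forces this regularity, up to a trivial case.
* `|x|` has no atom `a > 0` (`measure_abs_eq_zero`): only countably many `w ∈ (0, a)` are atoms, and
  for any other `w` the open strip of half-width `w` has the same measure as the closed one, while
  after dilation by `a / w` it has strictly smaller measure.
* `μ {0}` is `0` or `1` (`measure_zero_singleton`): the union of the two axes is invariant under
  dilations, while the strip of the same measure, if of positive width, is dilated to exhaust the
  plane.

If `μ {0} = 1` the inequality is trivial, since every nonempty ideal contains the origin.
-/

open MeasureTheory Real Set Pointwise

noncomputable section

/-- The measure of a symmetric closed interval, i.e. of a strip of half-width `r`. -/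
def absCdf (μ : Measure ℝ) (r : ℝ) : ENNReal := μ {x | |x| ≤ r}

/-- The S-inequality for ideals in `ℝⁿ`, with the strips represented by their measure; unlike
`SupportsSIneq` it makes sense without singling out a coordinate. -/
def SIneqF (μ : Measure ℝ) (n : ℕ) : Prop :=
  ∀ K : Set (Fin n → ℝ), MeasurableSet K → IsIdeal K →
    ∀ w : ℝ, 0 ≤ w → (Measure.pi fun _ : Fin n => μ) K = absCdf μ w →
      ∀ t : ℝ, 1 ≤ t → absCdf μ (t * w) ≤ (Measure.pi fun _ : Fin n => μ) (t • K)

lemma mem_smul_iff {n : ℕ} {t : ℝ} (ht : 1 ≤ t) (K : Set (Fin n → ℝ)) (x : Fin n → ℝ) :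
    x ∈ t • K ↔ t⁻¹ • x ∈ K :=
  mem_smul_set_iff_inv_smul_mem₀ (by positivity) K x

lemma pi_eval (μ : Measure ℝ) [IsProbabilityMeasure μ] {n : ℕ} (i : Fin n) {A : Set ℝ}
    (hA : MeasurableSet A) :
    (Measure.pi fun _ : Fin n => μ) {x | x i ∈ A} = μ A :=
  (measurePreserving_eval (fun _ : Fin n => μ) i).measure_preimage hA.nullMeasurableSet

lemma measurableSet_abs_le (r : ℝ) : MeasurableSet {x : ℝ | |x| ≤ r} :=
  measurableSet_le (by fun_prop) measurable_const

lemma smul_strip {n : ℕ} (i : Fin n) {t : ℝ} (ht : 1 ≤ t) (w : ℝ) :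
    t • {x : Fin n → ℝ | |x i| ≤ w} = {x | |x i| ≤ t * w} := by
  ext x
  have h0 : 0 < t := by linarith
  rw [mem_smul_iff ht]
  simp only [mem_ofPred_eq, Pi.smul_apply, smul_eq_mul, abs_mul, abs_inv, abs_of_pos h0]
  exact inv_mul_le_iff₀ h0

lemma supportsSIneq_iff (μ : Measure ℝ) [IsProbabilityMeasure μ] (n : ℕ) (inst : NeZero n) :
    @SupportsSIneq n inst (Measure.pi fun _ : Fin n => μ) ↔ SIneqF μ n := by
  have hs (w : ℝ) : (Measure.pi fun _ : Fin n => μ) {x | |x 0| ≤ w} = absCdf μ w :=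
    pi_eval μ 0 (measurableSet_abs_le w)
  constructor
  · intro h K hK hI w hw he t ht
    have := h K hK hI w hw (by rw [hs, he]) t ht
    rwa [smul_strip 0 ht, hs] at this
  · intro h K hK hI w hw he t ht
    rw [smul_strip 0 ht, hs]
    exact h K hK hI w hw (by rw [he, hs]) t ht

lemma absCdf_mono (μ : Measure ℝ) : Monotone (absCdf μ) := fun _ _ h =>
  measure_mono fun _ hx => le_trans hx h

lemma IsIdeal.subset_smul {n : ℕ} {K : Set (Fin n → ℝ)} (hI : IsIdeal K) {t : ℝ} (ht : 1 ≤ t) :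
    K ⊆ t • K := by
  intro x hx
  have h0 : 0 < t := by linarith
  rw [mem_smul_iff ht]
  refine hI x hx _ fun i => ?_
  simp only [Pi.smul_apply, smul_eq_mul, abs_mul, abs_inv, abs_of_pos h0]
  exact mul_le_of_le_one_left (abs_nonneg _) (inv_le_one_of_one_le₀ ht)

/-! ### Regularity of the one-dimensional measure -/

/-- The planar S-inequality excludes atoms of `|x|` away from `0`. -/
lemma measure_abs_eq_zero (μ : Measure ℝ) [IsProbabilityMeasure μ] (h2 : SIneqF μ 2)
    {a : ℝ} (ha : 0 < a) : μ {x | |x| = a} = 0 := by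
  have hc : {t : ℝ | 0 < μ {x | |x| = t}}.Countable :=
    Measure.countable_meas_level_set_pos (μ := μ) (g := fun x : ℝ => |x|) (by fun_prop)
  obtain ⟨w, hw, hwa⟩ := (hc.dense_compl ℝ).exists_mem_open (isOpen_Ioo (a := 0) (b := a))
    (nonempty_Ioo.2 ha)
  have hw0 : μ {x | |x| = w} = 0 := by simpa using hw
  obtain ⟨h0, h1⟩ := hwa
  have hlt (r : ℝ) : MeasurableSet {x : ℝ | |x| < r} :=
    measurableSet_lt (by fun_prop) measurable_const
  have hsplit (r : ℝ) : absCdf μ r = μ {x | |x| < r} + μ {x | |x| = r} := by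
    rw [← measure_union _ (measurableSet_eq_fun (by fun_prop) measurable_const)]
    · exact congrArg μ (ext fun x => by
        rw [mem_union]; exact le_iff_lt_or_eq (a := |x|))
    · exact disjoint_left.2 fun x hx hy => (ne_of_lt hx) hy
  have ht : 1 ≤ a / w := (one_le_div h0).2 h1.le
  have key := h2 {z | z 0 ∈ {x : ℝ | |x| < w}} (measurable_pi_apply 0 (hlt w))
    (fun x hx y hy => lt_of_le_of_lt (hy 0) hx) w h0.le
    (by rw [pi_eval μ 0 (hlt w), hsplit, hw0, add_zero]) (a / w) ht
  have hs : (a / w) • {z : Fin 2 → ℝ | z 0 ∈ {x : ℝ | |x| < w}} =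
      {z | z 0 ∈ {x : ℝ | |x| < a}} := by
    ext z
    rw [mem_smul_iff ht]
    simp only [mem_ofPred_eq, Pi.smul_apply, smul_eq_mul, abs_mul, inv_div, abs_div,
      abs_of_pos h0, abs_of_pos ha]
    rw [div_mul_eq_mul_div, div_lt_iff₀ ha]
    exact mul_lt_mul_iff_right₀ h0
  rw [hs, pi_eval μ 0 (hlt a), div_mul_cancel₀ _ h0.ne', hsplit] at key
  by_contra hne
  exact absurd key (not_le.2 (ENNReal.lt_add_right (measure_ne_top _ _) hne))

lemma continuousOn_absCdf (μ : Measure ℝ) [IsProbabilityMeasure μ]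
    (h : ∀ a : ℝ, 0 < a → μ {x | |x| = a} = 0) : ContinuousOn (absCdf μ) (Ici 0) := by
  intro r hr
  refine tendsto_measure_of_ae_tendsto_indicator_of_isFiniteMeasure (nhdsWithin r (Ici 0))
    (measurableSet_abs_le r) (fun s => measurableSet_abs_le s) ?_
  -- Near `r`, membership of `x` is decided as soon as `|x| ≠ r`.
  have hne : ∀ x : ℝ, |x| ≠ r →
      ∀ᶠ s in nhdsWithin r (Ici 0), x ∈ {x : ℝ | |x| ≤ s} ↔ x ∈ {x : ℝ | |x| ≤ r} := by
    intro x hx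
    refine Filter.Eventually.filter_mono nhdsWithin_le_nhds ?_
    rcases lt_or_gt_of_ne hx with hx | hx
    · filter_upwards [lt_mem_nhds hx] with s hs
      exact ⟨fun _ => hx.le, fun _ => hs.le⟩
    · filter_upwards [gt_mem_nhds hx] with s hs
      exact ⟨fun h' => absurd hs (not_lt.2 h'), fun h' => absurd hx (not_lt.2 h')⟩
  rcases (mem_Ici.1 hr).eq_or_lt with h0 | h0
  · refine Filter.Eventually.of_forall fun x => ?_
    by_cases hx : |x| = r
    · filter_upwards [self_mem_nhdsWithin] with s hs
      simp only [hx]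
      exact ⟨fun _ => le_rfl, fun _ => h0 ▸ hs⟩
    · exact hne x hx
  · have : ∀ᵐ x ∂μ, |x| ≠ r := by rw [ae_iff]; simpa using h r h0
    filter_upwards [this] with x hx using hne x hx

lemma exists_lt_absCdf (μ : Measure ℝ) [IsProbabilityMeasure μ] {c : ENNReal} (hc : c < 1)
    (R : ℝ) : ∃ r, R ≤ r ∧ c < absCdf μ r := by
  have : Filter.Tendsto (absCdf μ) Filter.atTop (nhds (μ univ)) := by
    refine tendsto_measure_of_ae_tendsto_indicator_of_isFiniteMeasure Filter.atTop
      MeasurableSet.univ (fun s => measurableSet_abs_le s) (Filter.Eventually.of_forall fun x => ?_)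
    filter_upwards [Filter.eventually_ge_atTop |x|] with s hs
    simpa using hs
  rw [measure_univ] at this
  exact ((Filter.eventually_ge_atTop R).and (this.eventually (lt_mem_nhds hc))).exists

lemma exists_absCdf_eq (μ : Measure ℝ) [IsProbabilityMeasure μ]
    (hF : ContinuousOn (absCdf μ) (Ici 0)) {c : ENNReal} (h0 : absCdf μ 0 ≤ c) (hc : c < 1) :
    ∃ w, 0 ≤ w ∧ absCdf μ w = c := by
  obtain ⟨r, hr, hcr⟩ := exists_lt_absCdf μ hc 0
  obtain ⟨w, hw, he⟩ := intermediate_value_Icc hr (hF.mono Icc_subset_Ici_self) ⟨h0, hcr.le⟩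
  exact ⟨w, hw.1, he⟩

/-- The planar S-inequality forces the mass at the origin to be `0` or `1`: otherwise the union
of the two axes, which is dilation invariant, is beaten by a strip. -/
lemma measure_zero_singleton (μ : Measure ℝ) [IsProbabilityMeasure μ] (h2 : SIneqF μ 2)
    (hF : ContinuousOn (absCdf μ) (Ici 0)) : μ {0} = 0 ∨ μ {0} = 1 := by
  have hF0 : absCdf μ 0 = μ {0} := by
    unfold absCdf; congr 1; ext x; simp
  set q := μ ({0}ᶜ : Set ℝ) with hq
  have hcompl : μ {0} = 1 - q := by
    rw [← prob_compl_eq_one_sub (measurableSet_singleton (0 : ℝ)).compl, compl_compl]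
  have hq1 : q ≤ 1 := prob_le_one
  by_cases hq0 : q = 0
  · right; rw [hcompl, hq0, tsub_zero]
  left
  set C : Set (Fin 2 → ℝ) := (univ.pi fun _ => ({0}ᶜ : Set ℝ))ᶜ with hC
  have hCmem (z : Fin 2 → ℝ) : z ∈ C ↔ z 0 = 0 ∨ z 1 = 0 := by
    simp [hC, Fin.forall_fin_two]; tauto
  have hCm : MeasurableSet (univ.pi fun _ : Fin 2 => ({0}ᶜ : Set ℝ)) :=
    MeasurableSet.univ_pi fun _ => (measurableSet_singleton (0 : ℝ)).compl
  have hCmeas : (Measure.pi fun _ : Fin 2 => μ) C = 1 - q * q := by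
    rw [hC, prob_compl_eq_one_sub hCm, Measure.pi_pi]
    simp [hq, sq]
  have hCI : IsIdeal C := by
    intro x hx y hy
    rw [hCmem] at hx ⊢
    refine hx.imp (fun h => ?_) (fun h => ?_)
    · simpa [h] using hy 0
    · simpa [h] using hy 1
  have hclt : 1 - q * q < 1 :=
    ENNReal.sub_lt_self ENNReal.one_ne_top one_ne_zero (mul_ne_zero hq0 hq0)
  obtain ⟨w, hw, he⟩ := exists_absCdf_eq μ hF (c := 1 - q * q)
    (by rw [hF0, hcompl]; exact tsub_le_tsub_left (mul_le_of_le_one_left' hq1) 1) hclt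
  rcases hw.eq_or_lt with rfl | hw
  · rw [hF0, hcompl] at he
    have hqq : q = q * q :=
      (ENNReal.sub_right_inj ENNReal.one_ne_top hq1 (mul_le_one' hq1 hq1)).1 he
    have h1 : q = 1 := by
      have := (ENNReal.mul_right_inj hq0 (ne_top_of_le_ne_top ENNReal.one_ne_top hq1)
        (b := 1) (c := q)).1 (by rw [mul_one]; exact hqq)
      exact this.symm
    rw [hcompl, h1, tsub_self]
  · exfalso
    obtain ⟨r, hr, hcr⟩ := exists_lt_absCdf μ hclt w
    have ht : 1 ≤ r / w := (one_le_div hw).2 hr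
    have key := h2 C hCm.compl hCI w hw.le (by rw [hCmeas, he]) (r / w) ht
    have hs : (r / w) • C = C := by
      ext z
      have : (r / w)⁻¹ ≠ 0 := inv_ne_zero (by positivity)
      rw [mem_smul_iff ht, hCmem, hCmem]
      simp only [Pi.smul_apply, smul_eq_mul, mul_eq_zero, this, false_or]
    rw [hs, hCmeas, div_mul_cancel₀ _ hw.ne'] at key
    exact absurd hcr (not_lt.2 key)

/-! ### Slicing and the induction step -/

/-- The slice of `A ⊆ ℝⁿ⁺¹` at first coordinate `x`. -/
def slice {n : ℕ} (A : Set (Fin (n + 1) → ℝ)) (x : ℝ) : Set (Fin n → ℝ) :=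
  {y | (Fin.cons x y : Fin (n + 1) → ℝ) ∈ A}

lemma measurable_cons {n : ℕ} :
    Measurable fun p : ℝ × (Fin n → ℝ) => (Fin.cons p.1 p.2 : Fin (n + 1) → ℝ) := by
  refine measurable_pi_lambda _ fun i => ?_
  refine Fin.cases ?_ (fun j => ?_) i
  · simpa using measurable_fst
  · simpa [Function.comp_def] using
      (measurable_pi_apply (X := fun _ : Fin n => ℝ) j).comp (measurable_snd (α := ℝ))

lemma measurableSet_slice {n : ℕ} {A : Set (Fin (n + 1) → ℝ)} (hA : MeasurableSet A) (x : ℝ) :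
    MeasurableSet (slice A x) :=
  (measurable_cons.comp measurable_prodMk_left) hA

lemma measurable_measure_slice (μ : Measure ℝ) [IsProbabilityMeasure μ] {n : ℕ}
    {A : Set (Fin (n + 1) → ℝ)} (hA : MeasurableSet A) :
    Measurable fun x => (Measure.pi fun _ : Fin n => μ) (slice A x) :=
  measurable_measure_prodMk_left (measurable_cons hA)

lemma pi_eq_lintegral_slice (μ : Measure ℝ) [IsProbabilityMeasure μ] {n : ℕ}
    {A : Set (Fin (n + 1) → ℝ)} (hA : MeasurableSet A) :
    (Measure.pi fun _ : Fin (n + 1) => μ) A =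
      ∫⁻ x, (Measure.pi fun _ : Fin n => μ) (slice A x) ∂μ := by
  have h := (measurePreserving_piFinSuccAbove (fun _ : Fin (n + 1) => μ) 0).symm
  rw [← h.measure_preimage hA.nullMeasurableSet, Measure.prod_apply (h.measurable hA)]
  refine lintegral_congr fun x => ?_
  congr 1
  ext y
  simp [slice, MeasurableEquiv.piFinSuccAbove, Fin.insertNthEquiv]

lemma slice_smul {n : ℕ} (A : Set (Fin (n + 1) → ℝ)) {t : ℝ} (ht : 1 ≤ t) (x : ℝ) :
    slice (t • A) x = t • slice A (t⁻¹ * x) := by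
  ext y
  rw [mem_smul_iff ht]
  simp only [slice, mem_ofPred_eq, mem_smul_iff ht]
  have : t⁻¹ • (Fin.cons x y : Fin (n + 1) → ℝ) = Fin.cons (t⁻¹ * x) (t⁻¹ • y) := by
    ext i
    refine Fin.cases ?_ (fun j => ?_) i <;> simp
  rw [this]

lemma IsIdeal.slice {n : ℕ} {K : Set (Fin (n + 1) → ℝ)} (hI : IsIdeal K) (x : ℝ) :
    IsIdeal (slice K x) := by
  intro y hy z hz
  refine hI _ hy _ fun i => ?_
  refine Fin.cases ?_ (fun j => ?_) i
  · simp
  · simpa using hz j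

lemma IsIdeal.slice_anti {n : ℕ} {K : Set (Fin (n + 1) → ℝ)} (hI : IsIdeal K) {x x' : ℝ}
    (h : |x| ≤ |x'|) : _root_.slice K x' ⊆ _root_.slice K x := by
  intro y hy
  refine hI _ hy _ fun i => ?_
  refine Fin.cases ?_ (fun j => ?_) i
  · simpa using h
  · simp

lemma measurable_absCdf_abs (μ : Measure ℝ) : Measurable fun y : ℝ => absCdf μ |y| :=
  (absCdf_mono μ).measurable.comp (by fun_prop)

/-- If `F` is continuous on `[0, ∞)` with `F 0 = 0`, then `F |x|` is uniformly distributed on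
`[0, 1]`. -/
lemma measure_absCdf_lt (μ : Measure ℝ) [IsProbabilityMeasure μ]
    (hF : ContinuousOn (absCdf μ) (Ici 0)) (h0 : absCdf μ 0 = 0) {m : ENNReal} (hm : m ≤ 1) :
    μ {y | absCdf μ |y| < m} = m := by
  apply le_antisymm
  · rcases hm.eq_or_lt with rfl | hm
    · exact prob_le_one
    · obtain ⟨w, hw, rfl⟩ := exists_absCdf_eq μ hF (c := m) (by simp [h0]) hm
      exact measure_mono fun y hy => ((absCdf_mono μ).reflect_lt hy).le
  · refine le_of_forall_lt fun c hc => ?_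
    -- A value strictly between `c` and `m` keeps the inequality strict.
    obtain ⟨d, hcd, hdm⟩ := exists_between hc
    obtain ⟨w, hw, rfl⟩ := exists_absCdf_eq μ hF (c := d) (by simp [h0]) (hdm.trans_le hm)
    exact hcd.trans_le (measure_mono fun y hy => (absCdf_mono μ hy).trans_lt hdm)

/-- Raising the dimension by one, by replacing each slice with an interval of equal measure. -/
lemma SIneqF.succ {μ : Measure ℝ} [IsProbabilityMeasure μ] (h2 : SIneqF μ 2)
    (hF : ContinuousOn (absCdf μ) (Ici 0)) (h0 : absCdf μ 0 = 0) {n : ℕ} (hn : SIneqF μ n) :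
    SIneqF μ (n + 1) := by
  intro K hK hI w hw he t ht
  set m : ℝ → ENNReal := fun x => (Measure.pi fun _ : Fin n => μ) (slice K x) with hm
  have hm1 (x : ℝ) : m x ≤ 1 := prob_le_one
  have ht0 : 0 < t := by linarith
  set L : Set (Fin 2 → ℝ) := {z | absCdf μ |z 1| < m (z 0)} with hL
  have hLm : MeasurableSet L :=
    measurableSet_lt ((measurable_absCdf_abs μ).comp (measurable_pi_apply 1))
      ((measurable_measure_slice μ hK).comp (measurable_pi_apply 0))
  have hLI : IsIdeal L := fun z hz y hy =>
    ((absCdf_mono μ (hy 1)).trans_lt hz).trans_le (measure_mono (hI.slice_anti (hy 0)))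
  have hLs (x : ℝ) : slice L x = {y | y 0 ∈ {y : ℝ | absCdf μ |y| < m x}} := rfl
  have hlt (x : ℝ) : MeasurableSet {y : ℝ | absCdf μ |y| < m x} :=
    measurableSet_lt (measurable_absCdf_abs μ) measurable_const
  have hLK : (Measure.pi fun _ : Fin 2 => μ) L = absCdf μ w := by
    rw [← he, pi_eq_lintegral_slice μ hLm, pi_eq_lintegral_slice μ hK]
    refine lintegral_congr fun x => ?_
    rw [hLs, pi_eval μ 0 (hlt x), measure_absCdf_lt μ hF h0 (hm1 x)]
  refine (h2 L hLm hLI w hw hLK t ht).trans ?_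
  rw [pi_eq_lintegral_slice μ (hLm.const_smul_of_ne_zero ht0.ne'),
    pi_eq_lintegral_slice μ (hK.const_smul_of_ne_zero ht0.ne')]
  refine lintegral_mono fun x => ?_
  simp only [slice_smul _ ht]
  generalize t⁻¹ * x = u
  rcases (hm1 u).eq_or_lt with h1 | h1
  · calc _ ≤ (1 : ENNReal) := prob_le_one
      _ = m u := h1.symm
      _ ≤ _ := measure_mono ((hI.slice u).subset_smul ht)
  · obtain ⟨v, hv, hve⟩ := exists_absCdf_eq μ hF (c := m u) (by simp [h0]) h1
    refine le_trans ?_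
      (hn (slice K u) (measurableSet_slice hK u) (hI.slice u) v hv hve.symm t ht)
    have hsub : slice L u ⊆ {y | |y 0| ≤ v} := by
      intro y hy
      rw [hLs, ← hve] at hy
      exact ((absCdf_mono μ).reflect_lt hy).le
    calc _ ≤ (Measure.pi fun _ : Fin 1 => μ) (t • {y | |y 0| ≤ v}) :=
          measure_mono (smul_set_mono hsub)
      _ = absCdf μ (t * v) := by
          rw [smul_strip 0 ht]
          exact pi_eval μ 0 (measurableSet_abs_le _)

/-- The degenerate case: all the mass is at the origin, which lies in every nonempty ideal. -/
lemma sIneqF_of_singleton {μ : Measure ℝ} [IsProbabilityMeasure μ] (h : μ {0} = 1) (n : ℕ) :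
    SIneqF μ n := by
  intro K hK hI w hw he t ht
  have hne : K.Nonempty := by
    rw [nonempty_iff_ne_empty]
    rintro rfl
    rw [measure_empty] at he
    have : μ {0} ≤ absCdf μ w := measure_mono (by simpa using hw)
    rw [h, ← he] at this
    simp at this
  obtain ⟨x, hx⟩ := hne
  have hpi : (Measure.pi fun _ : Fin n => μ) (univ.pi fun _ => {0}) = 1 := by
    rw [Measure.pi_pi]; simp [h]
  calc absCdf μ (t * w) ≤ 1 := prob_le_one
    _ = _ := hpi.symm
    _ ≤ _ := measure_mono fun y hy => hI.subset_smul ht (hI x hx y fun i => by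
      have : y i = 0 := hy i (mem_univ i)
      simp [this])

/-- **Induction on the dimension.** If the twofold product `μ ⊗ μ` of a Borel probability
measure `μ` on `ℝ` supports the S-inequality for all ideals in `ℝ²`, then for every `n ≥ 2`
the `n`-fold product `μⁿ` supports the S-inequality for all ideals in `ℝⁿ`. -/
theorem sIneq_induction (μ : Measure ℝ) [IsProbabilityMeasure μ]
    (h2 : SupportsSIneq (Measure.pi fun _ : Fin 2 => μ)) :
    ∀ n : ℕ, 2 ≤ n → ∀ inst : NeZero n,
      @SupportsSIneq n inst (Measure.pi fun _ : Fin n => μ) := by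
  have h2' : SIneqF μ 2 := (supportsSIneq_iff μ 2 _).1 h2
  have hF := continuousOn_absCdf μ fun a ha => measure_abs_eq_zero μ h2' ha
  intro n hn inst
  rw [supportsSIneq_iff]
  rcases measure_zero_singleton μ h2' hF with h | h
  · have h0 : absCdf μ 0 = 0 := by
      rw [← h]; unfold absCdf; congr 1; ext x; simp
    clear inst
    induction n, hn using Nat.le_induction with
    | base => exact h2'
    | succ n _ ih => exact h2'.succ hF h0 ih
  · exact sIneqF_of_singleton h n
end
end

section
/- Let p ∈ (0,1], c_p = 1/Γ(1+1/p), and let μ_+ be the probability measure with density c_p·e^{−x^p} on [0,∞). Define T(u) = c_p·∫_u^∞ e^{−x^p} dx, S(u) = c_p·∫_0^u x^p e^{−x^p} dx, and Φ = S ∘ T^{−1} : [0,1] → ℝ. Then for every nondecreasing function g : [0,∞) → [0,1]: ∫ Φ(g) dμ_+ − Φ(∫ g dμ_+) ≤ ∫_0^∞ g(x)·(x^p − 1/p) dμ_+(x). -/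
/-!
For a convex `Φ`, call `J(g) = ∫ Φ(g) dμ - Φ(∫ g dμ)` the `Φ`-entropy of `g`. The functional
inequality says `J(g) ≤ ∫ g(x) (x ^ p - 1 / p) dμ₊` for monotone `g`. The right-hand side is linear
in `g`, and for the indicator of a half-line `(a, ∞)` both sides equal
`1 / p - T(a) / p - S(a)` (`entropy_layer`). A monotone `g` with values in `[0, 1]` is the average
over `s ∈ [0, 1]` of the indicators of `{g ≥ s}`, which are half-lines, so it suffices that `J` is
convex.

Convexity of `J` holds because `1 / Φ''` is concave. Indeed `Φ'(t) = -u ^ p` and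
`1 / Φ''(t) = w(t) = (c_p / p) u ^ (1 - p) e ^ (-u ^ p)` with `u = T⁻¹(t)`, whence
`w'(t) = 1 - ((1 - p) / p) u ^ (-p)`, which is nonincreasing in `t` exactly because `p ≤ 1`
(`exists_second_deriv`). Concavity of `w` and the Cauchy–Schwarz inequality
`(∑ dᵢ)² / ∑ wᵢ ≤ ∑ dᵢ² / wᵢ` make the Hessian of the `n`-point Jensen gap
`x ↦ (1/n) ∑ Φ(xᵢ) - Φ((1/n) ∑ xᵢ)` nonnegative on `(0, 1)ⁿ`; by continuity the gap is convex on
`[0, 1]ⁿ` (`jensenGap_convexOn`), although `Φ'` blows up at `0`. Jensen's inequality for this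
function of `n` variables is precisely `J((1/n) ∑ fᵢ) ≤ (1/n) ∑ J(fᵢ)` (`entropy_mean_le`). Applying
it to the indicators of `{g ≥ i/n}`, whose average is `⌊n g⌋ / n`, and letting `n → ∞` gives the
result (`entropy_le_of_layers`).
-/

open MeasureTheory Real Set

noncomputable section

/-! ### Convexity of the Jensen gap when `1 / Φ''` is concave -/

/-- The `n`-point Jensen gap of `Φ`, as a function of the `n` points. -/
def jensenGap (Φ : ℝ → ℝ) (n : ℕ) (x : Fin n → ℝ) : ℝ :=
  (∑ i, Φ (x i)) / n - Φ ((∑ i, x i) / n)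

lemma continuous_jensenGap {Φ : ℝ → ℝ} (hc : Continuous Φ) (n : ℕ) :
    Continuous (jensenGap Φ n) := by
  unfold jensenGap
  fun_prop

lemma mean_mem_Ioo {n : ℕ} (hn : 0 < n) {x : Fin n → ℝ} (hx : ∀ i, x i ∈ Ioo (0 : ℝ) 1) :
    (∑ i, x i) / n ∈ Ioo (0 : ℝ) 1 := by
  have hn' : (0 : ℝ) < n := by exact_mod_cast hn
  have : Nonempty (Fin n) := ⟨⟨0, hn⟩⟩
  constructor
  · exact div_pos (Finset.sum_pos (fun i _ => (hx i).1) Finset.univ_nonempty) hn'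
  · rw [div_lt_one hn']
    calc ∑ i, x i < ∑ _i : Fin n, (1 : ℝ) :=
          Finset.sum_lt_sum_of_nonempty Finset.univ_nonempty (fun i _ => (hx i).2)
      _ = n := by simp

/-- The Hessian of the `n`-point Jensen gap is nonnegative, where `w = 1 / Φ''`: Sedrakyan's form of
Cauchy–Schwarz combined with concavity of `w`. -/
lemma second_variation_nonneg {w : ℝ → ℝ} (hw : ∀ t ∈ Ioo (0 : ℝ) 1, 0 < w t)
    (hwc : ConcaveOn ℝ (Ioo 0 1) w) {n : ℕ} (hn : 0 < n) {x : Fin n → ℝ}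
    (hx : ∀ i, x i ∈ Ioo (0 : ℝ) 1) (d : Fin n → ℝ) :
    0 ≤ (∑ i, d i ^ 2 / w (x i)) / n - ((∑ i, d i) / n) ^ 2 / w ((∑ i, x i) / n) := by
  have hn' : (0 : ℝ) < n := by exact_mod_cast hn
  have : Nonempty (Fin n) := ⟨⟨0, hn⟩⟩
  have hW : 0 < ∑ i, w (x i) :=
    Finset.sum_pos (fun i _ => hw _ (hx i)) Finset.univ_nonempty
  have h1 : (∑ i, w (x i)) / n ≤ w ((∑ i, x i) / n) := by
    have := hwc.le_map_sum (t := Finset.univ) (w := fun _ : Fin n => (1 / n : ℝ)) (p := x)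
      (fun i _ => by positivity) (by simp [hn'.ne']) (fun i _ => hx i)
    simp only [smul_eq_mul, ← Finset.mul_sum] at this
    rwa [one_div_mul_eq_div, one_div_mul_eq_div] at this
  have h2 := Finset.sq_sum_div_le_sum_sq_div (R := ℝ) Finset.univ d
    (g := fun i => w (x i)) (fun i _ => hw _ (hx i))
  have h3 : ((∑ i, d i) / n) ^ 2 / w ((∑ i, x i) / n)
      ≤ ((∑ i, d i) / n) ^ 2 / ((∑ i, w (x i)) / n) :=
    div_le_div_of_nonneg_left (sq_nonneg _) (by positivity) h1
  have h4 : ((∑ i, d i) / n) ^ 2 / ((∑ i, w (x i)) / n) = (∑ i, d i) ^ 2 / (∑ i, w (x i)) / n := by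
    field_simp
  have h5 := div_le_div_of_nonneg_right h2 hn'.le
  linarith

lemma jensenGap_convexOn_line {Φ Φ' w : ℝ → ℝ} (hc : Continuous Φ)
    (h1 : ∀ t ∈ Ioo (0 : ℝ) 1, HasDerivAt Φ (Φ' t) t)
    (h2 : ∀ t ∈ Ioo (0 : ℝ) 1, HasDerivAt Φ' (w t)⁻¹ t)
    (hw : ∀ t ∈ Ioo (0 : ℝ) 1, 0 < w t) (hwc : ConcaveOn ℝ (Ioo 0 1) w)
    {n : ℕ} (hn : 0 < n) {x y : Fin n → ℝ}
    (hx : ∀ i, x i ∈ Ioo (0 : ℝ) 1) (hy : ∀ i, y i ∈ Ioo (0 : ℝ) 1) :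
    ConvexOn ℝ (Icc 0 1) (fun t : ℝ => jensenGap Φ n (fun i => x i + t * (y i - x i))) := by
  have hmem : ∀ t ∈ Ioo (0 : ℝ) 1, ∀ i, x i + t * (y i - x i) ∈ Ioo (0 : ℝ) 1 := by
    intro t ht i
    have := (convex_Ioo (0 : ℝ) 1).add_smul_sub_mem (hx i) (hy i) ⟨ht.1.le, ht.2.le⟩
    simpa using this
  have hline : ∀ (t : ℝ) (i : Fin n), HasDerivAt (fun t => x i + t * (y i - x i)) (y i - x i) t := by
    intro t i
    simpa using ((hasDerivAt_id t).mul_const (y i - x i)).const_add (x i)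
  have hmean : ∀ t : ℝ, HasDerivAt (fun t => (∑ i, (x i + t * (y i - x i))) / n)
      ((∑ i, (y i - x i)) / n) t := by
    intro t
    exact (HasDerivAt.fun_sum (fun i _ => hline t i)).div_const _
  refine convexOn_of_hasDerivWithinAt2_nonneg (convex_Icc 0 1)
    (f' := fun t => (∑ i, Φ' (x i + t * (y i - x i)) * (y i - x i)) / n
      - Φ' ((∑ i, (x i + t * (y i - x i))) / n) * ((∑ i, (y i - x i)) / n))
    (f'' := fun t => (∑ i, (w (x i + t * (y i - x i)))⁻¹ * (y i - x i) * (y i - x i)) / n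
      - (w ((∑ i, (x i + t * (y i - x i))) / n))⁻¹ * ((∑ i, (y i - x i)) / n)
        * ((∑ i, (y i - x i)) / n)) ?_ ?_ ?_ ?_
  · have := continuous_jensenGap hc n
    exact Continuous.continuousOn (by fun_prop)
  · rw [interior_Icc]
    intro t ht
    unfold jensenGap
    refine HasDerivAt.hasDerivWithinAt (HasDerivAt.sub ?_ ?_)
    · exact (HasDerivAt.fun_sum (fun i _ => (h1 _ (hmem t ht i)).comp t (hline t i))).div_const _
    · exact (h1 _ (mean_mem_Ioo hn (hmem t ht))).comp t (hmean t)
  · rw [interior_Icc]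
    intro t ht
    refine HasDerivAt.hasDerivWithinAt (HasDerivAt.sub ?_ ?_)
    · exact (HasDerivAt.fun_sum (fun i _ => ((h2 _ (hmem t ht i)).comp t
        (hline t i)).mul_const _)).div_const _
    · exact ((h2 _ (mean_mem_Ioo hn (hmem t ht))).comp t (hmean t)).mul_const _
  · rw [interior_Icc]
    intro t ht
    have := second_variation_nonneg hw hwc hn (hmem t ht) (fun i => y i - x i)
    convert this using 2
    · congr 1
      exact Finset.sum_congr rfl fun i _ => by ring
    · ring

/-- Convexity on the open cube passes to the closed cube by continuity. -/
lemma jensenGap_convexOn {Φ Φ' w : ℝ → ℝ} (hc : Continuous Φ)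
    (h1 : ∀ t ∈ Ioo (0 : ℝ) 1, HasDerivAt Φ (Φ' t) t)
    (h2 : ∀ t ∈ Ioo (0 : ℝ) 1, HasDerivAt Φ' (w t)⁻¹ t)
    (hw : ∀ t ∈ Ioo (0 : ℝ) 1, 0 < w t) (hwc : ConcaveOn ℝ (Ioo 0 1) w)
    {n : ℕ} (hn : 0 < n) :
    ConvexOn ℝ (univ.pi fun _ : Fin n => Icc (0 : ℝ) 1) (jensenGap Φ n) := by
  refine ⟨convex_pi fun i _ => convex_Icc 0 1, ?_⟩
  intro x hx y hy a b ha hb hab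
  have hcl : closure ((univ.pi fun _ : Fin n => Ioo (0 : ℝ) 1) ×ˢ
      (univ.pi fun _ : Fin n => Ioo (0 : ℝ) 1)) =
      (univ.pi fun _ : Fin n => Icc (0 : ℝ) 1) ×ˢ (univ.pi fun _ : Fin n => Icc (0 : ℝ) 1) := by
    rw [closure_prod_eq, closure_pi_set]
    simp only [closure_Ioo (zero_ne_one' ℝ)]
  have hJ := continuous_jensenGap hc n
  refine le_on_closure (s := (univ.pi fun _ : Fin n => Ioo (0 : ℝ) 1) ×ˢ
      (univ.pi fun _ : Fin n => Ioo (0 : ℝ) 1))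
    (f := fun q : (Fin n → ℝ) × (Fin n → ℝ) => jensenGap Φ n (a • q.1 + b • q.2))
    (g := fun q => a • jensenGap Φ n q.1 + b • jensenGap Φ n q.2)
    ?_ (Continuous.continuousOn (by fun_prop)) (Continuous.continuousOn (by fun_prop))
    (x := (x, y)) (hcl ▸ ⟨hx, hy⟩)
  rintro ⟨u, v⟩ ⟨hu, hv⟩
  have := (jensenGap_convexOn_line hc h1 h2 hw hwc hn (fun i => hu i trivial)
    (fun i => hv i trivial)).2 (x := 0) (by simp) (y := 1) (by simp) ha hb hab
  simp only [smul_eq_mul, mul_zero, mul_one, zero_add, zero_mul, add_zero, one_mul,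
    add_sub_cancel] at this
  have e : a • u + b • v = fun i => u i + b * (v i - u i) := by
    ext i
    obtain rfl : a = 1 - b := by linarith
    simp
    ring
  simp only [smul_eq_mul]
  rw [e]
  exact this

/-! ### Convexity of the entropy and reduction to superlevel sets -/

/-- The `Φ`-entropy `g ↦ ∫ Φ(g) - Φ(∫ g)` of an average is at most the average of the entropies. -/
lemma entropy_mean_le {Ω : Type*} [MeasurableSpace Ω] {μ : Measure Ω} [IsProbabilityMeasure μ]
    {Φ Φ' w : ℝ → ℝ} (hc : Continuous Φ)
    (h1 : ∀ t ∈ Ioo (0 : ℝ) 1, HasDerivAt Φ (Φ' t) t)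
    (h2 : ∀ t ∈ Ioo (0 : ℝ) 1, HasDerivAt Φ' (w t)⁻¹ t)
    (hw : ∀ t ∈ Ioo (0 : ℝ) 1, 0 < w t) (hwc : ConcaveOn ℝ (Ioo 0 1) w)
    {n : ℕ} (hn : 0 < n) {f : Fin n → Ω → ℝ} (hfm : ∀ i, Measurable (f i))
    (hf : ∀ i x, f i x ∈ Icc (0 : ℝ) 1) :
    ∫ x, Φ ((∑ i, f i x) / n) ∂μ - Φ (∫ x, (∑ i, f i x) / n ∂μ) ≤
      (∑ i, (∫ x, Φ (f i x) ∂μ - Φ (∫ x, f i x ∂μ))) / n := by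
  have hn' : (0 : ℝ) < n := by exact_mod_cast hn
  have hcon := jensenGap_convexOn hc h1 h2 hw hwc hn
  have hcomp : ∀ {h : Ω → ℝ}, Measurable h → (∀ x, h x ∈ Icc (0 : ℝ) 1) →
      Integrable (fun x => Φ (h x)) μ := by
    intro h hm hh
    obtain ⟨C, hC⟩ := isCompact_Icc.exists_bound_of_continuousOn (s := Icc (0 : ℝ) 1) hc.continuousOn
    exact Integrable.of_bound (hc.measurable.comp hm).aestronglyMeasurable C
      (Filter.Eventually.of_forall fun x => hC _ (hh x))
  have hint : ∀ i, Integrable (f i) μ := fun i =>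
    Integrable.of_bound (hfm i).aestronglyMeasurable 1 (Filter.Eventually.of_forall fun x => by
      rw [norm_eq_abs, abs_le]; exact ⟨by linarith [(hf i x).1], (hf i x).2⟩)
  have hmean : ∀ x, (∑ i, f i x) / n ∈ Icc (0 : ℝ) 1 := by
    intro x
    refine ⟨div_nonneg (Finset.sum_nonneg fun i _ => (hf i x).1) hn'.le, ?_⟩
    rw [div_le_one hn']
    calc ∑ i, f i x ≤ ∑ _i : Fin n, (1 : ℝ) := Finset.sum_le_sum (fun i _ => (hf i x).2)
      _ = n := by simp
  have hI1 : ∀ i, Integrable (fun x => Φ (f i x)) μ := fun i => hcomp (hfm i) (hf i)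
  have hI2 : Integrable (fun x => Φ ((∑ i, f i x) / n)) μ := hcomp (by fun_prop) hmean
  have hI3 : Integrable (fun x => (∑ i, Φ (f i x)) / n) μ :=
    (integrable_finsetSum _ fun i _ => hI1 i).div_const _
  have hvec : Integrable (fun x i => f i x) μ := Integrable.of_eval hint
  have hJ := hcon.map_integral_le (μ := μ) (f := fun x i => f i x)
    (continuous_jensenGap hc n).continuousOn (isClosed_set_pi fun i _ => isClosed_Icc)
    (Filter.Eventually.of_forall fun x i _ => hf i x) hvec (hI3.sub hI2)
  have hev : ∀ i, (∫ x, (fun i => f i x) ∂μ) i = ∫ x, f i x ∂μ := fun i =>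
    eval_integral hint i
  unfold jensenGap at hJ
  simp only [hev] at hJ
  rw [integral_sub hI3 hI2, integral_div, integral_finsetSum _ (fun i _ => hI1 i)] at hJ
  rw [integral_div, integral_finsetSum _ (fun i _ => hint i), Finset.sum_sub_distrib, sub_div]
  linarith

/-- The number of `i < n` with `(i + 1) / n ≤ y` is `⌊n y⌋`. -/
lemma sum_layers_eq_floor {n : ℕ} (hn : 0 < n) {y : ℝ} (hy : y ∈ Icc (0 : ℝ) 1) :
    (∑ i : Fin n, if ((i : ℕ) + 1 : ℝ) / n ≤ y then (1 : ℝ) else 0) = ⌊(n : ℝ) * y⌋₊ := by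
  have hn' : (0 : ℝ) < n := by exact_mod_cast hn
  have hny : 0 ≤ (n : ℝ) * y := mul_nonneg hn'.le hy.1
  rw [Fin.sum_univ_eq_sum_range (fun i : ℕ => if ((i : ℕ) + 1 : ℝ) / n ≤ y then (1 : ℝ) else 0) n,
    Finset.sum_boole]
  have hle : ⌊(n : ℝ) * y⌋₊ ≤ n := by
    have : (n : ℝ) * y ≤ n := by nlinarith [hy.2]
    exact_mod_cast (Nat.floor_le hny).trans this
  have : Finset.filter (fun i : ℕ => ((i : ℕ) + 1 : ℝ) / n ≤ y) (Finset.range n)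
      = Finset.range ⌊(n : ℝ) * y⌋₊ := by
    ext i
    rw [Finset.mem_filter, Finset.mem_range, Finset.mem_range, div_le_iff₀ hn', mul_comm y]
    have : ((i : ℝ) + 1 ≤ n * y) ↔ i + 1 ≤ ⌊(n : ℝ) * y⌋₊ := by
      rw [Nat.le_floor_iff hny]; push_cast; rfl
    rw [this]
    omega
  rw [this, Finset.card_range]

/-- If the `Φ`-entropy of the indicator of every superlevel set of `g` is bounded by the integral
of `l` over that set, then the `Φ`-entropy of `g` is bounded by `∫ g l`: approximate `g` by the
averages of `n` superlevel indicators. -/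
lemma entropy_le_of_layers {Ω : Type*} [MeasurableSpace Ω] {μ : Measure Ω} [IsProbabilityMeasure μ]
    {Φ Φ' w : ℝ → ℝ} (hc : Continuous Φ)
    (h1 : ∀ t ∈ Ioo (0 : ℝ) 1, HasDerivAt Φ (Φ' t) t)
    (h2 : ∀ t ∈ Ioo (0 : ℝ) 1, HasDerivAt Φ' (w t)⁻¹ t)
    (hw : ∀ t ∈ Ioo (0 : ℝ) 1, 0 < w t) (hwc : ConcaveOn ℝ (Ioo 0 1) w)
    {g l : Ω → ℝ} (hgm : Measurable g) (hg : ∀ x, g x ∈ Icc (0 : ℝ) 1) (hl : Integrable l μ)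
    (hlayer : ∀ c : ℝ, ∫ x, Φ (if c ≤ g x then 1 else 0) ∂μ
        - Φ (∫ x, (if c ≤ g x then 1 else 0) ∂μ) ≤ ∫ x, (if c ≤ g x then 1 else 0) * l x ∂μ) :
    ∫ x, Φ (g x) ∂μ - Φ (∫ x, g x ∂μ) ≤ ∫ x, g x * l x ∂μ := by
  set f : ℕ → ℕ → Ω → ℝ := fun n i x => if ((i : ℕ) + 1 : ℝ) / n ≤ g x then (1 : ℝ) else 0 with hf
  have hfm : ∀ n i, Measurable (f n i) := fun n i =>
    Measurable.ite (measurableSet_le measurable_const hgm) measurable_const measurable_const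
  have hf01 : ∀ n i x, f n i x ∈ Icc (0 : ℝ) 1 := by
    intro n i x; simp only [hf]; split_ifs <;> simp
  set G : ℕ → Ω → ℝ := fun n x => (∑ i : Fin (n + 1), f (n + 1) i x) / ((n + 1 : ℕ) : ℝ) with hG
  have hGm : ∀ n, Measurable (G n) := fun n =>
    (Finset.measurable_fun_sum _ fun i _ => hfm _ _).div_const _
  have hpos : ∀ n : ℕ, (0 : ℝ) < ((n + 1 : ℕ) : ℝ) := fun n => by positivity
  have hGe : ∀ n x, G n x = ⌊((n + 1 : ℕ) : ℝ) * g x⌋₊ / ((n + 1 : ℕ) : ℝ) := fun n x => by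
    simp only [hG, hf]
    rw [sum_layers_eq_floor n.succ_pos (hg x)]
  have hGub : ∀ n x, G n x ≤ g x := fun n x => by
    rw [hGe, div_le_iff₀ (hpos n), mul_comm (g x)]
    exact Nat.floor_le (mul_nonneg (hpos n).le (hg x).1)
  have hG01 : ∀ n x, G n x ∈ Icc (0 : ℝ) 1 := fun n x =>
    ⟨by rw [hGe]; positivity, (hGub n x).trans (hg x).2⟩
  have hGlim : ∀ x, Filter.Tendsto (fun n => G n x) Filter.atTop (nhds (g x)) := by
    intro x
    have h0 : Filter.Tendsto (fun n : ℕ => g x - 1 / ((n : ℝ) + 1)) Filter.atTop (nhds (g x)) := by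
      simpa using tendsto_one_div_add_atTop_nhds_zero_nat.const_sub (g x)
    refine tendsto_of_tendsto_of_tendsto_of_le_of_le h0 tendsto_const_nhds (fun n => ?_)
      (fun n => hGub n x)
    have := Nat.lt_floor_add_one (((n + 1 : ℕ) : ℝ) * g x)
    simp only [hGe]
    rw [le_div_iff₀ (hpos n)]
    have h3 : 1 / ((n : ℝ) + 1) * ((n + 1 : ℕ) : ℝ) = 1 := by push_cast; field_simp
    nlinarith
  obtain ⟨C, hC⟩ := isCompact_Icc.exists_bound_of_continuousOn (s := Icc (0 : ℝ) 1) hc.continuousOn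
  have hlim1 : Filter.Tendsto (fun n => ∫ x, Φ (G n x) ∂μ) Filter.atTop
      (nhds (∫ x, Φ (g x) ∂μ)) :=
    tendsto_integral_of_dominated_convergence (fun _ => C)
      (fun n => (hc.measurable.comp (hGm n)).aestronglyMeasurable) (integrable_const _)
      (fun n => Filter.Eventually.of_forall fun x => hC _ (hG01 n x))
      (Filter.Eventually.of_forall fun x => (hc.tendsto _).comp (hGlim x))
  have hlim2 : Filter.Tendsto (fun n => ∫ x, G n x ∂μ) Filter.atTop (nhds (∫ x, g x ∂μ)) :=
    tendsto_integral_of_dominated_convergence (fun _ => 1)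
      (fun n => (hGm n).aestronglyMeasurable) (integrable_const _)
      (fun n => Filter.Eventually.of_forall fun x => by
        rw [norm_eq_abs, abs_of_nonneg (hG01 n x).1]; exact (hG01 n x).2)
      (Filter.Eventually.of_forall hGlim)
  have hlim3 : Filter.Tendsto (fun n => ∫ x, G n x * l x ∂μ) Filter.atTop
      (nhds (∫ x, g x * l x ∂μ)) :=
    tendsto_integral_of_dominated_convergence (fun x => |l x|)
      (fun n => (hGm n).aestronglyMeasurable.mul hl.aestronglyMeasurable) hl.abs
      (fun n => Filter.Eventually.of_forall fun x => by
        rw [norm_eq_abs, abs_mul, abs_of_nonneg (hG01 n x).1]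
        exact mul_le_of_le_one_left (abs_nonneg _) (hG01 n x).2)
      (Filter.Eventually.of_forall fun x => (hGlim x).mul_const _)
  refine le_of_tendsto_of_tendsto' (hlim1.sub ((hc.tendsto _).comp hlim2)) hlim3 fun n => ?_
  have hmain := entropy_mean_le (μ := μ) hc h1 h2 hw hwc n.succ_pos
    (f := fun i : Fin (n + 1) => f (n + 1) i) (fun i => hfm _ _) (fun i x => hf01 _ _ x)
  have hfl : ∀ i : Fin (n + 1), Integrable (fun x => f (n + 1) i x * l x) μ := fun i =>
    hl.bdd_mul (c := 1) (hfm _ _).aestronglyMeasurable (Filter.Eventually.of_forall fun x => by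
      rw [norm_eq_abs, abs_of_nonneg (hf01 _ _ x).1]; exact (hf01 _ _ x).2)
  calc _ ≤ _ := hmain
    _ ≤ (∑ i : Fin (n + 1), ∫ x, f (n + 1) i x * l x ∂μ) / ((n + 1 : ℕ) : ℝ) :=
        div_le_div_of_nonneg_right (Finset.sum_le_sum fun i _ => hlayer _) (hpos n).le
    _ = ∫ x, G n x * l x ∂μ := by
        rw [← integral_finsetSum _ (fun i _ => hfl i), ← integral_div]
        refine integral_congr_ae (Filter.Eventually.of_forall fun x => ?_)
        simp only [hG]
        rw [div_mul_eq_mul_div, Finset.sum_mul]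

/-! ### The functions `T`, `S` and `Φ` -/

/-- The normalising constant `c_p`. -/
def normConst (p : ℝ) : ℝ := 1 / Real.Gamma (1 + 1 / p)

/-- The tail function `T`, written as `1 - c_p ∫_0^u` so that it is differentiable and strictly
decreasing on the whole line. -/
def tailFn (p u : ℝ) : ℝ := 1 - normConst p * ∫ x in (0 : ℝ)..u, Real.exp (-(x ^ p))

/-- The truncated moment `S`. -/
def momFn (p u : ℝ) : ℝ := normConst p * ∫ x in (0 : ℝ)..u, x ^ p * Real.exp (-(x ^ p))

section Analytic

variable {p : ℝ}

lemma normConst_pos (hp : 0 < p) : 0 < normConst p := by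
  unfold normConst
  have : 0 < Real.Gamma (1 + 1 / p) := Real.Gamma_pos_of_pos (by positivity)
  positivity

lemma continuous_dens (hp : 0 < p) : Continuous fun x : ℝ => Real.exp (-(x ^ p)) := by
  have := Real.continuous_rpow_const hp.le
  fun_prop

lemma continuous_momDens (hp : 0 < p) : Continuous fun x : ℝ => x ^ p * Real.exp (-(x ^ p)) := by
  have := Real.continuous_rpow_const hp.le
  fun_prop

lemma integrableOn_dens (hp : 0 < p) : IntegrableOn (fun x : ℝ => Real.exp (-(x ^ p))) (Ioi 0) := by
  simpa using integrableOn_rpow_mul_exp_neg_rpow (s := 0) (p := p) (by norm_num) hp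

lemma integrableOn_momDens (hp : 0 < p) :
    IntegrableOn (fun x : ℝ => x ^ p * Real.exp (-(x ^ p))) (Ioi 0) :=
  integrableOn_rpow_mul_exp_neg_rpow (by linarith) hp

lemma normConst_mul_integral_dens (hp : 0 < p) :
    normConst p * ∫ x in Ioi (0 : ℝ), Real.exp (-(x ^ p)) = 1 := by
  rw [integral_exp_neg_rpow hp, normConst, add_comm]
  have : 0 < Real.Gamma (1 / p + 1) := Real.Gamma_pos_of_pos (by positivity)
  field_simp

lemma normConst_mul_integral_momDens (hp : 0 < p) :
    normConst p * ∫ x in Ioi (0 : ℝ), x ^ p * Real.exp (-(x ^ p)) = 1 / p := by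
  rw [integral_rpow_mul_exp_neg_rpow hp (by linarith), normConst, add_div, div_self hp.ne']
  have : 0 < Real.Gamma (1 + 1 / p) := Real.Gamma_pos_of_pos (by positivity)
  field_simp

lemma normConst_mul_tail_dens (hp : 0 < p) {u : ℝ} (hu : 0 ≤ u) :
    normConst p * ∫ x in Ioi u, Real.exp (-(x ^ p)) = tailFn p u := by
  have := intervalIntegral.integral_interval_add_Ioi (integrableOn_dens hp)
    ((integrableOn_dens hp).mono_set (Ioi_subset_Ioi hu))
  rw [tailFn, ← normConst_mul_integral_dens hp, ← this]
  ring

lemma normConst_mul_tail_momDens (hp : 0 < p) {u : ℝ} (hu : 0 ≤ u) :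
    normConst p * ∫ x in Ioi u, x ^ p * Real.exp (-(x ^ p)) = 1 / p - momFn p u := by
  have := intervalIntegral.integral_interval_add_Ioi (integrableOn_momDens hp)
    ((integrableOn_momDens hp).mono_set (Ioi_subset_Ioi hu))
  rw [momFn, ← normConst_mul_integral_momDens hp, ← this]
  ring

lemma hasDerivAt_tailFn (hp : 0 < p) (u : ℝ) :
    HasDerivAt (tailFn p) (-(normConst p * Real.exp (-(u ^ p)))) u :=
  (((continuous_dens hp).integral_hasStrictDerivAt 0 u).hasDerivAt.const_mul _).const_sub 1

lemma hasDerivAt_momFn (hp : 0 < p) (u : ℝ) :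
    HasDerivAt (momFn p) (normConst p * (u ^ p * Real.exp (-(u ^ p)))) u :=
  ((continuous_momDens hp).integral_hasStrictDerivAt 0 u).hasDerivAt.const_mul _

lemma strictAnti_tailFn (hp : 0 < p) : StrictAnti (tailFn p) := by
  refine strictAnti_of_deriv_neg fun u => ?_
  rw [(hasDerivAt_tailFn hp u).deriv]
  have := normConst_pos hp
  have := mul_pos this (Real.exp_pos (-(u ^ p)))
  linarith

lemma continuous_tailFn (hp : 0 < p) : Continuous (tailFn p) :=
  continuous_iff_continuousAt.2 fun u => (hasDerivAt_tailFn hp u).continuousAt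

lemma continuous_momFn (hp : 0 < p) : Continuous (momFn p) :=
  continuous_iff_continuousAt.2 fun u => (hasDerivAt_momFn hp u).continuousAt

lemma monotoneOn_momFn (hp : 0 < p) : MonotoneOn (momFn p) (Ici 0) := by
  refine monotoneOn_of_deriv_nonneg (convex_Ici 0) (continuous_momFn hp).continuousOn
    (fun u _ => (hasDerivAt_momFn hp u).differentiableAt.differentiableWithinAt) fun u hu => ?_
  rw [interior_Ici] at hu
  rw [(hasDerivAt_momFn hp u).deriv]
  have := normConst_pos hp
  have := Real.rpow_nonneg (le_of_lt hu) p
  positivity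

@[simp] lemma tailFn_zero : tailFn p 0 = 1 := by simp [tailFn]

@[simp] lemma momFn_zero : momFn p 0 = 0 := by simp [momFn]

lemma tendsto_tailFn (hp : 0 < p) : Filter.Tendsto (tailFn p) Filter.atTop (nhds 0) := by
  have := ((intervalIntegral_tendsto_integral_Ioi 0 (integrableOn_dens hp)
    Filter.tendsto_id).const_mul (normConst p)).const_sub 1
  rw [normConst_mul_integral_dens hp, sub_self] at this
  exact this

lemma tendsto_momFn (hp : 0 < p) : Filter.Tendsto (momFn p) Filter.atTop (nhds (1 / p)) := by
  have := (intervalIntegral_tendsto_integral_Ioi 0 (integrableOn_momDens hp)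
    Filter.tendsto_id).const_mul (normConst p)
  rw [normConst_mul_integral_momDens hp] at this
  exact this

lemma tailFn_pos (hp : 0 < p) (u : ℝ) : 0 < tailFn p u :=
  ((strictAnti_tailFn hp).antitone.le_of_tendsto (tendsto_tailFn hp) (u + 1)).trans_lt
    (strictAnti_tailFn hp (by linarith))

lemma exists_tailFn_eq (hp : 0 < p) {t : ℝ} (ht : t ∈ Ioc (0 : ℝ) 1) :
    ∃ u, 0 ≤ u ∧ tailFn p u = t := by
  obtain ⟨v, hv, hv0⟩ := (((tendsto_tailFn hp).eventually_lt_const ht.1).and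
    (Filter.eventually_ge_atTop 0)).exists
  obtain ⟨u, hu, rfl⟩ := intermediate_value_Icc' hv0 (continuous_tailFn hp).continuousOn
    ⟨hv.le, by simpa using ht.2⟩
  exact ⟨u, hu.1, rfl⟩

lemma momFn_le (hp : 0 < p) {u : ℝ} (hu : 0 ≤ u) : momFn p u ≤ 1 / p :=
  ge_of_tendsto (tendsto_momFn hp) <| (Filter.eventually_ge_atTop u).mono fun _ hv =>
    monotoneOn_momFn hp hu (hu.trans hv) hv

lemma exists_momFn_eq (hp : 0 < p) {y : ℝ} (hy : y ∈ Ico (0 : ℝ) (1 / p)) :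
    ∃ u, 0 ≤ u ∧ momFn p u = y := by
  obtain ⟨v, hv, hv0⟩ := (((tendsto_momFn hp).eventually_const_lt hy.2).and
    (Filter.eventually_ge_atTop 0)).exists
  obtain ⟨u, hu, rfl⟩ := intermediate_value_Icc hv0 (continuous_momFn hp).continuousOn
    ⟨by simpa using hy.1, hv.le⟩
  exact ⟨u, hu.1, rfl⟩

/-- `Φ` is antitone from `[0, 1]` onto `[0, 1/p]`, hence continuous up to the endpoints. -/
lemma continuousOn_phi (hp : 0 < p) {Φ : ℝ → ℝ} (hΦ : ∀ u, 0 ≤ u → Φ (tailFn p u) = momFn p u)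
    (hΦ0 : Φ 0 = 1 / p) : ContinuousOn Φ (Icc 0 1) := by
  have hrange : ∀ t ∈ Icc (0 : ℝ) 1, Φ t ∈ Icc 0 (1 / p) := by
    intro t ht
    rcases ht.1.eq_or_lt with rfl | h0
    · rw [hΦ0]; exact ⟨by positivity, le_rfl⟩
    · obtain ⟨u, hu, rfl⟩ := exists_tailFn_eq hp ⟨h0, ht.2⟩
      rw [hΦ u hu]
      exact ⟨by simpa using monotoneOn_momFn hp self_mem_Ici hu hu, momFn_le hp hu⟩
  have hanti : AntitoneOn Φ (Icc 0 1) := by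
    intro s hs t ht hst
    rcases hs.1.eq_or_lt with rfl | h0
    · rw [hΦ0]; exact (hrange t ht).2
    · obtain ⟨a, ha, rfl⟩ := exists_tailFn_eq hp ⟨h0, hs.2⟩
      obtain ⟨b, hb, rfl⟩ := exists_tailFn_eq hp ⟨h0.trans_le hst, ht.2⟩
      rw [hΦ a ha, hΦ b hb]
      exact monotoneOn_momFn hp hb ha ((strictAnti_tailFn hp).le_iff_ge.1 hst)
  let ψ : Icc (0 : ℝ) 1 → Icc (0 : ℝ) (1 / p) := fun t =>
    ⟨1 / p - Φ t, by linarith [(hrange t t.2).2], by linarith [(hrange t t.2).1]⟩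
  have hmono : Monotone ψ := fun s t hst => by
    have := hanti s.2 t.2 hst
    change 1 / p - Φ s ≤ 1 / p - Φ t
    linarith
  have hsurj : Function.Surjective ψ := by
    rintro ⟨y, hy0, hy1⟩
    rcases hy0.eq_or_lt with rfl | h0
    · exact ⟨⟨0, by simp⟩, Subtype.ext (by simp [ψ, hΦ0])⟩
    · obtain ⟨u, hu, he⟩ := exists_momFn_eq hp (y := 1 / p - y) ⟨by linarith, by linarith⟩
      refine ⟨⟨tailFn p u, (tailFn_pos hp u).le, ?_⟩, Subtype.ext ?_⟩
      · simpa using (strictAnti_tailFn hp).antitone hu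
      · simp [ψ, hΦ u hu, he]
  have hψ := continuous_subtype_val.comp (hmono.continuous_of_surjective hsurj)
  rw [continuousOn_iff_continuous_domRestrict]
  have : (Icc (0 : ℝ) 1).domRestrict Φ = fun t => 1 / p - (ψ t : ℝ) := by
    ext t; simp [ψ]
  rw [this]
  exact continuous_const.sub hψ

/-- With `u = T⁻¹(t)` one has `Φ'(t) = -u ^ p` and
`1 / Φ''(t) = w(t) = (c_p / p) u ^ (1 - p) e ^ (-u ^ p)`.
Since `w'(t) = 1 - ((1 - p) / p) u ^ (-p)` and `u` decreases in `t`, `w` is concave for `p ≤ 1`. -/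
lemma exists_second_deriv (hp : 0 < p) (hp1 : p ≤ 1) {Φ : ℝ → ℝ}
    (hΦ : ∀ u, 0 ≤ u → Φ (tailFn p u) = momFn p u) :
    ∃ Φ' w : ℝ → ℝ, (∀ t ∈ Ioo (0 : ℝ) 1, HasDerivAt Φ (Φ' t) t) ∧
      (∀ t ∈ Ioo (0 : ℝ) 1, HasDerivAt Φ' (w t)⁻¹ t) ∧
      (∀ t ∈ Ioo (0 : ℝ) 1, 0 < w t) ∧ ConcaveOn ℝ (Ioo 0 1) w := by
  have hc := normConst_pos hp
  have hex : ∀ t : ℝ, ∃ u, t ∈ Ioo (0 : ℝ) 1 → 0 < u ∧ tailFn p u = t := by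
    intro t
    by_cases ht : t ∈ Ioo (0 : ℝ) 1
    · obtain ⟨u, hu, rfl⟩ := exists_tailFn_eq hp ⟨ht.1, ht.2.le⟩
      refine ⟨u, fun _ => ⟨hu.lt_of_ne ?_, rfl⟩⟩
      rintro rfl
      simp at ht
    · exact ⟨0, fun h => absurd h ht⟩
  choose U hU using hex
  have hUpos : ∀ t ∈ Ioo (0 : ℝ) 1, 0 < U t := fun t ht => (hU t ht).1
  have hUanti : StrictAntiOn U (Ioo 0 1) := by
    intro s hs t ht hst
    rw [← (strictAnti_tailFn hp).lt_iff_gt, (hU s hs).2, (hU t ht).2]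
    exact hst
  have hUimg : (fun t => -U t) '' Ioo 0 1 = Iio 0 := by
    ext v
    constructor
    · rintro ⟨t, ht, rfl⟩
      simpa using hUpos t ht
    · intro hv
      have hv' : (0 : ℝ) < -v := by simpa using hv
      have hmem : tailFn p (-v) ∈ Ioo (0 : ℝ) 1 :=
        ⟨tailFn_pos hp _, by simpa using strictAnti_tailFn hp hv'⟩
      refine ⟨tailFn p (-v), hmem, ?_⟩
      have := (strictAnti_tailFn hp).injective (hU _ hmem).2
      simp [this]
  have hnhds : ∀ t ∈ Ioo (0 : ℝ) 1, Ioo (0 : ℝ) 1 ∈ nhds t := fun t ht => isOpen_Ioo.mem_nhds ht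
  have hUcont : ∀ t ∈ Ioo (0 : ℝ) 1, ContinuousAt U t := by
    intro t ht
    have hneg : ContinuousAt (fun t => -U t) t := by
      refine StrictMonoOn.continuousAt_of_image_mem_nhds (s := Ioo 0 1)
        (fun a ha b hb hab => neg_lt_neg (hUanti ha hb hab)) (hnhds t ht) ?_
      rw [hUimg]
      exact Iio_mem_nhds (by simpa using hUpos t ht)
    exact hneg.neg.congr (Filter.Eventually.of_forall fun s => neg_neg (U s))
  have hUder : ∀ t ∈ Ioo (0 : ℝ) 1,
      HasDerivAt U (-(normConst p * Real.exp (-(U t ^ p))))⁻¹ t := by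
    intro t ht
    refine HasDerivAt.of_local_left_inverse (hUcont t ht) (hasDerivAt_tailFn hp (U t)) ?_ ?_
    · exact neg_ne_zero.2 (mul_pos hc (Real.exp_pos _)).ne'
    · exact Filter.eventually_of_mem (hnhds t ht) fun s hs => (hU s hs).2
  have hΦder : ∀ t ∈ Ioo (0 : ℝ) 1, HasDerivAt Φ (-(U t ^ p)) t := by
    intro t ht
    have h := (hasDerivAt_momFn hp (U t)).comp t (hUder t ht)
    have he : Φ =ᶠ[nhds t] momFn p ∘ U := Filter.eventually_of_mem (hnhds t ht) fun s hs => by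
      simp only [Function.comp]
      rw [← hΦ _ (hUpos s hs).le, (hU s hs).2]
    refine (h.congr_of_eventuallyEq he).congr_deriv ?_
    have := Real.exp_pos (-(U t ^ p))
    field_simp
  have hwder : ∀ t ∈ Ioo (0 : ℝ) 1,
      HasDerivAt (fun t => normConst p / p * (U t ^ (1 - p) * Real.exp (-(U t ^ p))))
        (1 - (1 - p) / p * U t ^ (-p)) t := by
    intro t ht
    have hu := hUpos t ht
    have hb : HasDerivAt (fun u : ℝ => normConst p / p * (u ^ (1 - p) * Real.exp (-(u ^ p))))
        (normConst p / p * (((1 - p) * U t ^ (1 - p - 1)) * Real.exp (-(U t ^ p))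
          + U t ^ (1 - p) * (Real.exp (-(U t ^ p)) * -(p * U t ^ (p - 1))))) (U t) :=
      (((Real.hasDerivAt_rpow_const (Or.inl hu.ne')).mul
        (Real.hasDerivAt_rpow_const (Or.inl hu.ne')).neg.exp)).const_mul _
    refine (hb.comp t (hUder t ht)).congr_deriv ?_
    have h1 : U t ^ (1 - p) * U t ^ (p - 1) = 1 := by
      rw [← Real.rpow_add hu]; simp
    have h2 : 1 - p - 1 = -p := by ring
    rw [h2]
    have hE := Real.exp_pos (-(U t ^ p))
    have : normConst p / p * (((1 - p) * U t ^ (-p)) * Real.exp (-(U t ^ p))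
          + U t ^ (1 - p) * (Real.exp (-(U t ^ p)) * -(p * U t ^ (p - 1))))
        = normConst p * Real.exp (-(U t ^ p)) / p * ((1 - p) * U t ^ (-p)
          - p * (U t ^ (1 - p) * U t ^ (p - 1))) := by ring
    rw [this, h1]
    field_simp
    ring
  refine ⟨fun t => -(U t ^ p),
    fun t => normConst p / p * (U t ^ (1 - p) * Real.exp (-(U t ^ p))), hΦder, ?_, ?_, ?_⟩
  · intro t ht
    have hu := hUpos t ht
    refine (((Real.hasDerivAt_rpow_const (p := p) (Or.inl hu.ne')).comp t
      (hUder t ht)).neg).congr_deriv ?_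
    have h1 : U t ^ (p - 1) = (U t ^ (1 - p))⁻¹ := by
      rw [← Real.rpow_neg hu.le]; congr 1; ring
    rw [h1]
    have hE := Real.exp_pos (-(U t ^ p))
    have := Real.rpow_pos_of_pos hu (1 - p)
    field_simp
  · intro t ht
    have := Real.rpow_pos_of_pos (hUpos t ht) (1 - p)
    positivity
  · refine AntitoneOn.concaveOn_of_deriv (convex_Ioo 0 1)
      (fun t ht => (hwder t ht).continuousAt.continuousWithinAt) ?_ ?_
    · rw [interior_Ioo]
      exact fun t ht => (hwder t ht).differentiableAt.differentiableWithinAt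
    · rw [interior_Ioo]
      intro s hs t ht hst
      rw [(hwder s hs).deriv, (hwder t ht).deriv]
      have h1 : U s ^ (-p) ≤ U t ^ (-p) :=
        Real.rpow_le_rpow_of_nonpos (hUpos t ht) (hUanti.antitoneOn hs ht hst) (by linarith)
      have h2 : 0 ≤ (1 - p) / p := div_nonneg (by linarith) hp.le
      have := mul_le_mul_of_nonneg_left h1 h2
      linarith

/-! ### The measure and half-line indicators -/

/-- The measure `μ_+`. -/
def muPlus (p : ℝ) : Measure ℝ :=
  ((volume : Measure ℝ).restrict (Set.Ici 0)).withDensity fun x =>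
    ENNReal.ofReal (normConst p * Real.exp (-(x ^ p)))

lemma measurable_muPlusDens (hp : 0 < p) :
    Measurable fun x : ℝ => ENNReal.ofReal (normConst p * Real.exp (-(x ^ p))) :=
  ENNReal.measurable_ofReal.comp ((continuous_dens hp).measurable.const_mul _)

lemma integral_muPlus (hp : 0 < p) (f : ℝ → ℝ) :
    ∫ x, f x ∂(muPlus p) = normConst p * ∫ x in Ioi (0 : ℝ), f x * Real.exp (-(x ^ p)) := by
  have hc := normConst_pos hp
  rw [muPlus, integral_withDensity_eq_integral_toReal_smul (measurable_muPlusDens hp)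
    (Filter.Eventually.of_forall fun x => ENNReal.ofReal_lt_top), integral_Ici_eq_integral_Ioi,
    ← integral_const_mul]
  refine integral_congr_ae (Filter.Eventually.of_forall fun x => ?_)
  simp only [smul_eq_mul]
  rw [ENNReal.toReal_ofReal (by positivity)]
  ring

lemma integral_muPlus_indicator (hp : 0 < p) (f : ℝ → ℝ) {a : ℝ} (ha : 0 ≤ a) :
    ∫ x, (Ioi a).indicator f x ∂(muPlus p)
      = normConst p * ∫ x in Ioi a, f x * Real.exp (-(x ^ p)) := by
  rw [integral_muPlus hp]
  congr 1
  have : (fun x => (Ioi a).indicator f x * Real.exp (-(x ^ p)))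
      = (Ioi a).indicator fun x => f x * Real.exp (-(x ^ p)) := by
    ext x
    by_cases hx : x ∈ Ioi a <;> simp [hx]
  rw [this, setIntegral_indicator measurableSet_Ioi,
    inter_eq_self_of_subset_right (Ioi_subset_Ioi ha)]

lemma ae_muPlus_nonneg : ∀ᵐ x ∂(muPlus p), 0 ≤ x := by
  unfold muPlus
  exact (withDensity_absolutelyContinuous _ _).ae_le (ae_restrict_mem measurableSet_Ici)

lemma ae_muPlus_ne (a : ℝ) : ∀ᵐ x ∂(muPlus p), x ≠ a := by
  unfold muPlus
  refine (withDensity_absolutelyContinuous _ _).ae_le ?_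
  exact ae_restrict_of_ae (Measure.ae_ne volume a)

lemma isProbabilityMeasure_muPlus (hp : 0 < p) : IsProbabilityMeasure (muPlus p) := by
  have hc := normConst_pos hp
  constructor
  rw [muPlus, withDensity_apply _ MeasurableSet.univ, Measure.restrict_univ,
    restrict_Ioi_eq_restrict_Ici.symm,
    ← ofReal_integral_eq_lintegral_ofReal ((integrableOn_dens hp).const_mul _)
      (Filter.Eventually.of_forall fun x => by positivity),
    integral_const_mul, normConst_mul_integral_dens hp, ENNReal.ofReal_one]

lemma integrable_rpow_muPlus (hp : 0 < p) : Integrable (fun x : ℝ => x ^ p) (muPlus p) := by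
  have hc := normConst_pos hp
  rw [muPlus, integrable_withDensity_iff (measurable_muPlusDens hp)
    (Filter.Eventually.of_forall fun x => ENNReal.ofReal_lt_top),
    restrict_Ioi_eq_restrict_Ici.symm]
  refine ((integrableOn_momDens hp).const_mul (normConst p)).congr
    (Filter.Eventually.of_forall fun x => ?_)
  simp only
  rw [ENNReal.toReal_ofReal (by positivity)]
  ring

/-- For the indicator of a half-line the functional inequality is an equality, and superlevel sets
of monotone functions are half-lines up to null sets. -/
lemma entropy_layer (hp : 0 < p) {Φ : ℝ → ℝ}
    (hΦ : ∀ u, 0 ≤ u → Φ (tailFn p u) = momFn p u) (hΦ0 : Φ 0 = 1 / p)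
    {g : ℝ → ℝ} (hg : Monotone g) (c : ℝ) :
    ∫ x, Φ (if c ≤ g x then 1 else 0) ∂(muPlus p)
        - Φ (∫ x, (if c ≤ g x then 1 else 0) ∂(muPlus p))
      ≤ ∫ x, (if c ≤ g x then 1 else 0) * (x ^ p - 1 / p) ∂(muPlus p) := by
  have := isProbabilityMeasure_muPlus hp
  set A : Set ℝ := {x | 0 ≤ x ∧ c ≤ g x} with hA
  by_cases hne : A.Nonempty
  · have hbdd : BddBelow A := ⟨0, fun x hx => hx.1⟩
    set a := sInf A with ha
    have ha0 : 0 ≤ a := le_csInf hne fun x hx => hx.1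
    have hae : ∀ᵐ x ∂(muPlus p), (if c ≤ g x then (1 : ℝ) else 0) = (Ioi a).indicator 1 x := by
      filter_upwards [ae_muPlus_nonneg (p := p), ae_muPlus_ne (p := p) a] with x hx0 hxa
      rcases lt_or_gt_of_ne hxa with h | h
      · have h1 : ¬ c ≤ g x := fun hcx => (csInf_le hbdd ⟨hx0, hcx⟩).not_gt h
        have h2 : x ∉ Ioi a := fun h' => lt_asymm h h'
        rw [if_neg h1, indicator_of_notMem h2]
      · obtain ⟨y, hy, hyx⟩ := exists_lt_of_csInf_lt hne h
        have h1 : c ≤ g x := hy.2.trans (hg hyx.le)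
        rw [if_pos h1, indicator_of_mem (mem_Ioi.2 h), Pi.one_apply]
    have hk : ∫ x, (Ioi a).indicator (1 : ℝ → ℝ) x ∂(muPlus p) = tailFn p a := by
      rw [integral_muPlus_indicator hp _ ha0, ← normConst_mul_tail_dens hp ha0]
      simp
    have hkm : ∫ x, (Ioi a).indicator (fun x : ℝ => x ^ p) x ∂(muPlus p) = 1 / p - momFn p a := by
      rw [integral_muPlus_indicator hp _ ha0, normConst_mul_tail_momDens hp ha0]
    have hki : Integrable (fun x => (Ioi a).indicator (1 : ℝ → ℝ) x) (muPlus p) :=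
      (integrable_const (1 : ℝ)).indicator measurableSet_Ioi
    have hkmi : Integrable (fun x => (Ioi a).indicator (fun x : ℝ => x ^ p) x) (muPlus p) :=
      (integrable_rpow_muPlus hp).indicator measurableSet_Ioi
    have hΦ1 : Φ 1 = 0 := by simpa using hΦ 0 le_rfl
    have e1 : ∫ x, Φ (if c ≤ g x then 1 else 0) ∂(muPlus p) = 1 / p - tailFn p a / p := by
      have : ∀ᵐ x ∂(muPlus p), Φ (if c ≤ g x then 1 else 0)
          = 1 / p - (Ioi a).indicator (1 : ℝ → ℝ) x / p := by
        filter_upwards [hae] with x hx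
        rw [hx]
        by_cases h : x ∈ Ioi a <;> simp [h, hΦ0, hΦ1]
      rw [integral_congr_ae this, integral_sub (integrable_const _) (hki.div_const _),
        integral_div (p : ℝ) (fun x => (Ioi a).indicator (1 : ℝ → ℝ) x), hk]
      simp
    have e2 : ∫ x, (if c ≤ g x then (1 : ℝ) else 0) ∂(muPlus p) = tailFn p a := by
      rw [integral_congr_ae hae, hk]
    have e3 : ∫ x, (if c ≤ g x then 1 else 0) * (x ^ p - 1 / p) ∂(muPlus p)
        = 1 / p - momFn p a - tailFn p a / p := by
      have : ∀ᵐ x ∂(muPlus p), (if c ≤ g x then 1 else 0) * (x ^ p - 1 / p)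
          = (Ioi a).indicator (fun x : ℝ => x ^ p) x - (Ioi a).indicator (1 : ℝ → ℝ) x / p := by
        filter_upwards [hae] with x hx
        rw [hx]
        by_cases h : x ∈ Ioi a <;> simp [h]
      rw [integral_congr_ae this, integral_sub hkmi (hki.div_const _), integral_div, hk, hkm]
    rw [e1, e2, e3, hΦ a ha0]
    linarith
  · have hae : ∀ᵐ x ∂(muPlus p), (if c ≤ g x then (1 : ℝ) else 0) = 0 := by
      filter_upwards [ae_muPlus_nonneg (p := p)] with x hx
      exact if_neg fun h => hne ⟨x, hx, h⟩
    have e1 : ∫ x, Φ (if c ≤ g x then 1 else 0) ∂(muPlus p) = Φ 0 := by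
      rw [integral_congr_ae (g := fun _ => Φ 0) (hae.mono fun x hx => by rw [hx])]
      simp
    have e2 : ∫ x, (if c ≤ g x then (1 : ℝ) else 0) ∂(muPlus p) = 0 := by
      rw [integral_congr_ae hae]; simp
    have e3 : ∫ x, (if c ≤ g x then 1 else 0) * (x ^ p - 1 / p) ∂(muPlus p) = 0 := by
      rw [integral_congr_ae (g := fun _ => 0) (hae.mono fun x hx => by
        change _ = (0 : ℝ)
        rw [hx, zero_mul])]
      simp
    rw [e1, e2, e3, sub_self]

end Analytic

/-- **The key functional inequality (Lemma 1).** Let `p ∈ (0,1]`, `c_p = 1/Γ(1+1/p)`, and let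
`μ₊` be the probability measure with density `c_p·exp(-x^p)` on `[0,∞)`. With
`T u = c_p·∫_u^∞ exp(-x^p) dx`, `S u = c_p·∫_0^u x^p·exp(-x^p) dx` and `Φ = S ∘ T⁻¹`
(so `Φ (T u) = S u` for `u ≥ 0` and `Φ 0 = 1/p`), every nondecreasing `g : [0,∞) → [0,1]`
satisfies `∫ Φ(g) dμ₊ - Φ(∫ g dμ₊) ≤ ∫ g(x)·(x^p - 1/p) dμ₊(x)`. -/
theorem key_functional_inequality (p : ℝ) (hp : p ∈ Set.Ioc (0 : ℝ) 1)
    (cp : ℝ) (hcp : cp = 1 / Real.Gamma (1 + 1 / p))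
    (μplus : Measure ℝ)
    (hμ : μplus = ((volume : Measure ℝ).restrict (Set.Ici 0)).withDensity fun x =>
      ENNReal.ofReal (cp * Real.exp (-(x ^ p))))
    (T S Φ : ℝ → ℝ)
    (hT : ∀ u, 0 ≤ u → T u = cp * ∫ x in Set.Ioi u, Real.exp (-(x ^ p)))
    (hS : ∀ u, 0 ≤ u → S u = cp * ∫ x in (0 : ℝ)..u, x ^ p * Real.exp (-(x ^ p)))
    (hΦ : ∀ u, 0 ≤ u → Φ (T u) = S u)
    (hΦ0 : Φ 0 = 1 / p)
    (g : ℝ → ℝ) (hg : MonotoneOn g (Set.Ici 0))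
    (hg01 : ∀ x ∈ Set.Ici (0 : ℝ), g x ∈ Set.Icc (0 : ℝ) 1) :
    ∫ x, Φ (g x) ∂μplus - Φ (∫ x, g x ∂μplus) ≤
      ∫ x, g x * (x ^ p - 1 / p) ∂μplus := by
  obtain ⟨hp0, hp1⟩ := hp
  have hcp' : cp = normConst p := hcp
  subst hcp'
  have hμ' : μplus = muPlus p := hμ
  subst hμ'
  have hprob := isProbabilityMeasure_muPlus hp0
  have hΦT : ∀ u, 0 ≤ u → Φ (tailFn p u) = momFn p u := fun u hu => by
    rw [← normConst_mul_tail_dens hp0 hu, ← hT u hu, hΦ u hu, hS u hu, momFn]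
  -- `Φ` and `g` are unconstrained outside `[0, 1]` and `[0, ∞)`: pass to a continuous extension of
  -- `Φ|[0, 1]` and a monotone extension of `g|[0, ∞)`.
  set Ψ : ℝ → ℝ := IccExtend (zero_le_one' ℝ) ((Icc (0 : ℝ) 1).domRestrict Φ) with hΨ
  have hΨc : Continuous Ψ := Continuous.Icc_extend'
    (continuousOn_iff_continuous_domRestrict.1 (continuousOn_phi hp0 hΦT hΦ0))
  have hΨe : ∀ t ∈ Icc (0 : ℝ) 1, Ψ t = Φ t := fun t ht => IccExtend_of_mem _ _ ht
  have hΨT : ∀ u, 0 ≤ u → Ψ (tailFn p u) = momFn p u := fun u hu => by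
    rw [hΨe _ ⟨(tailFn_pos hp0 u).le, by simpa using (strictAnti_tailFn hp0).antitone hu⟩, hΦT u hu]
  have hΨ0 : Ψ 0 = 1 / p := by rw [hΨe 0 (by simp), hΦ0]
  set G : ℝ → ℝ := fun x => g (max x 0) with hG
  have hGmono : Monotone G := fun x y hxy =>
    hg (le_max_right x 0) (le_max_right y 0) (max_le_max hxy le_rfl)
  have hG01 : ∀ x, G x ∈ Icc (0 : ℝ) 1 := fun x => hg01 _ (le_max_right x 0)
  have hgG : ∀ᵐ x ∂(muPlus p), g x = G x := by
    filter_upwards [ae_muPlus_nonneg (p := p)] with x hx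
    simp only [hG, max_eq_left hx]
  obtain ⟨Φ', w, h1, h2, h3, h4⟩ := exists_second_deriv hp0 hp1 hΨT
  have hmain := entropy_le_of_layers (μ := muPlus p) hΨc h1 h2 h3 h4 hGmono.measurable hG01
    ((integrable_rpow_muPlus hp0).sub (integrable_const (1 / p)))
    (fun c => entropy_layer hp0 hΨT hΨ0 hGmono c)
  have hGi : Integrable G (muPlus p) :=
    Integrable.of_bound hGmono.measurable.aestronglyMeasurable 1
      (Filter.Eventually.of_forall fun x => by
        rw [norm_eq_abs, abs_of_nonneg (hG01 x).1]; exact (hG01 x).2)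
  have hmean : ∫ x, G x ∂(muPlus p) ∈ Icc (0 : ℝ) 1 := by
    refine ⟨integral_nonneg fun x => (hG01 x).1, ?_⟩
    simpa using integral_mono hGi (integrable_const (1 : ℝ)) fun x => (hG01 x).2
  have e1 : ∫ x, Φ (g x) ∂(muPlus p) = ∫ x, Ψ (G x) ∂(muPlus p) :=
    integral_congr_ae (hgG.mono fun x hx => by simp only [hx, hΨe _ (hG01 x)])
  have e2 : ∫ x, g x ∂(muPlus p) = ∫ x, G x ∂(muPlus p) := integral_congr_ae hgG
  have e3 : ∫ x, g x * (x ^ p - 1 / p) ∂(muPlus p) = ∫ x, G x * (x ^ p - 1 / p) ∂(muPlus p) :=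
    integral_congr_ae (hgG.mono fun x hx => by simp only [hx])
  rw [e1, e2, e3, ← hΨe _ hmean]
  exact hmain
end
end

section
/- Let p ∈ (0,1], c_p = 1/Γ(1+1/p), T(u) = c_p·∫_u^∞ e^{−x^p} dx, S(u) = c_p·∫_0^u x^p e^{−x^p} dx, and Φ = S ∘ T^{−1} : [0,1] → ℝ. Then Φ'' > 0 on (0,1) and (1/Φ'')'' ≤ 0 on (0,1); explicitly, writing F = T^{−1}, one has Φ''(s) = (p/c_p)·F(s)^{p−1}·e^{F(s)^p} > 0 and (1/Φ'')''(s) = −((1−p)/c_p)·F(s)^{−p−1}·e^{F(s)^p} ≤ 0. -/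
/-!
By the fundamental theorem of calculus `T' = -cp * exp (-u ^ p)` on `(0, ∞)`, so `T` is strictly
decreasing there and its right inverse `F` is a genuine local inverse with
`F' = -exp (F ^ p) / cp` (`hasDerivAt_inverse`). Since `S' = cp * u ^ p * exp (-u ^ p)`, the
exponentials cancel in the chain rule and `Φ' = -F ^ p`. One more derivative gives
`Φ'' = (p / cp) * F ^ (p - 1) * exp (F ^ p)`. For the reciprocal
`1 / Φ'' = (cp / p) * F ^ (1 - p) * exp (-F ^ p)` the exponentials cancel again, giving
`(1 / Φ'')' = 1 - ((1 - p) / p) * F ^ (-p)`, and the last derivative is immediate.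

Each formula holds on the whole open interval `(0, 1)`, hence near each of its points, which is
what allows it to be differentiated again.
-/

open MeasureTheory Real Set

noncomputable section

lemma continuous_exp_neg_rpow {p : ℝ} (hp : 0 < p) :
    Continuous fun x : ℝ => Real.exp (-(x ^ p)) :=
  Real.continuous_exp.comp (Real.continuous_rpow_const hp.le).neg

lemma hasStrictDerivAt_tail {p cp : ℝ} (hp : 0 < p) {T : ℝ → ℝ}
    (hT : ∀ u, 0 ≤ u → T u = cp * ∫ x in Set.Ioi u, Real.exp (-(x ^ p)))
    {u : ℝ} (hu : 0 < u) :
    HasStrictDerivAt T (-(cp * Real.exp (-(u ^ p)))) u := by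
  have hint : IntegrableOn (fun x : ℝ => Real.exp (-(x ^ p))) (Set.Ioi 0) := by
    simpa using integrableOn_rpow_mul_exp_neg_rpow (s := 0) (by norm_num) hp
  have hc := continuous_exp_neg_rpow hp
  have h1 : HasStrictDerivAt (fun v => ∫ x in (0 : ℝ)..v, Real.exp (-(x ^ p)))
      (Real.exp (-(u ^ p))) u :=
    intervalIntegral.integral_hasStrictDerivAt_right (hc.intervalIntegrable _ _)
      (hc.stronglyMeasurableAtFilter _ _) hc.continuousAt
  have h2 := (h1.const_sub (∫ x in Set.Ioi (0 : ℝ), Real.exp (-(x ^ p)))).const_mul cp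
  rw [mul_neg] at h2
  refine h2.congr_of_eventuallyEq ?_
  filter_upwards [lt_mem_nhds hu] with v hv
  rw [hT v hv.le, ← intervalIntegral.integral_Ioi_sub_Ioi hint hv.le]
  ring

lemma hasDerivAt_head {p cp : ℝ} (hp : 0 < p) {S : ℝ → ℝ}
    (hS : ∀ u, 0 ≤ u → S u = cp * ∫ x in (0 : ℝ)..u, x ^ p * Real.exp (-(x ^ p)))
    {u : ℝ} (hu : 0 < u) :
    HasDerivAt S (cp * (u ^ p * Real.exp (-(u ^ p)))) u := by
  have hc : Continuous fun x : ℝ => x ^ p * Real.exp (-(x ^ p)) :=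
    (Real.continuous_rpow_const hp.le).mul (continuous_exp_neg_rpow hp)
  have h1 : HasDerivAt (fun v => ∫ x in (0 : ℝ)..v, x ^ p * Real.exp (-(x ^ p)))
      (u ^ p * Real.exp (-(u ^ p))) u :=
    intervalIntegral.integral_hasDerivAt_right (hc.intervalIntegrable _ _)
      (hc.stronglyMeasurableAtFilter _ _) hc.continuousAt
  refine (h1.const_mul cp).congr_of_eventuallyEq ?_
  filter_upwards [lt_mem_nhds hu] with v hv
  exact hS v hv.le

/-- The inverse function theorem for `T`. The function `F` is only known to be a right inverse on
`(0, 1)`; injectivity of `T` on `(0, ∞)` makes it a local left inverse, so that neither the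
continuity of `F` nor the exact range of `T` has to be established. -/
lemma hasDerivAt_inverse {p cp : ℝ} (hp : 0 < p) (hcp : 0 < cp) {T F : ℝ → ℝ}
    (hT : ∀ u, 0 ≤ u → T u = cp * ∫ x in Set.Ioi u, Real.exp (-(x ^ p)))
    (hF : ∀ s ∈ Set.Ioo (0 : ℝ) 1, 0 < F s ∧ T (F s) = s)
    {s : ℝ} (hs : s ∈ Set.Ioo (0 : ℝ) 1) :
    HasDerivAt F (-(Real.exp (F s ^ p) / cp)) s := by
  have hanti : StrictAntiOn T (Set.Ioi 0) := by
    refine strictAntiOn_of_deriv_neg (convex_Ioi 0) (fun x hx =>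
      (hasStrictDerivAt_tail hp hT hx).hasDerivAt.continuousAt.continuousWithinAt) ?_
    intro x hx
    rw [interior_Ioi] at hx
    rw [(hasStrictDerivAt_tail hp hT hx).hasDerivAt.deriv]
    exact neg_lt_zero.2 (by positivity)
  obtain ⟨h0, h1⟩ := hF s hs
  have hd := hasStrictDerivAt_tail hp hT h0
  have hleft : ∀ᶠ x in nhds (F s), F (T x) = x := by
    have hmem : ∀ᶠ x in nhds (F s), T x ∈ Set.Ioo (0 : ℝ) 1 :=
      hd.hasDerivAt.continuousAt.eventually_mem (by rw [h1]; exact isOpen_Ioo.mem_nhds hs)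
    filter_upwards [hmem, lt_mem_nhds h0] with x hx hx0
    exact hanti.injOn (hF _ hx).1 hx0 (hF _ hx).2
  have h := (hd.to_local_left_inverse (neg_ne_zero.2 (by positivity)) hleft).hasDerivAt
  rw [h1] at h
  convert! h using 1
  rw [Real.exp_neg, inv_neg, mul_inv, inv_inv]
  ring

/-- **Lemma 2.** Let `p ∈ (0,1]`, `c_p = 1/Γ(1+1/p)`, `T u = c_p·∫_u^∞ exp(-x^p) dx`,
`S u = c_p·∫_0^u x^p·exp(-x^p) dx`, `F = T⁻¹` and `Φ = S ∘ F`. Then on `(0,1)` one has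
`Φ'' s = (p/c_p)·F(s)^(p-1)·exp(F(s)^p) > 0` and
`(1/Φ'')'' s = -((1-p)/c_p)·F(s)^(-p-1)·exp(F(s)^p) ≤ 0`. -/
theorem second_derivative_Phi (p : ℝ) (hp : p ∈ Set.Ioc (0 : ℝ) 1)
    (cp : ℝ) (hcp : cp = 1 / Real.Gamma (1 + 1 / p))
    (T S F Φ : ℝ → ℝ)
    (hT : ∀ u, 0 ≤ u → T u = cp * ∫ x in Set.Ioi u, Real.exp (-(x ^ p)))
    (hS : ∀ u, 0 ≤ u → S u = cp * ∫ x in (0 : ℝ)..u, x ^ p * Real.exp (-(x ^ p)))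
    (hF : ∀ s ∈ Set.Ioo (0 : ℝ) 1, 0 < F s ∧ T (F s) = s)
    (hΦ : ∀ s, Φ s = S (F s)) :
    ∀ s ∈ Set.Ioo (0 : ℝ) 1,
      (deriv (deriv Φ) s = p / cp * F s ^ (p - 1) * Real.exp (F s ^ p) ∧
        0 < deriv (deriv Φ) s) ∧
      (deriv (deriv fun u => 1 / deriv (deriv Φ) u) s =
          -((1 - p) / cp) * F s ^ (-p - 1) * Real.exp (F s ^ p) ∧
        deriv (deriv fun u => 1 / deriv (deriv Φ) u) s ≤ 0) := by
  have hp0 : 0 < p := hp.1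
  have hcp0 : 0 < cp := by
    rw [hcp]
    exact one_div_pos.2 (Real.Gamma_pos_of_pos (by positivity))
  have hFd : ∀ s ∈ Set.Ioo (0 : ℝ) 1, HasDerivAt F (-(Real.exp (F s ^ p) / cp)) s :=
    fun s hs => hasDerivAt_inverse hp0 hcp0 hT hF hs
  have hpow : ∀ q : ℝ, ∀ s ∈ Set.Ioo (0 : ℝ) 1, HasDerivAt (fun t => F t ^ q)
      (-(Real.exp (F s ^ p) / cp) * q * F s ^ (q - 1)) s :=
    fun q s hs => (hFd s hs).rpow_const (Or.inl (hF s hs).1.ne')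
  have hΦ1 : ∀ s ∈ Set.Ioo (0 : ℝ) 1, deriv Φ s = -(F s ^ p) := by
    intro s hs
    have h := (hasDerivAt_head hp0 hS (hF s hs).1).comp s (hFd s hs)
    have hfun : Φ = S ∘ F := funext hΦ
    rw [hfun, h.deriv, Real.exp_neg]
    field_simp
  have hΦ2 : ∀ s ∈ Set.Ioo (0 : ℝ) 1,
      deriv (deriv Φ) s = p / cp * F s ^ (p - 1) * Real.exp (F s ^ p) := by
    intro s hs
    rw [((hpow p s hs).neg.congr_of_eventuallyEq
      (Filter.eventuallyEq_of_mem (isOpen_Ioo.mem_nhds hs) hΦ1)).deriv]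
    ring
  have hR0 : ∀ s ∈ Set.Ioo (0 : ℝ) 1,
      1 / deriv (deriv Φ) s = cp / p * (F s ^ (1 - p) * Real.exp (-(F s ^ p))) := by
    intro s hs
    rw [hΦ2 s hs, ← neg_sub p 1, Real.rpow_neg (hF s hs).1.le, Real.exp_neg]
    field_simp
  have hR1 : ∀ s ∈ Set.Ioo (0 : ℝ) 1,
      deriv (fun u => 1 / deriv (deriv Φ) u) s = 1 - (1 - p) / p * F s ^ (-p) := by
    intro s hs
    have h0 := (hF s hs).1
    rw [((((hpow (1 - p) s hs).mul (hpow p s hs).neg.exp).const_mul (cp / p)).congr_of_eventuallyEq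
      (Filter.eventuallyEq_of_mem (isOpen_Ioo.mem_nhds hs) hR0)).deriv]
    have e1 : F s ^ (1 - p) * F s ^ (p - 1) = 1 := by
      rw [← Real.rpow_add h0]
      simp
    have e2 : Real.exp (F s ^ p) * Real.exp (-(F s ^ p)) = 1 := by
      rw [← Real.exp_add]
      simp
    have e3 : (1 - p - 1 : ℝ) = -p := by ring
    have e4 : cp / p * (p / cp) = 1 := by field_simp
    have e5 : cp / p * (1 / cp) = 1 / p := by field_simp
    rw [e3]
    simp only [Pi.neg_apply]
    -- collect the mutually inverse factors of the product-rule expression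
    calc _ = (Real.exp (F s ^ p) * Real.exp (-(F s ^ p))) *
          ((cp / p * (p / cp)) * (F s ^ (1 - p) * F s ^ (p - 1))
            - (cp / p * (1 / cp)) * (1 - p) * F s ^ (-p)) := by ring
      _ = _ := by
        rw [e1, e2, e4, e5]
        ring
  intro s hs
  have h0 := (hF s hs).1
  have hR2 : deriv (deriv fun u => 1 / deriv (deriv Φ) u) s =
      -((1 - p) / cp) * F s ^ (-p - 1) * Real.exp (F s ^ p) := by
    rw [((((hpow (-p) s hs).const_mul ((1 - p) / p)).const_sub 1).congr_of_eventuallyEq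
      (Filter.eventuallyEq_of_mem (isOpen_Ioo.mem_nhds hs) hR1)).deriv]
    field_simp
  refine ⟨⟨hΦ2 s hs, ?_⟩, hR2, ?_⟩
  · rw [hΦ2 s hs]
    positivity
  · rw [hR2, neg_mul, neg_mul, neg_nonpos]
    have : 0 ≤ 1 - p := sub_nonneg.2 hp.2
    positivity
end
end

section
/- Let p ∈ (0,1], c_p = 1/Γ(1+1/p), T(u) = c_p·∫_u^∞ e^{−x^p} dx, S(u) = c_p·∫_0^u x^p e^{−x^p} dx, Φ = S ∘ T^{−1}, and F = T^{−1}. Then F'(s) = −(1/c_p)·e^{F(s)^p}, Φ'(s) = −F(s)^p, and (1/Φ'')'(s) = 1 − ((1−p)/p)·F(s)^{−p} for all s ∈ (0,1). -/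
/-!
Write `g x = exp (-x^p)`. The integral of `g` over `(0,∞)` is `Γ(1/p + 1)`, which is nonzero, so `g`
is integrable there and `T u = c_p (Γ(1/p + 1) - ∫_0^u g)` has derivative `-c_p g u` for `u > 0`
(`hasDerivAt_tail`). In particular `T` is strictly decreasing, which makes its right inverse `F`
continuous (`continuousAt_of_strictAntiOn_rightInv`), and the inverse function rule yields `F'`.
The chain rule then gives `Φ' = -F^p`, since the exponentials cancel. Differentiating once more,
`1/Φ'' = (c_p/p) F^(1-p) exp (-F^p)`, whose derivative is again computed by the chain rule.
-/

open MeasureTheory Real Set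

noncomputable section

/-- A right inverse of a strictly decreasing function is continuous: if `T (F t) = t` for `t` in an
open set, then `F t` is trapped between `F s - ε` and `F s + ε` once `t` lies strictly
between `T (F s + ε)` and `T (F s - ε)`. -/
lemma continuousAt_of_strictAntiOn_rightInv {T F : ℝ → ℝ} {U : Set ℝ} (hU : IsOpen U)
    (hT : StrictAntiOn T (Ioi 0)) (hF : ∀ s ∈ U, 0 < F s ∧ T (F s) = s)
    {s : ℝ} (hs : s ∈ U) : ContinuousAt F s := by
  obtain ⟨hpos, hTs⟩ := hF s hs
  refine tendsto_order.2 ⟨fun a ha => ?_, fun b hb => ?_⟩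
  · -- Points below `a` need not be positive, so compare with `max a (F s / 2)` instead.
    have hm0 : 0 < max a (F s / 2) := lt_max_of_lt_right (by linarith)
    have hm : max a (F s / 2) < F s := max_lt ha (by linarith)
    have h1 : s < T (max a (F s / 2)) := by
      have := hT hm0 hpos hm
      rwa [hTs] at this
    filter_upwards [hU.mem_nhds hs, Iio_mem_nhds h1] with t htU ht
    obtain ⟨ht0, hTt⟩ := hF t htU
    rw [mem_Iio, ← hTt] at ht
    exact (le_max_left _ _).trans_lt ((hT.lt_iff_gt ht0 hm0).1 ht)
  · have hb0 : 0 < b := hpos.trans hb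
    have h1 : T b < s := by
      have := hT hpos hb0 hb
      rwa [hTs] at this
    filter_upwards [hU.mem_nhds hs, Ioi_mem_nhds h1] with t htU ht
    obtain ⟨ht0, hTt⟩ := hF t htU
    rw [mem_Ioi, ← hTt] at ht
    exact (hT.lt_iff_gt hb0 ht0).1 ht

lemma integrableOn_exp_neg_rpow {p : ℝ} (hp : 0 < p) :
    IntegrableOn (fun x : ℝ => Real.exp (-(x ^ p))) (Ioi 0) := by
  -- A nonzero Bochner integral certifies integrability.
  refine Integrable.of_integral_ne_zero ?_
  rw [integral_exp_neg_rpow hp]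
  exact (Real.Gamma_pos_of_pos (by positivity)).ne'

/-- The tail integral differs from minus the integral over `[0, u]` by a constant, so its
derivative is minus the integrand. -/
lemma hasDerivAt_tail {p cp : ℝ} (hp : 0 < p) {T : ℝ → ℝ}
    (hT : ∀ u, 0 ≤ u → T u = cp * ∫ x in Set.Ioi u, Real.exp (-(x ^ p)))
    {u : ℝ} (hu : 0 < u) : HasDerivAt T (-(cp * Real.exp (-(u ^ p)))) u := by
  have hc := continuous_exp_neg_rpow hp
  have hG := (hc.integral_hasStrictDerivAt 0 u).hasDerivAt
  have h := (hG.const_sub (∫ x in Ioi (0 : ℝ), Real.exp (-(x ^ p)))).const_mul cp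
  rw [mul_neg] at h
  refine h.congr_of_eventuallyEq ?_
  filter_upwards [Ioi_mem_nhds hu] with v hv
  have hint := integrableOn_exp_neg_rpow hp
  rw [hT v (le_of_lt hv), ← intervalIntegral.integral_Ioi_sub_Ioi hint (le_of_lt hv)]
  ring

/-- **First derivatives.** Let `p ∈ (0,1]`, `c_p = 1/Γ(1+1/p)`, `T u = c_p·∫_u^∞ exp(-x^p) dx`,
`S u = c_p·∫_0^u x^p·exp(-x^p) dx`, `F = T⁻¹` and `Φ = S ∘ F`. Then for all `s ∈ (0,1)`:
`F' s = -(1/c_p)·exp(F(s)^p)`, `Φ' s = -F(s)^p`, and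
`(1/Φ'')' s = 1 - ((1-p)/p)·F(s)^(-p)`. -/
theorem first_derivatives_Phi (p : ℝ) (hp : p ∈ Set.Ioc (0 : ℝ) 1)
    (cp : ℝ) (hcp : cp = 1 / Real.Gamma (1 + 1 / p))
    (T S F Φ : ℝ → ℝ)
    (hT : ∀ u, 0 ≤ u → T u = cp * ∫ x in Set.Ioi u, Real.exp (-(x ^ p)))
    (hS : ∀ u, 0 ≤ u → S u = cp * ∫ x in (0 : ℝ)..u, x ^ p * Real.exp (-(x ^ p)))
    (hF : ∀ s ∈ Set.Ioo (0 : ℝ) 1, 0 < F s ∧ T (F s) = s)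
    (hΦ : ∀ s, Φ s = S (F s)) :
    ∀ s ∈ Set.Ioo (0 : ℝ) 1,
      deriv F s = -(1 / cp) * Real.exp (F s ^ p) ∧
      deriv Φ s = -(F s ^ p) ∧
      deriv (fun u => 1 / deriv (deriv Φ) u) s = 1 - (1 - p) / p * F s ^ (-p) := by
  obtain ⟨hp0, -⟩ := hp
  have hc : 0 < cp := by
    rw [hcp]
    exact one_div_pos.2 (Real.Gamma_pos_of_pos (by positivity))
  have hT' : ∀ u, 0 < u → HasDerivAt T (-(cp * Real.exp (-(u ^ p)))) u :=
    fun u hu => hasDerivAt_tail hp0 hT hu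
  have hanti : StrictAntiOn T (Ioi 0) := by
    refine strictAntiOn_of_deriv_neg (convex_Ioi 0)
      (fun u hu => (hT' u hu).continuousAt.continuousWithinAt) fun u hu => ?_
    rw [interior_Ioi] at hu
    rw [(hT' u hu).deriv]
    exact neg_neg_of_pos (by positivity)
  have hF' : ∀ s ∈ Ioo (0 : ℝ) 1, HasDerivAt F (-(1 / cp) * Real.exp (F s ^ p)) s := by
    intro s hs
    have h := HasDerivAt.of_local_left_inverse
      (continuousAt_of_strictAntiOn_rightInv isOpen_Ioo hanti hF hs)
      (hT' (F s) (hF s hs).1) (neg_ne_zero.2 (by positivity))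
      (by filter_upwards [isOpen_Ioo.mem_nhds hs] with t ht using (hF t ht).2)
    refine h.congr_deriv ?_
    rw [Real.exp_neg]
    field_simp
  have hS' : ∀ u, 0 < u → HasDerivAt S (cp * (u ^ p * Real.exp (-(u ^ p)))) u := by
    intro u hu
    have hcont : Continuous fun x : ℝ => x ^ p * Real.exp (-(x ^ p)) :=
      (Real.continuous_rpow_const hp0.le).mul (continuous_exp_neg_rpow hp0)
    refine ((hcont.integral_hasStrictDerivAt 0 u).hasDerivAt.const_mul cp).congr_of_eventuallyEq ?_
    filter_upwards [Ioi_mem_nhds hu] with v hv using hS v (le_of_lt hv)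
  have hΦ' : ∀ s ∈ Ioo (0 : ℝ) 1, HasDerivAt Φ (-(F s ^ p)) s := by
    intro s hs
    rw [show Φ = S ∘ F from funext hΦ]
    refine ((hS' (F s) (hF s hs).1).comp s (hF' s hs)).congr_deriv ?_
    rw [Real.exp_neg]
    field_simp
  have hΦ'' : ∀ s ∈ Ioo (0 : ℝ) 1,
      1 / deriv (deriv Φ) s = cp / p * (F s ^ (1 - p) * Real.exp (-(F s ^ p))) := by
    intro s hs
    have hpos := (hF s hs).1
    have h : HasDerivAt (deriv Φ)
        (-(-(1 / cp) * Real.exp (F s ^ p) * p * F s ^ (p - 1))) s := by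
      refine ((hF' s hs).rpow_const (Or.inl hpos.ne')).neg.congr_of_eventuallyEq ?_
      filter_upwards [isOpen_Ioo.mem_nhds hs] with t ht using (hΦ' t ht).deriv
    rw [h.deriv, Real.exp_neg, show (1 : ℝ) - p = -(p - 1) by ring, Real.rpow_neg hpos.le]
    field_simp
  intro s hs
  refine ⟨(hF' s hs).deriv, (hΦ' s hs).deriv, ?_⟩
  have hpos := (hF s hs).1
  have h1 := (hF' s hs).rpow_const (p := 1 - p) (Or.inl hpos.ne')
  have h2 := ((hF' s hs).rpow_const (p := p) (Or.inl hpos.ne')).neg.exp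
  have h3 := ((h1.mul h2).const_mul (cp / p)).congr_of_eventuallyEq
    (f₁ := fun u => 1 / deriv (deriv Φ) u)
    (by filter_upwards [isOpen_Ioo.mem_nhds hs] with t ht using hΦ'' t ht)
  rw [h3.deriv]
  have e1 : F s ^ (1 - p - 1) = F s ^ (-p) := by congr 1; ring
  have e2 : F s ^ (1 - p) = (F s ^ (p - 1))⁻¹ := by
    rw [← Real.rpow_neg hpos.le]
    congr 1
    ring
  have hq : F s ^ (p - 1) ≠ 0 := (Real.rpow_pos_of_pos hpos _).ne'
  simp only [Pi.neg_apply]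
  rw [e1, e2, Real.exp_neg]
  field_simp
  ring
end
end

section
/- Let p ∈ (0,1], let ν_p^2 be the probability measure on ℝ² with density (c_p/2)²·exp(−|x|^p − |y|^p), c_p = 1/Γ(1+1/p), and for a Borel set K ⊆ ℝ² let M_p(K) = ∫_K (|x|^p + |y|^p) dν_p^2(x,y). Then for every Borel set K ⊆ ℝ² of finite measure, the function t ↦ ν_p^2(tK) satisfies d/dt ν_p^2(tK)|_{t=1} = 2·ν_p^2(K) − p·M_p(K). -/
/-! Write `N(x, y) = |x|^p + |y|^p`, which is `p`-homogeneous. Substituting `z ↦ t z` gives, for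
`t > 0`, `ν(tK) = t² ∫_K c exp(-t^p N(z)) dz`, so that the dependence on `t` sits in the integrand
only. The `t`-derivative of the integrand at `t = 1` is `(2 - p N) c exp(-N)`, and the claim follows
by differentiating under the integral sign. This is legitimate because for `t ∈ (1/2, 2)` and
`p ≤ 1` one has `t^p ≥ 1/2`, so the `t`-derivative is dominated by a multiple of
`exp(-N/4)` (`abs_integrand_deriv_le`), which is integrable by Fubini and the Gamma integral
(`integrable_exp_neg_quarter`). -/

open MeasureTheory Real Set Pointwise

noncomputable section

lemma integrable_exp_neg_mul_abs_rpow {p b : ℝ} (hp : 0 < p) (hb : 0 < b) :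
    Integrable (fun x : ℝ => Real.exp (-b * |x| ^ p)) := by
  -- A non-integrable function has Bochner integral `0`, so a nonzero value suffices.
  apply Integrable.of_integral_ne_zero
  rw [integral_comp_abs (f := fun x : ℝ => Real.exp (-b * x ^ p)),
    integral_exp_neg_mul_rpow hp hb]
  have := Real.Gamma_pos_of_pos (s := 1 / p + 1) (by positivity)
  positivity

lemma integrable_exp_neg_quarter {p : ℝ} (hp : 0 < p) :
    Integrable (fun z : ℝ × ℝ => Real.exp (-((|z.1| ^ p + |z.2| ^ p) / 4))) := by
  have h1 := integrable_exp_neg_mul_abs_rpow hp (b := 1 / 4) (by norm_num)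
  have h := h1.mul_prod h1
  rw [← Measure.volume_eq_prod] at h
  refine h.congr (.of_forall fun z => ?_)
  simp only [← Real.exp_add]
  ring_nf

lemma hasDerivAt_integrand {p c N t : ℝ} (ht : 0 < t) :
    HasDerivAt (fun t : ℝ => t ^ 2 * (c * Real.exp (-(t ^ p * N))))
      (2 * t * (c * Real.exp (-(t ^ p * N)))
        - t ^ 2 * (p * t ^ (p - 1) * N) * (c * Real.exp (-(t ^ p * N)))) t := by
  have h1 : HasDerivAt (fun t : ℝ => t ^ 2) (2 * t) t := by simpa using hasDerivAt_pow 2 t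
  have h2 := ((Real.hasDerivAt_rpow_const (x := t) (p := p) (Or.inl ht.ne')).mul_const N).neg
  refine (h1.mul (h2.exp.const_mul c)).congr_deriv ?_
  simp only [Pi.neg_apply]
  ring

/-- The domination bound for differentiating under the integral, uniform over `t ∈ (1/2, 2)`. The
factor `N` coming from the derivative is absorbed by `N ≤ 4 exp(N/4)`. -/
lemma abs_integrand_deriv_le {p c N t : ℝ} (hp : 0 < p) (hp1 : p ≤ 1) (hc : 0 ≤ c) (hN : 0 ≤ N)
    (ht : 1 / 2 < t) (ht2 : t < 2) :
    |2 * t * (c * Real.exp (-(t ^ p * N)))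
        - t ^ 2 * (p * t ^ (p - 1) * N) * (c * Real.exp (-(t ^ p * N)))|
      ≤ 20 * c * Real.exp (-(N / 4)) := by
  have ht0 : 0 < t := by linarith
  have hlow : 1 / 2 ≤ t ^ p := by
    calc (1 / 2 : ℝ) = (1 / 2 : ℝ) ^ (1 : ℝ) := by rw [Real.rpow_one]
      _ ≤ (1 / 2 : ℝ) ^ p := Real.rpow_le_rpow_of_exponent_ge (by norm_num) (by norm_num) hp1
      _ ≤ t ^ p := Real.rpow_le_rpow (by norm_num) ht.le hp.le
  have hup : t ^ p ≤ 2 := by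
    calc t ^ p ≤ 2 ^ p := Real.rpow_le_rpow ht0.le ht2.le hp.le
      _ ≤ 2 ^ (1 : ℝ) := Real.rpow_le_rpow_of_exponent_le (by norm_num) hp1
      _ = 2 := Real.rpow_one 2
  have hpow : t ^ 2 * (p * t ^ (p - 1) * N) = p * (t * t ^ p) * N := by
    rw [Real.rpow_sub_one ht0.ne']
    field_simp
  have hq : N ≤ 4 * Real.exp (N / 4) := by
    linarith [Real.add_one_le_exp (N / 4)]
  have hexp : Real.exp (-(t ^ p * N)) ≤ Real.exp (-(N / 4)) * Real.exp (-(N / 4)) := by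
    rw [← Real.exp_add]
    apply Real.exp_le_exp.2
    nlinarith
  have hinv : Real.exp (-(N / 4)) * Real.exp (N / 4) = 1 := by
    rw [← Real.exp_add]; simp
  have hle1 : Real.exp (-(N / 4)) ≤ 1 := Real.exp_le_one_iff.2 (by linarith)
  have hpos := Real.exp_pos (-(N / 4))
  have hfac : |2 * t - p * (t * t ^ p) * N| ≤ 4 + 4 * N := by
    have htt : t * t ^ p ≤ 4 := by nlinarith
    have htt0 : 0 ≤ t * t ^ p := by positivity
    have hptt : p * (t * t ^ p) ≤ 4 := by nlinarith
    have hA : p * (t * t ^ p) * N ≤ 4 * N := mul_le_mul_of_nonneg_right hptt hN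
    have hB : 0 ≤ p * (t * t ^ p) * N := by positivity
    rw [abs_le]
    constructor <;> linarith
  rw [hpow, ← sub_mul, abs_mul, abs_of_nonneg (a := c * _) (by positivity)]
  set E := Real.exp (-(N / 4))
  have hNE : N * E ≤ 4 := by
    calc N * E ≤ 4 * Real.exp (N / 4) * E := mul_le_mul_of_nonneg_right hq hpos.le
      _ = 4 := by linear_combination 4 * hinv
  calc |2 * t - p * (t * t ^ p) * N| * (c * Real.exp (-(t ^ p * N)))
      ≤ (4 + 4 * N) * (c * (E * E)) := by gcongr
    _ = c * E * (4 * E + 4 * (N * E)) := by ring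
    _ ≤ c * E * 20 := by gcongr; linarith
    _ = 20 * c * E := by ring

/-- **Derivative of the measure of a dilation.** Let `p ∈ (0,1]` and let `ν_p²` be the
probability measure on `ℝ²` with density `(c_p/2)²·exp(-|x|^p - |y|^p)`, `c_p = 1/Γ(1+1/p)`.
For every Borel set `K ⊆ ℝ²` of finite measure, with
`M_p(K) = ∫_K (|x|^p + |y|^p) dν_p²`, one has
`d/dt ν_p²(tK) |_{t=1} = 2·ν_p²(K) - p·M_p(K)`. -/
theorem deriv_dilation_measure (p : ℝ) (hp : p ∈ Set.Ioc (0 : ℝ) 1)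
    (cp : ℝ) (hcp : cp = 1 / Real.Gamma (1 + 1 / p))
    (ν : Measure (ℝ × ℝ))
    (hν : ν = (volume : Measure (ℝ × ℝ)).withDensity fun z =>
      ENNReal.ofReal ((cp / 2) ^ 2 * Real.exp (-(|z.1| ^ p + |z.2| ^ p))))
    (K : Set (ℝ × ℝ)) (hK : MeasurableSet K) (hfin : ν K ≠ ⊤) :
    HasDerivAt (fun t : ℝ => (ν (t • K)).toReal)
      (2 * (ν K).toReal - p * ∫ z in K, (|z.1| ^ p + |z.2| ^ p) ∂ν) 1 := by
  obtain ⟨hp0, hp1⟩ := hp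
  -- Both sides are linear in the constant `c` in front of the density; only its sign matters.
  clear hcp hfin
  obtain ⟨c, hc, hc0⟩ : ∃ c : ℝ, c = (cp / 2) ^ 2 ∧ 0 ≤ c := ⟨_, rfl, sq_nonneg _⟩
  rw [← hc] at hν
  set N : ℝ × ℝ → ℝ := fun z => |z.1| ^ p + |z.2| ^ p with hNdef
  have hN0 : ∀ z, 0 ≤ N z := fun z => by positivity
  have hNm : Measurable N := by fun_prop
  have hNt : ∀ t : ℝ, 0 < t → ∀ z, N (t • z) = t ^ p * N z := fun t ht z => by
    simp only [hNdef, Prod.smul_fst, Prod.smul_snd, smul_eq_mul, abs_mul, abs_of_pos ht,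
      Real.mul_rpow ht.le (abs_nonneg _)]
    ring
  have hdom : Integrable (fun z => 20 * c * Real.exp (-(N z / 4))) :=
    (integrable_exp_neg_quarter hp0).const_mul _
  have hdens : Integrable (fun z => c * Real.exp (-N z)) := by
    refine hdom.mono' (by fun_prop) (.of_forall fun z => ?_)
    have hE : Real.exp (-N z) ≤ Real.exp (-(N z / 4)) :=
      Real.exp_le_exp.2 (by linarith [hN0 z])
    rw [Real.norm_eq_abs, abs_of_nonneg (by positivity)]
    have := mul_le_mul_of_nonneg_left hE hc0
    have : 0 ≤ c * Real.exp (-(N z / 4)) := by positivity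
    linarith
  have hν_apply : ∀ s, MeasurableSet s → (ν s).toReal = ∫ z in s, c * Real.exp (-N z) := by
    intro s hs
    rw [hν, withDensity_apply _ hs, integral_eq_lintegral_of_nonneg_ae
      (.of_forall fun z => by positivity) hdens.aestronglyMeasurable.restrict]
  have hscale : ∀ t : ℝ, 0 < t → (ν (t • K)).toReal
      = ∫ z in K, t ^ 2 * (c * Real.exp (-(t ^ p * N z))) := by
    intro t ht
    have h := Measure.setIntegral_comp_smul_of_pos (volume : Measure (ℝ × ℝ))
      (fun z => c * Real.exp (-N z)) K ht
    have hdim : Module.finrank ℝ (ℝ × ℝ) = 2 := by simp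
    simp only [hNt t ht, hdim, smul_eq_mul] at h
    rw [hν_apply _ (hK.const_smul_of_ne_zero ht.ne'), integral_const_mul (t ^ 2), h]
    field_simp
  have hderiv := hasDerivAt_integral_of_dominated_loc_of_deriv_le
    (μ := volume.restrict K) (x₀ := (1 : ℝ)) (s := Set.Ioo (1 / 2) 2)
    (F := fun t z => t ^ 2 * (c * Real.exp (-(t ^ p * N z))))
    (F' := fun t z => 2 * t * (c * Real.exp (-(t ^ p * N z)))
        - t ^ 2 * (p * t ^ (p - 1) * N z) * (c * Real.exp (-(t ^ p * N z))))
    (bound := fun z => 20 * c * Real.exp (-(N z / 4)))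
    (Ioo_mem_nhds (by norm_num) (by norm_num))
    (.of_forall fun t => by fun_prop)
    (by simpa using (hdens.integrableOn (s := K)).integrable)
    (by fun_prop)
    (.of_forall fun z t ht => abs_integrand_deriv_le hp0 hp1 hc0 (hN0 z) ht.1 ht.2)
    hdom.integrableOn
    (.of_forall fun z t ht => hasDerivAt_integrand (by linarith [ht.1]))
  obtain ⟨hint, hd⟩ := hderiv
  simp only [one_pow, Real.one_rpow, one_mul, mul_one] at hint hd
  have hM : ∫ z in K, N z ∂ν = ∫ z in K, c * Real.exp (-N z) * N z := by
    rw [hν, setIntegral_withDensity_eq_setIntegral_toReal_smul (by fun_prop)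
      (.of_forall fun z => ENNReal.ofReal_lt_top) _ hK]
    refine integral_congr_ae (.of_forall fun z => ?_)
    simp only [smul_eq_mul]
    rw [ENNReal.toReal_ofReal (by positivity)]
  have hNint : Integrable (fun z => p * (c * Real.exp (-N z) * N z)) (volume.restrict K) := by
    refine ((hdens.integrableOn (s := K)).integrable.const_mul 2 |>.sub hint).congr
      (.of_forall fun z => ?_)
    simp only [Pi.sub_apply]
    ring
  have hval : ∫ z in K, (2 * (c * Real.exp (-N z)) - p * N z * (c * Real.exp (-N z)))
      = 2 * (ν K).toReal - p * ∫ z in K, N z ∂ν := by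
    rw [hM, hν_apply K hK, ← integral_const_mul, ← integral_const_mul,
      ← integral_sub (hdens.integrableOn.const_mul 2) hNint]
    refine integral_congr_ae (.of_forall fun z => ?_)
    ring
  rw [hval] at hd
  refine hd.congr_of_eventuallyEq ?_
  filter_upwards [Ioi_mem_nhds (zero_lt_one (α := ℝ))] with t ht using hscale t ht
end
end
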